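/- Let K be a totally real biquadratic field that is not one of the seven fields ℚ(√2,√3), ℚ(√2,√5), ℚ(√3,√5), ℚ(√2,√7), ℚ(√3,√7), ℚ(√5,√6), ℚ(√5,√7). Then the Pythagoras number of the ring of integers O_K is at least 5, i.e., there exists an element of O_K that is a sum of squares in O_K but is not a sum of 4 squares in O_K. -/

import Mathlib

/-!
Every totally real biquadratic field is `K = ℚ(√(uv), √(ug), √(vg))` for some triple
`u < v < g` of squarefree, pairwise coprime positive integers (`exists_normal`). For `r = √(uv)`,
`s = √(ug)`, `t = √(vg)`, an integer of `K` is a quarter of an integer combination of `1, r, s, t`,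
and its coordinates satisfy congruences determined by `u, v, g` modulo `4`. So if `α` is a sum of
four squares in `O_K`, comparing coordinates of `4α` (or of `16α` when all three radicands are
`1 mod 4`) yields vectors `a, b, c, d ∈ ℤ⁴` solving the system `Sys`, which prescribes a weighted sum
of their norms and three combinations of their inner products, subject to parity conditions
(`Frame.sysP` and its variants).

In each case the witness `α` is a sum of five explicit squares. It is chosen with small trace, so
the norm equation bounds `c` and `d`, and the Cauchy–Schwarz inequality applied to the remaining
equations leaves only a few possibilities for the pair `(c, d)`. These are excluded by parity, by
the fact that `7` is not a sum of three squares, or by checking a small finite system after `c`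
and `d` have been brought to a standard form by a signed permutation of the coordinates.

For large `uv` the smallest radicand alone suffices: the witness is `7 + ((1 + r)/2)²` if
`uv ≡ 1 mod 4`, `uv ≥ 17` (`Data.big_of_one_mod_four`), and `7 + (3 + r)²` if `uv ≢ 1 mod 4`,
`uv ≥ 14` (`Data.big_of_not_one_mod_four`). The remaining values `uv = 2, 3, 5, 6, 7, 10, 11, 13`
need witnesses depending on the residue of `g` modulo `4` and, for `uv = 2, 3, 5`, a lower bound
on `g`. The values of `g` below that bound are the seven exceptional fields and a few more fields
such as `ℚ(√2, √13)`; the latter are settled by an exhaustive search that decomposes `α` into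
squares (`Sys.not_of_search`).
-/

/-- The totally real biquadratic field `ℚ(√p, √q)` as a subfield of `ℝ`. -/
noncomputable def biqField (p q : ℕ) : IntermediateField ℚ ℝ :=
  IntermediateField.adjoin ℚ {Real.sqrt p, Real.sqrt q}

/-- The ring of integers of a subfield `K` of `ℝ`, viewed as the set of elements
of `K` that are integral over `ℤ`. -/
def ringOfInt (K : IntermediateField ℚ ℝ) : Set ℝ :=
  {x : ℝ | x ∈ K ∧ IsIntegral ℤ x}

/-- `α` is a sum of `n` squares of elements of `S`. -/
def SumOfNSquaresIn (S : Set ℝ) (n : ℕ) (α : ℝ) : Prop :=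
  ∃ x : Fin n → ℝ, (∀ i, x i ∈ S) ∧ α = ∑ i, x i ^ 2

/-- `α` is a sum of squares of elements of `S`. -/
def IsSumOfSquaresIn (S : Set ℝ) (α : ℝ) : Prop := ∃ n, SumOfNSquaresIn S n α

/-- `K` is a totally real biquadratic field. -/
def IsBiquadratic (K : IntermediateField ℚ ℝ) : Prop :=
  ∃ p q : ℕ, Squarefree p ∧ Squarefree q ∧ 1 < p ∧ 1 < q ∧ p ≠ q ∧ K = biqField p q

/-! ### Square roots, conjugation and linear independence -/

/-- `r = ±√(uv)`, `s = ±√(ug)`, `t = ±√(vg)` are the three irrationalities of a biquadratic field,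
with `u, v, g` squarefree; the signs are compatible with the relations `rs = ut`, `rt = vs`,
`st = gr`. Changing two of the three signs, or permuting `u, v, g`, gives another frame. -/
structure Frame (u v g : ℤ) (r s t : ℝ) : Prop where
  sfp : Squarefree (u * v)
  sfq : Squarefree (u * g)
  sfr : Squarefree (v * g)
  irr : Irrational r
  irs : Irrational s
  irt : Irrational t
  rr : r * r = u * v
  ss : s * s = u * g
  tt : t * t = v * g
  rs : r * s = u * t
  rt : r * t = v * s
  st : s * t = g * r

namespace Frame

variable {u v g : ℤ} {r s t : ℝ}

theorem swapQR (F : Frame u v g r s t) : Frame v u g r t s where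
  sfp := by rw [mul_comm]; exact F.sfp
  sfq := F.sfr
  sfr := F.sfq
  irr := F.irr
  irs := F.irt
  irt := F.irs
  rr := by rw [F.rr]; ring
  ss := F.tt
  tt := F.ss
  rs := F.rt
  rt := F.rs
  st := by rw [mul_comm]; exact F.st

theorem swapPQ (F : Frame u v g r s t) : Frame u g v s r t where
  sfp := F.sfq
  sfq := F.sfp
  sfr := by rw [mul_comm]; exact F.sfr
  irr := F.irs
  irs := F.irr
  irt := F.irt
  rr := F.ss
  ss := F.rr
  tt := by rw [F.tt]; ring
  rs := by rw [mul_comm]; exact F.rs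
  rt := F.st
  st := F.rt

theorem conjP (F : Frame u v g r s t) : Frame u v g r (-s) (-t) where
  sfp := F.sfp
  sfq := F.sfq
  sfr := F.sfr
  irr := F.irr
  irs := F.irs.neg
  irt := F.irt.neg
  rr := F.rr
  ss := by linarith [F.ss]
  tt := by linarith [F.tt]
  rs := by linarith [F.rs]
  rt := by linarith [F.rt]
  st := by linarith [F.st]

end Frame

theorem irr_lin {r : ℝ} (hr : Irrational r) {x y : ℚ} (h : (x : ℝ) + y * r = 0) :
    x = 0 ∧ y = 0 := by
  have hy : y = 0 := by
    by_contra hy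
    apply hr
    refine ⟨-x / y, ?_⟩
    have : (y : ℝ) ≠ 0 := by exact_mod_cast hy
    push_cast
    field_simp
    linarith
  subst hy
  refine ⟨?_, rfl⟩
  simpa using h

theorem irr_sq {r : ℝ} (hr : Irrational r) {m : ℤ} (hm : r * r = m) {x y : ℚ}
    (h : x * x = m * (y * y)) : x = 0 ∧ y = 0 := by
  have h' : (x : ℝ) * x = m * (y * y) := by exact_mod_cast h
  have : ((x : ℝ) + y * r) * ((x : ℝ) + ((-y : ℚ) : ℝ) * r) = 0 := by
    push_cast
    rw [← hm] at h'
    linear_combination h'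
  rcases mul_eq_zero.1 this with h1 | h1
  · exact irr_lin hr h1
  · have := irr_lin hr h1
    simpa using this

namespace Frame

variable {u v g : ℤ} {r s t : ℝ}

/-- `1, r, s, t` are linearly independent over `ℚ`. -/
theorem indep (F : Frame u v g r s t) {A B C D : ℚ}
    (h : (A : ℝ) + B * r + C * s + D * t = 0) : A = 0 ∧ B = 0 ∧ C = 0 ∧ D = 0 := by
  have hrr := F.rr
  have hss := F.ss
  have htt := F.tt
  have hrs := F.rs
  have hrt := F.rt
  have hst := F.st
  -- squaring after isolating two of the four terms, in the three possible ways
  have h1 := irr_lin F.irr (x := A * A + u * v * (B * B) - u * g * (C * C) - v * g * (D * D))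
    (y := 2 * (A * B - g * (C * D))) (by
      push_cast
      linear_combination ((A : ℝ) + B * r - C * s - D * t) * h - B * B * hrr + C * C * hss
        + D * D * htt + 2 * C * D * hst)
  have h2 := irr_lin F.irs (x := A * A + u * g * (C * C) - u * v * (B * B) - v * g * (D * D))
    (y := 2 * (A * C - v * (B * D))) (by
      push_cast
      linear_combination ((A : ℝ) + C * s - B * r - D * t) * h - C * C * hss + B * B * hrr
        + D * D * htt + 2 * B * D * hrt)
  have h3 := irr_lin F.irt (x := A * A + v * g * (D * D) - u * v * (B * B) - u * g * (C * C))
    (y := 2 * (A * D - u * (B * C))) (by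
      push_cast
      linear_combination ((A : ℝ) + D * t - B * r - C * s) * h - D * D * htt + B * B * hrr
        + C * C * hss + 2 * B * C * hrs)
  have e1 := irr_sq F.irr (m := u * v) (by push_cast; exact hrr) (x := A) (y := B)
    (by push_cast; linarith [h1.1, h2.1, h3.1])
  have e2 := irr_sq F.irs (m := u * g) (by push_cast; exact hss) (x := A) (y := C)
    (by push_cast; linarith [h1.1, h2.1, h3.1])
  have e3 := irr_sq F.irt (m := v * g) (by push_cast; exact htt) (x := A) (y := D)
    (by push_cast; linarith [h1.1, h2.1, h3.1])
  exact ⟨e1.1, e1.2, e2.2, e3.2⟩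

/-- The value of an integer polynomial at `a + b r + c s + d t` has coordinates which do not depend
on the signs of `r, s, t`. -/
theorem poly (u v g : ℤ) (a b c d : ℚ) (f : Polynomial ℤ) : ∃ A B C D : ℚ, ∀ r s t : ℝ,
    Frame u v g r s t → Polynomial.aeval ((a : ℝ) + b * r + c * s + d * t) f
      = A + B * r + C * s + D * t := by
  induction f using Polynomial.induction_on with
  | C k => exact ⟨k, 0, 0, 0, fun r s t _ => by simp⟩
  | add p q hp hq =>
    obtain ⟨A, B, C, D, h⟩ := hp
    obtain ⟨A', B', C', D', h'⟩ := hq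
    refine ⟨A + A', B + B', C + C', D + D', fun r s t F => ?_⟩
    rw [map_add, h r s t F, h' r s t F]
    push_cast
    ring
  | monomial n k hk =>
    obtain ⟨A, B, C, D, h⟩ := hk
    refine ⟨a * A + u * v * (b * B) + u * g * (c * C) + v * g * (d * D),
      a * B + b * A + g * (c * D + d * C), a * C + c * A + v * (b * D + d * B),
      a * D + d * A + u * (b * C + c * B), fun r s t F => ?_⟩
    have := h r s t F
    rw [pow_succ, ← mul_assoc, map_mul, this, Polynomial.aeval_X]
    push_cast
    linear_combination b * B * F.rr + c * C * F.ss + d * D * F.tt + (b * C + c * B) * F.rs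
      + (b * D + d * B) * F.rt + (c * D + d * C) * F.st

/-- Changing the signs of `r, s, t` compatibly preserves integrality. -/
theorem conj_integral {r' s' t' : ℝ} (F : Frame u v g r s t) (F' : Frame u v g r' s' t')
    {a b c d : ℚ} (h : IsIntegral ℤ ((a : ℝ) + b * r + c * s + d * t)) :
    IsIntegral ℤ ((a : ℝ) + b * r' + c * s' + d * t') := by
  obtain ⟨f, hf, h0⟩ := h
  refine ⟨f, hf, ?_⟩
  obtain ⟨A, B, C, D, hp⟩ := Frame.poly u v g a b c d f
  have h1 := hp r s t F
  rw [Polynomial.aeval_def, h0] at h1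
  obtain ⟨rfl, rfl, rfl, rfl⟩ := F.indep h1.symm
  have h2 := hp r' s' t' F'
  rw [Polynomial.aeval_def] at h2
  rw [h2]
  simp

end Frame

/-! ### Integrality conditions -/

theorem int_of_eq {x y : ℝ} (h : IsIntegral ℤ x) (e : y = x) : IsIntegral ℤ y := e ▸ h

theorem rat_int {x : ℚ} (h : IsIntegral ℤ (x : ℝ)) : ∃ n : ℤ, x = n := by
  have h' : IsIntegral ℤ x := by
    have : IsIntegral ℤ (algebraMap ℚ ℝ x) := by simpa using h
    exact (isIntegral_algebraMap_iff (algebraMap ℚ ℝ).injective).1 this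
  obtain ⟨n, hn⟩ := (IsIntegrallyClosed.isIntegral_iff (R := ℤ) (K := ℚ)).1 h'
  exact ⟨n, by simpa using hn.symm⟩

theorem sqfree_int {m : ℤ} (hm : Squarefree m) {x : ℚ} {k : ℤ} (h : m * (x * x) = k) :
    ∃ n : ℤ, x = n := by
  have h1 : m * (x.num * x.num) = k * (x.den * x.den) := by
    have hd : (x.den : ℚ) ≠ 0 := by exact_mod_cast x.den_nz
    have h2 : (m : ℚ) * (x.num * x.num) = k * (x.den * x.den) := by
      rw [← h]
      have := Rat.mul_den_eq_num x
      rw [← this]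
      ring
    exact_mod_cast h2
  have h2 : (x.den : ℤ) * x.den ∣ m := by
    have hc : IsCoprime ((x.den : ℤ) * x.den) (x.num * x.num) := by
      have : IsCoprime (x.den : ℤ) x.num := by
        rw [Int.isCoprime_iff_gcd_eq_one, Int.gcd_comm]
        simpa [Int.gcd] using x.reduced
      exact (this.mul_left this).mul_right (this.mul_left this)
    exact hc.dvd_of_dvd_mul_right ⟨k, by linarith⟩
  have h3 := hm _ h2
  have h4 : x.den = 1 := by
    have := Int.isUnit_iff_natAbs_eq.1 h3
    simpa using this
  exact ⟨x.num, (Rat.coe_int_num_of_den_eq_one h4).symm⟩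

namespace Frame

variable {u v g : ℤ} {r s t : ℝ}

/-- Trace and norm of a quadratic integer `(m + n r)/2`. -/
theorem quad_int (F : Frame u v g r s t) {m n : ℚ}
    (h : IsIntegral ℤ (((m / 2 : ℚ) : ℝ) + ((n / 2 : ℚ) : ℝ) * r)) :
    ∃ m' n' k : ℤ, m = m' ∧ n = n' ∧ m' * m' = u * v * (n' * n') + 4 * k := by
  have F1 : Frame u v g (-r) s (-t) := by
    have := F.swapPQ.conjP.swapPQ
    simpa using this
  have h' : IsIntegral ℤ (((m / 2 : ℚ) : ℝ) + ((n / 2 : ℚ) : ℝ) * (-r)) := by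
    have := F.conj_integral F1 (a := m / 2) (b := n / 2) (c := 0) (d := 0) (by simpa using h)
    simpa using this
  obtain ⟨m', hm⟩ := rat_int (x := m) (by
    have := h.add h'
    refine int_of_eq (this) ?_
    push_cast
    ring)
  obtain ⟨k, hk⟩ := rat_int (x := (m * m - u * v * (n * n)) / 4) (by
    have := h.mul h'
    refine int_of_eq (this) ?_
    push_cast
    linear_combination (n * n / 4 : ℝ) * F.rr)
  obtain ⟨n', hn⟩ := sqfree_int (m := u * v) F.sfp (x := n) (k := m' * m' - 4 * k) (by
    push_cast
    rw [← hm]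
    linarith)
  refine ⟨m', n', k, hm, hn, ?_⟩
  subst hm hn
  have : (m' * m' : ℚ) = u * v * (n' * n') + 4 * k := by linarith
  exact_mod_cast this

/-- Congruences satisfied by the coordinates of an algebraic integer
`(a + b r + c s + d t) / 4`, from its trace and norm to `ℚ(r)`. -/
structure CongP (u v g a b c d : ℤ) : Prop where
  tr : ∃ k, a * a = u * v * (b * b) + 4 * k
  nm : ∃ m n k : ℤ, a * a + u * v * (b * b) - u * g * (c * c) - v * g * (d * d) = 8 * m ∧
    a * b - g * (c * d) = 4 * n ∧ m * m = u * v * (n * n) + 4 * k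

theorem norm_cong (F : Frame u v g r s t) {a b c d : ℤ}
    (h : IsIntegral ℤ (((a / 4 : ℚ) : ℝ) + ((b / 4 : ℚ) : ℝ) * r + ((c / 4 : ℚ) : ℝ) * s
      + ((d / 4 : ℚ) : ℝ) * t)) : CongP u v g a b c d := by
  have h' := F.conj_integral F.conjP h
  constructor
  · obtain ⟨m', n', k, hm, hn, e⟩ := F.quad_int (m := a) (n := b) (by
      refine int_of_eq (h.add h') ?_
      push_cast
      ring)
    have hm : a = m' := by exact_mod_cast hm
    have hn : b = n' := by exact_mod_cast hn
    subst hm hn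
    exact ⟨k, e⟩
  · obtain ⟨m, n, k, hm, hn, e⟩ := F.quad_int
      (m := (a * a + u * v * (b * b) - u * g * (c * c) - v * g * (d * d)) / 8)
      (n := (a * b - g * (c * d)) / 4) (by
      refine int_of_eq (h.mul h') ?_
      push_cast
      linear_combination (-(b * b / 16) : ℝ) * F.rr + (c * c / 16 : ℝ) * F.ss
        + (d * d / 16 : ℝ) * F.tt + (c * d / 8 : ℝ) * F.st)
    refine ⟨m, n, k, ?_, ?_, e⟩
    · have : (a * a + u * v * (b * b) - u * g * (c * c) - v * g * (d * d) : ℚ) = 8 * m := by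
        linarith
      exact_mod_cast this
    · have : (a * b - g * (c * d) : ℚ) = 4 * n := by linarith
      exact_mod_cast this

/-- The coordinates of an algebraic integer lie in `¼ℤ`, and satisfy the congruences coming from the
three quadratic subfields. -/
theorem coords (F : Frame u v g r s t) {a b c d : ℚ}
    (h : IsIntegral ℤ ((a : ℝ) + b * r + c * s + d * t)) : ∃ a' b' c' d' : ℤ,
    a = a' / 4 ∧ b = b' / 4 ∧ c = c' / 4 ∧ d = d' / 4 ∧ CongP u v g a' b' c' d' ∧
      CongP u g v a' c' b' d' ∧ CongP v g u a' d' b' c' := by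
  have hP : ∃ m n : ℤ, 4 * a = m ∧ 4 * b = n := by
    obtain ⟨m, n, k, hm, hn, e⟩ := F.quad_int (m := 4 * a) (n := 4 * b) (by
      refine int_of_eq (h.add (F.conj_integral F.conjP h)) ?_
      push_cast
      ring)
    exact ⟨m, n, hm, hn⟩
  have F2 := F.swapPQ
  have h2 : IsIntegral ℤ ((a : ℝ) + c * s + b * r + d * t) := by
    exact int_of_eq h (by ring)
  have F3 := F.swapQR.swapPQ
  have h3 : IsIntegral ℤ ((a : ℝ) + d * t + b * r + c * s) := by
    exact int_of_eq h (by ring)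
  have hQ : ∃ m n : ℤ, 4 * a = m ∧ 4 * c = n := by
    obtain ⟨m, n, k, hm, hn, e⟩ := F2.quad_int (m := 4 * a) (n := 4 * c) (by
      refine int_of_eq (h2.add (F2.conj_integral F2.conjP h2)) ?_
      push_cast
      ring)
    exact ⟨m, n, hm, hn⟩
  have hR : ∃ m n : ℤ, 4 * a = m ∧ 4 * d = n := by
    obtain ⟨m, n, k, hm, hn, e⟩ := F3.quad_int (m := 4 * a) (n := 4 * d) (by
      refine int_of_eq (h3.add (F3.conj_integral F3.conjP h3)) ?_
      push_cast
      ring)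
    exact ⟨m, n, hm, hn⟩
  obtain ⟨a', b', ha, hb⟩ := hP
  obtain ⟨_, c', _, hc⟩ := hQ
  obtain ⟨_, d', _, hd⟩ := hR
  obtain rfl : a = a' / 4 := by linarith
  obtain rfl : b = b' / 4 := by linarith
  obtain rfl : c = c' / 4 := by linarith
  obtain rfl : d = d' / 4 := by linarith
  exact ⟨a', b', c', d', rfl, rfl, rfl, rfl, F.norm_cong h, F2.norm_cong h2, F3.norm_cong h3⟩

end Frame
theorem even_even_of_sq {w a b k : ℤ} (hw : w % 4 = 2 ∨ w % 4 = 3) (h : a * a = w * (b * b) + 4 * k) :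
    a % 2 = 0 ∧ b % 2 = 0 := by
  have key : ∀ w a b : ZMod 4, (w = 2 ∨ w = 3) → a * a = w * (b * b) → 2 * a = 0 ∧ 2 * b = 0 := by
    decide
  have h' : (a * a : ZMod 4) = w * (b * b) := by
    have := congrArg (Int.cast : ℤ → ZMod 4) h
    push_cast at this
    rw [this, show (4 : ZMod 4) = 0 from rfl]
    ring
  have hw' : (w : ZMod 4) = 2 ∨ (w : ZMod 4) = 3 := by
    rcases hw with h | h
    · left; rw [← ZMod.intCast_mod w 4]; norm_num [h]
    · right; rw [← ZMod.intCast_mod w 4]; norm_num [h]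
  have h4 : ∀ x : ℤ, (2 * x : ZMod 4) = 0 → x % 2 = 0 := by
    intro x hx
    have : ((2 * x : ℤ) : ZMod 4) = 0 := by push_cast; exact hx
    rw [ZMod.intCast_zmod_eq_zero_iff_dvd] at this
    omega
  have := key _ _ _ hw' h'
  exact ⟨h4 _ this.1, h4 _ this.2⟩

theorem mul_mod_four {x y i j : ℤ} (hx : x % 4 = i) (hy : y % 4 = j) :
    (x * y) % 4 = (i * j) % 4 := by
  rw [Int.mul_emod, hx, hy]

/-- The residues mod 4 for which `√(uv)` is the distinguished square root: either `uv ≡ 1` and the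
other two radicands are not `≡ 1`, or `uv ≡ 3` and the other two radicands are even. -/
def SpecP (u v g : ℤ) : Prop :=
  u % 2 = 1 ∧ v % 2 = 1 ∧
    (u % 4 = v % 4 ∧ g % 4 ≠ 0 ∧ g % 4 ≠ u % 4 ∨ u % 4 ≠ v % 4 ∧ g % 4 = 2)

set_option synthInstance.maxSize 2000 in
set_option synthInstance.maxHeartbeats 200000 in
/-- The congruences of `half_coords`, checked over all residues modulo `4`. -/
theorem parity_key : ∀ u v g a b c d : ZMod 4,
    ((u = 1 ∨ u = 3) ∧ (v = 1 ∨ v = 3) ∧ (u = v ∧ g ≠ 0 ∧ g ≠ u ∨ u ≠ v ∧ g = 2)) →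
    a * a + u * g * (c * c) - u * v * (b * b) - v * g * (d * d) = 0 →
    2 * (a * c - v * (b * d)) = 0 → 2 * (a * d - u * (b * c)) = 0 →
    2 * (a + b) = 0 ∧ 2 * (c + d) = 0 ∧ (u ≠ v → 2 * a = 0) := by
  decide +kernel

theorem cast_four_eq {x : ℤ} {i : ℤ} (h : x % 4 = i) : (x : ZMod 4) = (i : ZMod 4) := by
  rw [← ZMod.intCast_mod x 4, ← h]
  norm_num

theorem two_mul_cast {x : ℤ} : ((2 : ZMod 4) * x = 0) ↔ x % 2 = 0 := by
  have e : ((2 * x : ℤ) : ZMod 4) = 2 * x := by push_cast; rfl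
  rw [← e, ZMod.intCast_zmod_eq_zero_iff_dvd]
  omega

/-- When `√(uv)` is distinguished, every algebraic integer is `(a' + b' r + c' s + d' t) / 2` with
`a' ≡ b'` and `c' ≡ d'` modulo `2`, and with `a'` even if `uv ≡ 3 mod 4`. -/
theorem half_coords {u v g a b c d : ℤ} (hS : SpecP u v g) (h1 : Frame.CongP u v g a b c d)
    (h2 : Frame.CongP u g v a c b d) (h3 : Frame.CongP v g u a d b c) :
    ∃ a' b' c' d' : ℤ, a = 2 * a' ∧ b = 2 * b' ∧ c = 2 * c' ∧ d = 2 * d' ∧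
      (a' + b') % 2 = 0 ∧ (c' + d') % 2 = 0 ∧ (u % 4 ≠ v % 4 → a' % 2 = 0) := by
  obtain ⟨hu, hv, hg⟩ := hS
  have hQ : (u * g) % 4 = 2 ∨ (u * g) % 4 = 3 := by
    have hu4 : u % 4 = 1 ∨ u % 4 = 3 := by omega
    have hg4 : g % 4 = 1 ∨ g % 4 = 2 ∨ g % 4 = 3 := by omega
    rcases hu4 with hu4 | hu4 <;> rcases hg4 with hg4 | hg4 | hg4 <;>
      have := mul_mod_four hu4 hg4 <;> norm_num at this <;> omega
  have hR : (v * g) % 4 = 2 ∨ (v * g) % 4 = 3 := by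
    have hu4 : v % 4 = 1 ∨ v % 4 = 3 := by omega
    have hg4 : g % 4 = 1 ∨ g % 4 = 2 ∨ g % 4 = 3 := by omega
    rcases hu4 with hu4 | hu4 <;> rcases hg4 with hg4 | hg4 | hg4 <;>
      have := mul_mod_four hu4 hg4 <;> norm_num at this <;> omega
  obtain ⟨k2, e2⟩ := h2.tr
  obtain ⟨k3, e3⟩ := h3.tr
  obtain ⟨ha, hc⟩ := even_even_of_sq hQ e2
  obtain ⟨-, hd⟩ := even_even_of_sq hR e3
  have hb : b % 2 = 0 := by
    obtain ⟨k1, e1⟩ := h1.tr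
    by_contra hb
    have hb' : b % 2 = 1 := by omega
    have h1 : (a * a) % 2 = 0 := by rw [Int.mul_emod, ha]; rfl
    have h2 : (u * v * (b * b)) % 2 = 1 := by
      rw [Int.mul_emod, Int.mul_emod u, Int.mul_emod b, hu, hv, hb']; rfl
    omega
  obtain ⟨a', rfl⟩ : ∃ k, a = 2 * k := ⟨a / 2, by omega⟩
  obtain ⟨b', rfl⟩ : ∃ k, b = 2 * k := ⟨b / 2, by omega⟩
  obtain ⟨c', rfl⟩ : ∃ k, c = 2 * k := ⟨c / 2, by omega⟩
  obtain ⟨d', rfl⟩ : ∃ k, d = 2 * k := ⟨d / 2, by omega⟩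
  refine ⟨a', b', c', d', rfl, rfl, rfl, rfl, ?_⟩
  obtain ⟨m, n, k, f1, f2, f3⟩ := h2.nm
  obtain ⟨m', n', k', f1', f2', f3'⟩ := h3.nm
  obtain ⟨hm, hn⟩ := even_even_of_sq hQ f3
  obtain ⟨-, hn'⟩ := even_even_of_sq hR f3'
  have z1 : a' * a' + u * g * (c' * c') - u * v * (b' * b') - v * g * (d' * d') = 4 * (m / 2) := by
    have : m = 2 * (m / 2) := by omega
    rw [this] at f1
    linarith
  have z2 : a' * c' - v * (b' * d') = n := by linarith
  have z3 : a' * d' - u * (b' * c') = n' := by linarith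
  have key := parity_key u v g a' b' c' d' (by
      have c3 : ∀ {x : ℤ}, x % 4 = 1 → (x : ZMod 4) = 1 := fun h => by simpa using cast_four_eq h
      have c4 : ∀ {x : ℤ}, x % 4 = 3 → (x : ZMod 4) = 3 := fun h => by simpa using cast_four_eq h
      have c2 : ∀ {x : ℤ}, x % 4 = 2 → (x : ZMod 4) = 2 := fun h => by simpa using cast_four_eq h
      have hu4 : u % 4 = 1 ∨ u % 4 = 3 := by omega
      have hv4 : v % 4 = 1 ∨ v % 4 = 3 := by omega
      have hg4 : g % 4 = 1 ∨ g % 4 = 2 ∨ g % 4 = 3 := by omega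
      rcases hu4 with hu4 | hu4 <;> rcases hv4 with hv4 | hv4 <;>
        rcases hg4 with hg4 | hg4 | hg4 <;>
        first
        | (exfalso; omega)
        | (simp only [c3, c4, c2, hu4, hv4, hg4]; decide))
    (by
      have := congrArg (Int.cast : ℤ → ZMod 4) z1
      push_cast at this
      rw [this, show (4 : ZMod 4) = 0 from rfl, zero_mul])
    (by
      have := two_mul_cast.2 hn
      rw [← z2] at this
      push_cast at this
      exact this)
    (by
      have := two_mul_cast.2 hn'
      rw [← z3] at this
      push_cast at this
      exact this)
  obtain ⟨k1, k2, k3⟩ := key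
  refine ⟨two_mul_cast.1 (by push_cast; exact k1), two_mul_cast.1 (by push_cast; exact k2),
    fun huv => two_mul_cast.1 (k3 ?_)⟩
  intro h
  apply huv
  have := (ZMod.intCast_eq_intCast_iff' u v 4).1 h
  simpa using this

/-- When all three radicands are `1 mod 4`, an algebraic integer `(a + b r + c s + d t) / 4` has
either odd coordinates, or even ones whose halves have even sum. -/
theorem quarter_coords {u v g a b c d : ℤ} (hu : u % 2 = 1) (hv : v % 4 = u % 4)
    (hg : g % 4 = u % 4) (h1 : Frame.CongP u v g a b c d)
    (h2 : Frame.CongP u g v a c b d) (h3 : Frame.CongP v g u a d b c) :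
    (a % 2 = 1 ∧ b % 2 = 1 ∧ c % 2 = 1 ∧ d % 2 = 1) ∨
    ∃ a' b' c' d' : ℤ, a = 2 * a' ∧ b = 2 * b' ∧ c = 2 * c' ∧ d = 2 * d' ∧
      (a' + b' + c' + d') % 2 = 0 := by
  have par : ∀ {x y a b k : ℤ}, x % 2 = 1 → y % 2 = 1 → a * a = x * y * (b * b) + 4 * k →
      a % 2 = b % 2 := by
    intro x y a b k hx hy h
    have h2 : (x * y * (b * b)) % 2 = b % 2 := by
      rw [Int.mul_emod, Int.mul_emod x, Int.mul_emod b, hx, hy]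
      rcases Int.emod_two_eq_zero_or_one b with h | h <;> rw [h] <;> rfl
    have h1 : (a * a) % 2 = a % 2 := by
      rw [Int.mul_emod]
      rcases Int.emod_two_eq_zero_or_one a with h | h <;> rw [h] <;> rfl
    omega
  have hv2 : v % 2 = 1 := by omega
  have hg2 : g % 2 = 1 := by omega
  obtain ⟨k1, e1⟩ := h1.tr
  obtain ⟨k2, e2⟩ := h2.tr
  obtain ⟨k3, e3⟩ := h3.tr
  have p1 := par hu hv2 e1
  have p2 := par hu hg2 e2
  have p3 := par hv2 hg2 e3
  rcases Int.emod_two_eq_zero_or_one a with ha | ha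
  · right
    obtain ⟨a', rfl⟩ : ∃ k, a = 2 * k := ⟨a / 2, by omega⟩
    obtain ⟨b', rfl⟩ : ∃ k, b = 2 * k := ⟨b / 2, by omega⟩
    obtain ⟨c', rfl⟩ : ∃ k, c = 2 * k := ⟨c / 2, by omega⟩
    obtain ⟨d', rfl⟩ : ∃ k, d = 2 * k := ⟨d / 2, by omega⟩
    refine ⟨a', b', c', d', rfl, rfl, rfl, rfl, ?_⟩
    obtain ⟨m, n, k, f1, f2, f3⟩ := h1.nm
    have z1 : a' * a' + u * v * (b' * b') - u * g * (c' * c') - v * g * (d' * d') = 2 * m := by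
      linarith
    have sq : ∀ {x y b : ℤ}, x % 2 = 1 → y % 2 = 1 → (x * y * (b * b)) % 2 = b % 2 := by
      intro x y b hx hy
      rw [Int.mul_emod, Int.mul_emod x, Int.mul_emod b, hx, hy]
      rcases Int.emod_two_eq_zero_or_one b with h | h <;> rw [h] <;> rfl
    have s1 := sq (b := b') hu hv2
    have s2 := sq (b := c') hu hg2
    have s3 := sq (b := d') hv2 hg2
    have s0 := sq (x := 1) (y := 1) (b := a') rfl rfl
    rw [one_mul, one_mul] at s0
    omega
  · left
    omega

/-! ### Passing to integer vectors -/

/-- The standard inner product on `ℤ⁴`. -/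
def dot (a b : Fin 4 → ℤ) : ℤ := a 0 * b 0 + a 1 * b 1 + a 2 * b 2 + a 3 * b 3

/-- The coordinates of the equation `∑ (a_i + b_i r + c_i s + d_i t)² = T₀ + 2 T₁ r + 2 T₂ s + 2 T₃ t`. -/
structure Sys (u v g T0 T1 T2 T3 : ℤ) (a b c d : Fin 4 → ℤ) : Prop where
  e0 : dot a a + u * v * dot b b + u * g * dot c c + v * g * dot d d = T0
  e1 : dot a b + g * dot c d = T1
  e2 : dot a c + v * dot b d = T2
  e3 : dot a d + u * dot b c = T3

/-- Every element of `K` is a rational combination of `1, r, s, t`. -/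
def Spans (K : IntermediateField ℚ ℝ) (r s t : ℝ) : Prop :=
  ∀ x ∈ K, ∃ a b c d : ℚ, x = a + b * r + c * s + d * t

/-- Comparison of coordinates, by linear independence of `1, r, s, t`. -/
theorem Frame.sys_of_eq {u v g : ℤ} {r s t : ℝ} (F : Frame u v g r s t) {T0 T1 T2 T3 : ℤ}
    {a b c d : Fin 4 → ℤ}
    (h : ∑ i, ((a i : ℝ) + b i * r + c i * s + d i * t) ^ 2
      = T0 + 2 * T1 * r + 2 * T2 * s + 2 * T3 * t) : Sys u v g T0 T1 T2 T3 a b c d := by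
  have key := F.indep (A := dot a a + u * v * dot b b + u * g * dot c c + v * g * dot d d - T0)
    (B := 2 * (dot a b + g * dot c d - T1)) (C := 2 * (dot a c + v * dot b d - T2))
    (D := 2 * (dot a d + u * dot b c - T3)) (by
      rw [Fin.sum_univ_four] at h
      simp only [dot]
      push_cast
      have hb := F.rr
      have hc := F.ss
      have hd := F.tt
      have hbc := F.rs
      have hbd := F.rt
      have hcd := F.st
      linear_combination h - ((b 0 : ℝ) * b 0 + b 1 * b 1 + b 2 * b 2 + b 3 * b 3) * hb
        - ((c 0 : ℝ) * c 0 + c 1 * c 1 + c 2 * c 2 + c 3 * c 3) * hc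
        - ((d 0 : ℝ) * d 0 + d 1 * d 1 + d 2 * d 2 + d 3 * d 3) * hd
        - 2 * ((b 0 : ℝ) * c 0 + b 1 * c 1 + b 2 * c 2 + b 3 * c 3) * hbc
        - 2 * ((b 0 : ℝ) * d 0 + b 1 * d 1 + b 2 * d 2 + b 3 * d 3) * hbd
        - 2 * ((c 0 : ℝ) * d 0 + c 1 * d 1 + c 2 * d 2 + c 3 * d 3) * hcd)
  obtain ⟨k0, k1, k2, k3⟩ := key
  constructor
  · exact_mod_cast sub_eq_zero.1 k0
  · have := sub_eq_zero.1 ((mul_eq_zero.1 k1).resolve_left (by norm_num))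
    exact_mod_cast this
  · have := sub_eq_zero.1 ((mul_eq_zero.1 k2).resolve_left (by norm_num))
    exact_mod_cast this
  · have := sub_eq_zero.1 ((mul_eq_zero.1 k3).resolve_left (by norm_num))
    exact_mod_cast this

/-- If `√(uv)` is distinguished, a representation of `α` by four squares gives integer vectors
satisfying `Sys` for the coordinates of `4α`, with parity conditions. `Frame.sysQ` and `Frame.sysR`
are the same for `√(ug)` and `√(vg)`, by symmetry. -/
theorem Frame.sysP {u v g : ℤ} {r s t : ℝ} (F : Frame u v g r s t)
    {K : IntermediateField ℚ ℝ} (hK : Spans K r s t) (hS : SpecP u v g) {α : ℝ}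
    (hα : SumOfNSquaresIn (ringOfInt K) 4 α) {T0 T1 T2 T3 : ℤ}
    (hT : 4 * α = T0 + 2 * T1 * r + 2 * T2 * s + 2 * T3 * t) :
    ∃ a b c d : Fin 4 → ℤ, Sys u v g T0 T1 T2 T3 a b c d ∧
      (∀ i, (a i + b i) % 2 = 0) ∧ (∀ i, (c i + d i) % 2 = 0) ∧
      (u % 4 ≠ v % 4 → ∀ i, a i % 2 = 0) := by
  obtain ⟨x, hx, rfl⟩ := hα
  have key : ∀ i, ∃ a b c d : ℤ, 2 * x i = a + b * r + c * s + d * t ∧ (a + b) % 2 = 0 ∧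
      (c + d) % 2 = 0 ∧ (u % 4 ≠ v % 4 → a % 2 = 0) := by
    intro i
    obtain ⟨hxK, hxI⟩ := hx i
    obtain ⟨a, b, c, d, hxe⟩ := hK _ hxK
    rw [hxe] at hxI ⊢
    obtain ⟨a', b', c', d', rfl, rfl, rfl, rfl, h1, h2, h3⟩ := F.coords hxI
    obtain ⟨a, b, c, d, rfl, rfl, rfl, rfl, p1, p2, p3⟩ := half_coords hS h1 h2 h3
    exact ⟨a, b, c, d, by push_cast; ring, p1, p2, p3⟩
  choose a b c d he p1 p2 p3 using key
  refine ⟨a, b, c, d, F.sys_of_eq ?_, p1, p2, fun h i => p3 i h⟩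
  rw [← hT, Finset.mul_sum]
  refine Finset.sum_congr rfl fun i _ => ?_
  rw [← he i]
  ring

theorem Frame.sysQ {u v g : ℤ} {r s t : ℝ} (F : Frame u v g r s t)
    {K : IntermediateField ℚ ℝ} (hK : Spans K r s t) (hS : SpecP u g v) {α : ℝ}
    (hα : SumOfNSquaresIn (ringOfInt K) 4 α) {T0 T1 T2 T3 : ℤ}
    (hT : 4 * α = T0 + 2 * T1 * r + 2 * T2 * s + 2 * T3 * t) :
    ∃ a b c d : Fin 4 → ℤ, Sys u v g T0 T1 T2 T3 a b c d ∧
      (∀ i, (a i + c i) % 2 = 0) ∧ (∀ i, (b i + d i) % 2 = 0) ∧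
      (u % 4 ≠ g % 4 → ∀ i, a i % 2 = 0) := by
  obtain ⟨a, c, b, d, S, p⟩ := F.swapPQ.sysP (K := K) (fun x hx => by
    obtain ⟨a, b, c, d, h⟩ := hK x hx
    exact ⟨a, c, b, d, by rw [h]; ring⟩) hS hα (T0 := T0) (T1 := T2) (T2 := T1) (T3 := T3)
    (by rw [hT]; ring)
  refine ⟨a, b, c, d, ⟨?_, ?_, ?_, ?_⟩, p⟩
  · linarith [S.e0]
  · exact S.e2
  · exact S.e1
  · have := S.e3
    simp only [dot] at this ⊢
    linarith

theorem Frame.sysR {u v g : ℤ} {r s t : ℝ} (F : Frame u v g r s t)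
    {K : IntermediateField ℚ ℝ} (hK : Spans K r s t) (hS : SpecP v g u) {α : ℝ}
    (hα : SumOfNSquaresIn (ringOfInt K) 4 α) {T0 T1 T2 T3 : ℤ}
    (hT : 4 * α = T0 + 2 * T1 * r + 2 * T2 * s + 2 * T3 * t) :
    ∃ a b c d : Fin 4 → ℤ, Sys u v g T0 T1 T2 T3 a b c d ∧
      (∀ i, (a i + d i) % 2 = 0) ∧ (∀ i, (b i + c i) % 2 = 0) ∧
      (v % 4 ≠ g % 4 → ∀ i, a i % 2 = 0) := by
  obtain ⟨a, d, b, c, S, p⟩ := F.swapQR.swapPQ.sysP (K := K) (fun x hx => by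
    obtain ⟨a, b, c, d, h⟩ := hK x hx
    exact ⟨a, d, b, c, by rw [h]; ring⟩) hS hα (T0 := T0) (T1 := T3) (T2 := T1) (T3 := T2)
    (by rw [hT]; ring)
  refine ⟨a, b, c, d, ⟨?_, ?_, ?_, ?_⟩, p⟩
  · linarith [S.e0]
  · have := S.e2
    simp only [dot] at this ⊢
    linarith
  · have := S.e3
    simp only [dot] at this ⊢
    linarith
  · exact S.e1

/-- The analogue of `Frame.sysP` for the coordinates of `16α`, when all three radicands are
`1 mod 4`. -/
theorem Frame.sys1 {u v g : ℤ} {r s t : ℝ} (F : Frame u v g r s t)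
    {K : IntermediateField ℚ ℝ} (hK : Spans K r s t) (hu : u % 2 = 1) (hv : v % 4 = u % 4)
    (hg : g % 4 = u % 4) {α : ℝ}
    (hα : SumOfNSquaresIn (ringOfInt K) 4 α) {T0 T1 T2 T3 : ℤ}
    (hT : 16 * α = T0 + 2 * T1 * r + 2 * T2 * s + 2 * T3 * t) :
    ∃ a b c d : Fin 4 → ℤ, Sys u v g T0 T1 T2 T3 a b c d ∧
      ∀ i, (a i % 2 = 1 ∧ b i % 2 = 1 ∧ c i % 2 = 1 ∧ d i % 2 = 1) ∨
      ∃ a' b' c' d' : ℤ, a i = 2 * a' ∧ b i = 2 * b' ∧ c i = 2 * c' ∧ d i = 2 * d' ∧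
      (a' + b' + c' + d') % 2 = 0 := by
  obtain ⟨x, hx, rfl⟩ := hα
  have key : ∀ i, ∃ a b c d : ℤ, 4 * x i = a + b * r + c * s + d * t ∧
      ((a % 2 = 1 ∧ b % 2 = 1 ∧ c % 2 = 1 ∧ d % 2 = 1) ∨
      ∃ a' b' c' d' : ℤ, a = 2 * a' ∧ b = 2 * b' ∧ c = 2 * c' ∧ d = 2 * d' ∧
      (a' + b' + c' + d') % 2 = 0) := by
    intro i
    obtain ⟨hxK, hxI⟩ := hx i
    obtain ⟨a, b, c, d, hxe⟩ := hK _ hxK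
    rw [hxe] at hxI ⊢
    obtain ⟨a', b', c', d', rfl, rfl, rfl, rfl, h1, h2, h3⟩ := F.coords hxI
    exact ⟨a', b', c', d', by push_cast; ring, quarter_coords hu hv hg h1 h2 h3⟩
  choose a b c d he p using key
  refine ⟨a, b, c, d, F.sys_of_eq ?_, p⟩
  rw [← hT, Finset.mul_sum]
  refine Finset.sum_congr rfl fun i _ => ?_
  rw [← he i]
  ring
/-! ### The fields -/

theorem biqField_comm (p q : ℕ) : biqField p q = biqField q p := by
  unfold biqField
  rw [Set.pair_comm]

theorem sqrt_left_mem (p q : ℕ) : Real.sqrt p ∈ biqField p q :=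
  IntermediateField.subset_adjoin _ _ (by simp)

theorem sqrt_right_mem (p q : ℕ) : Real.sqrt q ∈ biqField p q :=
  IntermediateField.subset_adjoin _ _ (by simp)

theorem sqrt_mul_sqrt_rel (u v g : ℕ) :
    Real.sqrt (u * v : ℕ) * Real.sqrt (u * g : ℕ) = u * Real.sqrt (v * g : ℕ) := by
  push_cast
  rw [← Real.sqrt_mul (by positivity), show ((u : ℝ) * v) * (u * g) = (u * u) * (v * g) by ring,
    Real.sqrt_mul (by positivity), Real.sqrt_mul_self (by positivity)]

theorem sqrt_third_mem {u v g : ℕ} (hu : u ≠ 0) :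
    Real.sqrt (v * g : ℕ) ∈ biqField (u * v) (u * g) := by
  have h : Real.sqrt (v * g : ℕ) = Real.sqrt (u * v : ℕ) * Real.sqrt (u * g : ℕ) / (u : ℝ) := by
    rw [sqrt_mul_sqrt_rel]
    have : (u : ℝ) ≠ 0 := by exact_mod_cast hu
    field_simp
  rw [h]
  exact div_mem (mul_mem (sqrt_left_mem _ _) (sqrt_right_mem _ _)) (natCast_mem _ u)

theorem biqField_third_le {u v g : ℕ} (hu : u ≠ 0) :
    biqField (v * u) (v * g) ≤ biqField (u * v) (u * g) := by
  unfold biqField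
  rw [IntermediateField.adjoin_le_iff]
  rintro x (rfl | rfl)
  · rw [mul_comm v u]
    exact sqrt_left_mem _ _
  · exact sqrt_third_mem hu

theorem biqField_swap {u v : ℕ} (g : ℕ) (hu : u ≠ 0) (hv : v ≠ 0) :
    biqField (u * v) (u * g) = biqField (v * u) (v * g) :=
  le_antisymm (biqField_third_le hv) (biqField_third_le hu)

theorem spans_biqField {u v g : ℕ} {r s t : ℝ} (F : Frame u v g r s t)
    (hr : r = Real.sqrt (u * v : ℕ)) (hs : s = Real.sqrt (u * g : ℕ)) :
    Spans (biqField (u * v) (u * g)) r s t := by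
  intro x hx
  have halg : ∀ y ∈ ({Real.sqrt (u * v : ℕ), Real.sqrt (u * g : ℕ)} : Set ℝ), IsAlgebraic ℚ y := by
    have aux : ∀ n : ℕ, IsAlgebraic ℚ (Real.sqrt n) := by
      intro n
      have : IsIntegral ℚ (Real.sqrt n) := by
        apply IsIntegral.of_pow (n := 2) (by norm_num)
        rw [Real.sq_sqrt (by positivity)]
        exact isIntegral_natCast n
      exact this.isAlgebraic
    rintro y (rfl | rfl) <;> exact aux _
  have hx' : x ∈ (IntermediateField.adjoin ℚ
      ({Real.sqrt (u * v : ℕ), Real.sqrt (u * g : ℕ)} : Set ℝ)).toSubalgebra := hx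
  rw [IntermediateField.adjoin_toSubalgebra_of_isAlgebraic halg, ← hr, ← hs] at hx'
  clear hx
  induction hx' using Algebra.adjoin_induction with
  | mem x hx =>
    rcases hx with rfl | rfl
    · exact ⟨0, 1, 0, 0, by simp⟩
    · exact ⟨0, 0, 1, 0, by simp⟩
  | algebraMap q => exact ⟨q, 0, 0, 0, by simp⟩
  | add x y hx hy h1 h2 =>
    obtain ⟨a, b, c, d, rfl⟩ := h1
    obtain ⟨A, B, C, D, rfl⟩ := h2
    exact ⟨a + A, b + B, c + C, d + D, by push_cast; ring⟩
  | mul x y hx hy h1 h2 =>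
    obtain ⟨a, b, c, d, rfl⟩ := h1
    obtain ⟨A, B, C, D, rfl⟩ := h2
    refine ⟨a * A + u * v * (b * B) + u * g * (c * C) + v * g * (d * D),
      a * B + b * A + g * (c * D + d * C), a * C + c * A + v * (b * D + d * B),
      a * D + d * A + u * (b * C + c * B), ?_⟩
    have h1 := F.rr
    have h2 := F.ss
    have h3 := F.tt
    have h4 := F.rs
    have h5 := F.rt
    have h6 := F.st
    push_cast at h1 h2 h3 h4 h5 h6 ⊢
    linear_combination b * B * h1 + c * C * h2 + d * D * h3 + (b * C + c * B) * h4
      + (b * D + d * B) * h5 + (c * D + d * C) * h6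

theorem irrational_sqrt_of_squarefree {n : ℕ} (h : Squarefree n) (h1 : n ≠ 1) :
    Irrational (Real.sqrt n) := by
  rw [irrational_sqrt_natCast_iff]
  rintro ⟨k, rfl⟩
  apply h1
  have := Nat.isUnit_iff.1 (h k dvd_rfl)
  simp [this]

theorem frame_sqrt {u v g : ℕ} (huv : u < v) (hvg : v < g) (h1 : Squarefree (u * v))
    (h2 : Squarefree (u * g)) (h3 : Squarefree (v * g)) :
    Frame u v g (Real.sqrt (u * v : ℕ)) (Real.sqrt (u * g : ℕ)) (Real.sqrt (v * g : ℕ)) where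
  sfp := by exact_mod_cast Int.squarefree_natCast.2 h1
  sfq := by exact_mod_cast Int.squarefree_natCast.2 h2
  sfr := by exact_mod_cast Int.squarefree_natCast.2 h3
  irr := irrational_sqrt_of_squarefree h1 (by intro h; have := Nat.eq_one_of_mul_eq_one_right h; have := Nat.eq_one_of_mul_eq_one_left h; omega)
  irs := irrational_sqrt_of_squarefree h2 (by intro h; have := Nat.eq_one_of_mul_eq_one_right h; have := Nat.eq_one_of_mul_eq_one_left h; omega)
  irt := irrational_sqrt_of_squarefree h3 (by intro h; have := Nat.eq_one_of_mul_eq_one_right h; have := Nat.eq_one_of_mul_eq_one_left h; omega)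
  rr := by rw [Real.mul_self_sqrt (by positivity)]; push_cast; rfl
  ss := by rw [Real.mul_self_sqrt (by positivity)]; push_cast; rfl
  tt := by rw [Real.mul_self_sqrt (by positivity)]; push_cast; rfl
  rs := by rw [sqrt_mul_sqrt_rel]; push_cast; rfl
  rt := by rw [mul_comm u v, sqrt_mul_sqrt_rel]; push_cast; rfl
  st := by rw [mul_comm u g, mul_comm v g, sqrt_mul_sqrt_rel]; push_cast; rfl

/-- A biquadratic field in normal form: `K = ℚ(√(uv), √(ug), √(vg))` with `u < v < g` squarefree and
pairwise coprime. -/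
structure NormalForm (K : IntermediateField ℚ ℝ) (u v g : ℕ) : Prop where
  pos : 0 < u
  uv : u < v
  vg : v < g
  sfp : Squarefree (u * v)
  sfq : Squarefree (u * g)
  sfr : Squarefree (v * g)
  eq : K = biqField (u * v) (u * g)

theorem exists_normal {K : IntermediateField ℚ ℝ} (hK : IsBiquadratic K) :
    ∃ u v g, NormalForm K u v g := by
  obtain ⟨p, q, hp, hq, hp1, hq1, hpq, rfl⟩ := hK
  -- the unordered triple is `gcd p q, p / gcd p q, q / gcd p q`
  have hpos : 0 < Nat.gcd p q := Nat.gcd_pos_of_pos_left _ (by omega)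
  obtain ⟨b, hb⟩ := Nat.gcd_dvd_left p q
  obtain ⟨c, hc⟩ := Nat.gcd_dvd_right p q
  set a := Nat.gcd p q with ha
  have hbc : Nat.Coprime b c := by
    have h := Nat.gcd_mul_left a b c
    rw [← hb, ← hc, ← ha] at h
    exact Nat.eq_of_mul_eq_mul_left hpos (by simpa using h.symm)
  have hsf : ∀ x y z : ℕ, Squarefree (x * y) → Squarefree (x * z) → Nat.Coprime y z →
      Squarefree (y * z) := by
    intro x y z h1 h2 h3
    rw [Nat.squarefree_mul_iff] at *
    exact ⟨h3, h1.2.2, h2.2.2⟩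
  have h1 : Squarefree (a * b) := hb ▸ hp
  have h2 : Squarefree (a * c) := hc ▸ hq
  have h3 : Squarefree (b * c) := hsf a b c h1 h2 hbc
  have eq1 : ∀ x : ℕ, Squarefree (x * x) → x = 1 := fun x h => Nat.isUnit_iff.1 (h x dvd_rfl)
  have n1 : a ≠ b := by
    rintro h
    rw [← h] at h1 hb
    rw [eq1 _ h1] at hb
    omega
  have n2 : a ≠ c := by
    rintro h
    rw [← h] at h2 hc
    rw [eq1 _ h2] at hc
    omega
  have n3 : b ≠ c := by
    rintro h
    rw [h] at hb
    omega
  have hb0 : b ≠ 0 := by rintro rfl; omega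
  have hc0 : c ≠ 0 := by rintro rfl; omega
  clear_value a
  subst hb hc
  have key : ∀ {x y z : ℕ}, x ≠ 0 → x < y → y < z → Squarefree (x * y) → Squarefree (x * z) →
      Squarefree (y * z) → ∃ u v g, NormalForm (biqField (x * y) (x * z)) u v g :=
    fun {x y z} h0 h1 h2 h3 h4 h5 => ⟨x, y, z, Nat.pos_of_ne_zero h0, h1, h2, h3, h4, h5, rfl⟩
  have h1' : Squarefree (b * a) := by rwa [mul_comm]
  have h2' : Squarefree (c * a) := by rwa [mul_comm]
  have h3' : Squarefree (c * b) := by rwa [mul_comm]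
  rcases lt_or_gt_of_ne n1 with m1 | m1 <;> rcases lt_or_gt_of_ne n2 with m2 | m2 <;>
    rcases lt_or_gt_of_ne n3 with m3 | m3 <;> try (exfalso; omega)
  · exact key (by omega) m1 m3 h1 h2 h3
  · rw [biqField_comm]
    exact key (by omega) m2 m3 h2 h1 h3'
  · rw [biqField_comm, biqField_swap b (by omega) hc0]
    exact key (by omega) m2 m1 h2' h3' h1
  · rw [biqField_swap c (by omega) hb0]
    exact key (by omega) m1 m2 h1' h3 h2
  · rw [biqField_swap c (by omega) hb0, biqField_comm]
    exact key (by omega) m3 m2 h3 h1' h2'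
  · rw [biqField_comm, biqField_swap b (by omega) hc0, biqField_comm]
    exact key (by omega) m3 m1 h3' h2' h1'

/-- The integer form of `NormalForm`: the three square roots lie in `K`, form a frame, and span `K`
together with `1`. -/
structure Data (K : IntermediateField ℚ ℝ) (u v g : ℤ) (r s t : ℝ) : Prop where
  pos : 0 < u
  uv : u < v
  vg : v < g
  F : Frame u v g r s t
  span : Spans K r s t
  hr : r ∈ K
  hs : s ∈ K
  ht : t ∈ K

theorem NormalForm.data {K : IntermediateField ℚ ℝ} {u v g : ℕ} (N : NormalForm K u v g) :
    Data K u v g (Real.sqrt (u * v : ℕ)) (Real.sqrt (u * g : ℕ)) (Real.sqrt (v * g : ℕ)) where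
  pos := by exact_mod_cast N.pos
  uv := by exact_mod_cast N.uv
  vg := by exact_mod_cast N.vg
  F := frame_sqrt N.uv N.vg N.sfp N.sfq N.sfr
  span := by
    rw [N.eq]
    exact spans_biqField (frame_sqrt N.uv N.vg N.sfp N.sfq N.sfr) rfl rfl
  hr := by rw [N.eq]; exact sqrt_left_mem _ _
  hs := by rw [N.eq]; exact sqrt_right_mem _ _
  ht := by rw [N.eq]; exact sqrt_third_mem N.pos.ne'

/-- `O_K` contains a sum of squares which is not a sum of four squares. -/
def Big (K : IntermediateField ℚ ℝ) : Prop :=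
  ∃ α ∈ ringOfInt K, IsSumOfSquaresIn (ringOfInt K) α ∧ ¬ SumOfNSquaresIn (ringOfInt K) 4 α

/-- The ring of integers as a subring. -/
noncomputable def intRing (K : IntermediateField ℚ ℝ) : Subring ℝ :=
  K.toSubfield.toSubring ⊓ (integralClosure ℤ ℝ).toSubring

theorem mem_intRing {K : IntermediateField ℚ ℝ} {x : ℝ} :
    x ∈ intRing K ↔ x ∈ ringOfInt K := Iff.rfl

/-- It is enough to exhibit five integers of `K` whose squares do not sum to a sum of four squares. -/
theorem Big.of_five {K : IntermediateField ℚ ℝ} {x₁ x₂ x₃ x₄ x₅ : ℝ} (h₁ : x₁ ∈ intRing K)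
    (h₂ : x₂ ∈ intRing K) (h₃ : x₃ ∈ intRing K) (h₄ : x₄ ∈ intRing K) (h₅ : x₅ ∈ intRing K)
    (h : ¬ SumOfNSquaresIn (ringOfInt K) 4 (x₁ ^ 2 + x₂ ^ 2 + x₃ ^ 2 + x₄ ^ 2 + x₅ ^ 2)) :
    Big K := by
  refine ⟨_, ?_, ⟨5, ![x₁, x₂, x₃, x₄, x₅], ?_, ?_⟩, h⟩
  · rw [← mem_intRing]
    exact add_mem (add_mem (add_mem (add_mem (pow_mem h₁ 2) (pow_mem h₂ 2)) (pow_mem h₃ 2))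
      (pow_mem h₄ 2)) (pow_mem h₅ 2)
  · intro i
    rw [← mem_intRing]
    fin_cases i <;> assumption
  · simp [Fin.sum_univ_five]

namespace Data

variable {K : IntermediateField ℚ ℝ} {u v g : ℤ} {r s t : ℝ}

theorem mem_of_sq (x : ℝ) (hx : x ∈ K) (h : x ^ 2 ∈ intRing K) : x ∈ intRing K :=
  ⟨hx, IsIntegral.of_pow (n := 2) (by norm_num) h.2⟩

theorem r_mem (D : Data K u v g r s t) : r ∈ intRing K :=
  mem_of_sq r D.hr (by
    rw [pow_two, D.F.rr]
    exact mul_mem (intCast_mem _ _) (intCast_mem _ _))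

theorem s_mem (D : Data K u v g r s t) : s ∈ intRing K :=
  mem_of_sq s D.hs (by
    rw [pow_two, D.F.ss]
    exact mul_mem (intCast_mem _ _) (intCast_mem _ _))

theorem t_mem (D : Data K u v g r s t) : t ∈ intRing K :=
  mem_of_sq t D.ht (by
    rw [pow_two, D.F.tt]
    exact mul_mem (intCast_mem _ _) (intCast_mem _ _))

theorem half_mem {y : ℝ} (hy : y ∈ intRing K) {m k : ℤ} (hm : m % 4 = 1) (h : y * y = m)
    (hk : k % 2 = 1) : (k + y) / 2 ∈ intRing K := by
  have h2 : (2 : ℝ) ∈ K := ofNat_mem K 2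
  have hyK : y ∈ K := hy.1
  have hmem : (k + y) / 2 ∈ K := div_mem (add_mem (intCast_mem K k) hyK) h2
  refine ⟨hmem, ?_⟩
  refine ⟨Polynomial.X ^ 2 - Polynomial.C k * Polynomial.X + Polynomial.C ((k * k - m) / 4), ?_, ?_⟩
  · monicity!
  · have h4 : (k * k) % 4 = 1 := by
      have : k % 4 = 1 ∨ k % 4 = 3 := by omega
      rcases this with h | h <;> rw [Int.mul_emod, h] <;> rfl
    have h5 : ((((k * k - m) / 4 : ℤ) : ℝ)) = (k * k - m) / 4 := by
      have : k * k - m = 4 * ((k * k - m) / 4) := by omega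
      have := congrArg (Int.cast : ℤ → ℝ) this
      push_cast at this
      linarith
    simp only [Polynomial.eval₂_add, Polynomial.eval₂_sub, Polynomial.eval₂_mul,
      Polynomial.eval₂_pow, Polynomial.eval₂_X, Polynomial.eval₂_C, algebraMap_int_eq, Int.coe_castRingHom]
    rw [h5, ← h]
    ring

/-- `(r + s)/2` is an algebraic integer when `vg ≡ 1 mod 4`: its square is `u` times
`((v + g)/2 + t)/2`. -/
theorem half_rs_mem (D : Data K u v g r s t) (hv : v % 2 = 1) (hvg : v % 4 = g % 4) :
    (r + s) / 2 ∈ intRing K := by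
  have h2 : (2 : ℝ) ∈ K := ofNat_mem K 2
  apply mem_of_sq _ (div_mem (add_mem D.hr D.hs) h2)
  have hm : (v * g) % 4 = 1 := by
    have : v % 4 = 1 ∨ v % 4 = 3 := by omega
    rcases this with h | h <;> rw [Int.mul_emod, ← hvg, h] <;> rfl
  have := half_mem D.t_mem (m := v * g) (k := (v + g) / 2) hm (by push_cast; exact D.F.tt)
    (by omega)
  have e : ((r + s) / 2) ^ 2 = u * ((((v + g) / 2 : ℤ) + t) / 2) := by
    have h5 : (((v + g) / 2 : ℤ) : ℝ) = (v + g) / 2 := by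
      have : v + g = 2 * ((v + g) / 2) := by omega
      have := congrArg (Int.cast : ℤ → ℝ) this
      push_cast at this
      linarith
    rw [h5]
    linear_combination D.F.rr / 4 + D.F.ss / 4 + D.F.rs / 2
  rw [e]
  exact mul_mem (intCast_mem _ _) this

end Data
/-! ### Integer vectors -/

theorem dot_comm (a b : Fin 4 → ℤ) : dot a b = dot b a := by
  simp only [dot]; ring

theorem dot_self_nonneg (a : Fin 4 → ℤ) : 0 ≤ dot a a := by
  simp only [dot]; nlinarith [mul_self_nonneg (a 0), mul_self_nonneg (a 1), mul_self_nonneg (a 2),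
    mul_self_nonneg (a 3)]

theorem dot_cauchy (a b : Fin 4 → ℤ) : dot a b * dot a b ≤ dot a a * dot b b := by
  simp only [dot]
  nlinarith [mul_self_nonneg (a 0 * b 1 - a 1 * b 0), mul_self_nonneg (a 0 * b 2 - a 2 * b 0),
    mul_self_nonneg (a 0 * b 3 - a 3 * b 0), mul_self_nonneg (a 1 * b 2 - a 2 * b 1),
    mul_self_nonneg (a 1 * b 3 - a 3 * b 1), mul_self_nonneg (a 2 * b 3 - a 3 * b 2)]

theorem eq_zero_of_dot_self {a : Fin 4 → ℤ} (h : dot a a = 0) : a = 0 := by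
  simp only [dot] at h
  have h0 := mul_self_nonneg (a 0)
  have h1 := mul_self_nonneg (a 1)
  have h2 := mul_self_nonneg (a 2)
  have h3 := mul_self_nonneg (a 3)
  funext i
  fin_cases i
  · exact mul_self_eq_zero.1 (by linarith : a 0 * a 0 = 0)
  · exact mul_self_eq_zero.1 (by linarith : a 1 * a 1 = 0)
  · exact mul_self_eq_zero.1 (by linarith : a 2 * a 2 = 0)
  · exact mul_self_eq_zero.1 (by linarith : a 3 * a 3 = 0)

@[simp] theorem dot_zero_left (a : Fin 4 → ℤ) : dot 0 a = 0 := by simp [dot]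

@[simp] theorem dot_zero_right (a : Fin 4 → ℤ) : dot a 0 = 0 := by simp [dot]

theorem mul_self_mod_two (x : ℤ) : (x * x) % 2 = x % 2 := by
  rw [Int.mul_emod]
  rcases Int.emod_two_eq_zero_or_one x with h | h <;> rw [h] <;> rfl

theorem mul_mod_two_of_cong {x y : ℤ} (h : (x + y) % 2 = 0) : (x * y) % 2 = x % 2 := by
  have : y % 2 = x % 2 := by omega
  rw [Int.mul_emod, this, ← Int.mul_emod, mul_self_mod_two]

theorem mul_self_mod_four {x y : ℤ} (h : (x + y) % 2 = 0) : (x * x) % 4 = (y * y) % 4 := by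
  obtain ⟨k, hk⟩ : ∃ k, x = y + 2 * k := ⟨(x - y) / 2, by omega⟩
  have : x * x = y * y + 4 * (k * y + k * k) := by subst hk; ring
  omega

theorem dot_self_mod_four {a b : Fin 4 → ℤ} (h : ∀ i, (a i + b i) % 2 = 0) :
    dot a a % 4 = dot b b % 4 := by
  have h0 := mul_self_mod_four (h 0)
  have h1 := mul_self_mod_four (h 1)
  have h2 := mul_self_mod_four (h 2)
  have h3 := mul_self_mod_four (h 3)
  simp only [dot]
  omega

theorem dot_mod_two {a b : Fin 4 → ℤ} (h : ∀ i, (a i + b i) % 2 = 0) :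
    dot a b % 2 = dot a a % 2 := by
  have h0 := mul_mod_two_of_cong (h 0)
  have h1 := mul_mod_two_of_cong (h 1)
  have h2 := mul_mod_two_of_cong (h 2)
  have h3 := mul_mod_two_of_cong (h 3)
  have k0 := mul_self_mod_two (a 0)
  have k1 := mul_self_mod_two (a 1)
  have k2 := mul_self_mod_two (a 2)
  have k3 := mul_self_mod_two (a 3)
  simp only [dot]
  omega

theorem exists_half {a : Fin 4 → ℤ} (h : ∀ i, a i % 2 = 0) : ∃ a' : Fin 4 → ℤ, ∀ i, a i = 2 * a' i :=
  ⟨fun i => a i / 2, fun i => by have := h i; simp only []; omega⟩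

theorem dot_two_left {a a' : Fin 4 → ℤ} (h : ∀ i, a i = 2 * a' i) (b : Fin 4 → ℤ) :
    dot a b = 2 * dot a' b := by
  simp only [dot, h]; ring

theorem dot_two_right {a a' : Fin 4 → ℤ} (h : ∀ i, a i = 2 * a' i) (b : Fin 4 → ℤ) :
    dot b a = 2 * dot b a' := by
  simp only [dot, h]; ring

/-- A signed permutation of coordinates: it preserves inner products and parities. -/
structure SignedPerm (T : (Fin 4 → ℤ) → (Fin 4 → ℤ)) : Prop where
  dot : ∀ a b, dot (T a) (T b) = dot a b
  par : ∀ a b, (∀ i, (a i + b i) % 2 = 0) → ∀ i, (T a i + T b i) % 2 = 0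
  par4 : ∀ a b c d, (∀ i, (a i + b i + c i + d i) % 2 = 0) →
    ∀ i, (T a i + T b i + T c i + T d i) % 2 = 0
  even : ∀ a, (∀ i, a i % 2 = 0) → ∀ i, T a i % 2 = 0
  zero : T 0 = 0

theorem signedPerm_mk (σ : Equiv.Perm (Fin 4)) (e : Fin 4 → ℤ) (he : ∀ i, e i = 1 ∨ e i = -1) :
    SignedPerm (fun a i => e i * a (σ i)) := by
  refine ⟨fun a b => ?_, fun a b h i => ?_, fun a b c d h i => ?_, fun a h i => ?_, ?_⟩
  · have hs : ∀ a b : Fin 4 → ℤ, dot a b = ∑ i, a i * b i := fun a b => by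
      rw [Fin.sum_univ_four, dot]
    rw [hs, hs, ← Equiv.sum_comp σ (fun i => a i * b i)]
    refine Finset.sum_congr rfl fun i _ => ?_
    rcases he i with h | h <;> simp only [h] <;> ring
  · have := h (σ i)
    rcases he i with h | h <;> simp only [h] <;> omega
  · have := h (σ i)
    rcases he i with h | h <;> simp only [h] <;> omega
  · have := h (σ i)
    rcases he i with h | h <;> simp only [h] <;> omega
  · funext i
    simp

theorem SignedPerm.comp {T S : (Fin 4 → ℤ) → (Fin 4 → ℤ)} (hT : SignedPerm T) (hS : SignedPerm S) :
    SignedPerm (fun a => T (S a)) :=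
  ⟨fun a b => by rw [hT.dot, hS.dot], fun a b h => hT.par _ _ (hS.par _ _ h),
    fun a b c d h => hT.par4 _ _ _ _ (hS.par4 _ _ _ _ h), fun a h => hT.even _ (hS.even _ h),
    by rw [hS.zero, hT.zero]⟩

theorem Sys.map {u v g T0 T1 T2 T3 : ℤ} {a b c d : Fin 4 → ℤ} (S : Sys u v g T0 T1 T2 T3 a b c d)
    {T : (Fin 4 → ℤ) → (Fin 4 → ℤ)} (hT : SignedPerm T) :
    Sys u v g T0 T1 T2 T3 (T a) (T b) (T c) (T d) := by
  constructor <;> simp only [hT.dot]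
  · exact S.e0
  · exact S.e1
  · exact S.e2
  · exact S.e3

/-- A vector of norm one is a standard basis vector, up to a signed permutation. -/
theorem exists_perm_one {b : Fin 4 → ℤ} (h : dot b b = 1) :
    ∃ T, SignedPerm T ∧ T b = ![1, 0, 0, 0] := by
  have hb : ∀ i, b i = 0 ∨ b i = 1 ∨ b i = -1 := by
    intro i
    have : b i * b i ≤ 1 := by
      simp only [dot] at h
      have h0 := mul_self_nonneg (b 0)
      have h1 := mul_self_nonneg (b 1)
      have h2 := mul_self_nonneg (b 2)
      have h3 := mul_self_nonneg (b 3)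
      fin_cases i <;> simp <;> linarith
    have h1 : b i ≤ 1 := by nlinarith
    have h2 : -1 ≤ b i := by nlinarith
    omega
  have hi : ∃ i, b i ≠ 0 := by
    by_contra hcon
    push Not at hcon
    simp [dot, hcon] at h
  obtain ⟨i, hi⟩ := hi
  refine ⟨_, signedPerm_mk (Equiv.swap 0 i) (fun _ => b i) (fun _ => ?_), ?_⟩
  · rcases hb i with h | h | h
    · exact absurd h hi
    · exact Or.inl h
    · exact Or.inr h
  · simp only [dot] at h
    have h0 := mul_self_nonneg (b 0)
    have h1 := mul_self_nonneg (b 1)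
    have h2 := mul_self_nonneg (b 2)
    have h3 := mul_self_nonneg (b 3)
    have hbi : b i * b i = 1 := by
      rcases hb i with h | h | h
      · exact absurd h hi
      · rw [h]; rfl
      · rw [h]; rfl
    have hz : ∀ j, j ≠ i → b j = 0 := by
      intro j hj
      apply mul_self_eq_zero.1
      fin_cases i <;> fin_cases j <;> first | exact absurd rfl hj | (simp at hbi ⊢; nlinarith)
    have hsw : ∀ j : Fin 4, j ≠ 0 → b (Equiv.swap 0 i j) = 0 := by
      intro j hj
      apply hz
      intro hcon
      rw [Equiv.swap_apply_eq_iff] at hcon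
      simp at hcon
      exact hj hcon
    funext j
    fin_cases j
    · simpa using hbi
    · simp [hsw 1 (by decide)]
    · simp [hsw 2 (by decide)]
    · simp [hsw 3 (by decide)]

theorem sq_mod_eight (x : ℤ) : x ^ 2 % 8 = 0 ∨ x ^ 2 % 8 = 1 ∨ x ^ 2 % 8 = 4 := by
  have h : x % 8 = 0 ∨ x % 8 = 1 ∨ x % 8 = 2 ∨ x % 8 = 3 ∨ x % 8 = 4 ∨ x % 8 = 5 ∨ x % 8 = 6 ∨
    x % 8 = 7 := by omega
  rw [pow_two, Int.mul_emod]
  rcases h with h | h | h | h | h | h | h | h <;> rw [h] <;> decide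

theorem three_squares_ne_seven (x y z : ℤ) : x * x + y * y + z * z ≠ 7 := by
  have h1 := sq_mod_eight x
  have h2 := sq_mod_eight y
  have h3 := sq_mod_eight z
  rw [pow_two] at h1 h2 h3
  omega

/-- `28 = 4 · 7` is not a sum of three even squares. -/
theorem three_even_squares_ne {x y z : ℤ} (hx : x % 2 = 0) (hy : y % 2 = 0) (hz : z % 2 = 0) :
    x * x + y * y + z * z ≠ 28 := by
  obtain ⟨x, rfl⟩ : ∃ k, x = 2 * k := ⟨x / 2, by omega⟩
  obtain ⟨y, rfl⟩ : ∃ k, y = 2 * k := ⟨y / 2, by omega⟩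
  obtain ⟨z, rfl⟩ : ∃ k, z = 2 * k := ⟨z / 2, by omega⟩
  intro h
  exact three_squares_ne_seven x y z (by linarith)

theorem dot_ge_two {a : Fin 4 → ℤ} {i j : Fin 4} (hij : i ≠ j) (hi : a i % 2 = 1)
    (hj : a j % 2 = 1) : 2 ≤ dot a a := by
  have h : ∀ {x : ℤ}, x % 2 = 1 → 1 ≤ x * x := by
    intro x hx
    have : x ≠ 0 := by omega
    have := mul_self_pos.2 this
    omega
  have h0 := mul_self_nonneg (a 0)
  have h1 := mul_self_nonneg (a 1)
  have h2 := mul_self_nonneg (a 2)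
  have h3 := mul_self_nonneg (a 3)
  have hi := h hi
  have hj := h hj
  simp only [dot]
  fin_cases i <;> fin_cases j <;> simp at hi hj hij ⊢ <;> linarith
/-! ### The case `uv ≡ 1 mod 4`, `uv ≥ 17` -/

/-- Once `c = d = 0`, the equation `∑ (a_i + b_i r)² = 28 + (1 + r)²` reduces to `7` being a sum of
three squares. -/
theorem no_quad_one {P : ℤ} (hP : 17 ≤ P) {a b : Fin 4 → ℤ} (hab : ∀ i, (a i + b i) % 2 = 0)
    (h0 : dot a a + P * dot b b = 29 + P) (h1 : dot a b = 1) : False := by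
  have hm := dot_mod_two hab
  have hm' := dot_self_mod_four hab
  have ha := dot_self_nonneg a
  have hb := dot_self_nonneg b
  have hb1 : dot b b = 1 := by
    have : dot b b < 3 := by nlinarith
    omega
  obtain ⟨T, hT, hTb⟩ := exists_perm_one hb1
  have q0 : dot (T a) (T a) = 29 := by rw [hT.dot]; rw [hb1] at h0; linarith
  have q1 : dot (T a) (T b) = 1 := by rw [hT.dot]; exact h1
  have q2 := hT.par _ _ hab
  rw [hTb] at q1 q2
  have p1 := q2 1
  have p2 := q2 2
  have p3 := q2 3
  simp [dot] at q0 q1 p1 p2 p3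
  rw [q1] at q0
  exact three_even_squares_ne (x := T a 1) (y := T a 2) (z := T a 3) (by omega) (by omega)
    (by omega) (by linarith)

/-- The element `7 + ((1 + r)/2)²`, when `uv ≡ 1 mod 4` and `√(uv)` is distinguished: the size of the
trace and the parities force `c = d = 0`. -/
theorem no_sys_one_specP {u v g : ℤ} (hu : 0 < u) (huv : u < v) (hvg : v < g) (hP : 17 ≤ u * v)
    (hP4 : (u * v) % 4 = 1)
    {a b c d : Fin 4 → ℤ} (S : Sys u v g (29 + u * v) 1 0 0 a b c d)
    (hab : ∀ i, (a i + b i) % 2 = 0) (hcd : ∀ i, (c i + d i) % 2 = 0) : False := by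
  have ha := dot_self_nonneg a
  have hb := dot_self_nonneg b
  have hc := dot_self_nonneg c
  have hd := dot_self_nonneg d
  have hm := dot_self_mod_four hcd
  have hQ : u * v + u ≤ u * g := by nlinarith
  have hR : u * v + 2 * v ≤ v * g := by nlinarith
  have e0 := S.e0
  have hPb : 0 ≤ u * v * dot b b := by positivity
  have hv5 : 5 ≤ v := by nlinarith
  have hz : dot c c = 0 ∧ dot d d = 0 := by
    by_contra hcon
    have hQ0 : 0 ≤ u * g := by nlinarith
    have hR0 : 0 ≤ v * g := by nlinarith
    by_cases h1 : 1 ≤ dot c c ∧ 1 ≤ dot d d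
    · have k1 : u * g ≤ u * g * dot c c := by nlinarith
      have k2 : v * g ≤ v * g * dot d d := by nlinarith
      have hv6 : v ≤ 6 := by linarith
      interval_cases v <;> omega
    · by_cases h2 : 4 ≤ dot c c
      · have k1 : u * g * 4 ≤ u * g * dot c c := by nlinarith
        have k2 : 0 ≤ v * g * dot d d := by positivity
        linarith
      · have h4 : 4 ≤ dot d d := by omega
        have k1 : 0 ≤ u * g * dot c c := by positivity
        have k2 : v * g * 4 ≤ v * g * dot d d := by nlinarith
        linarith
  obtain rfl := eq_zero_of_dot_self hz.1
  obtain rfl := eq_zero_of_dot_self hz.2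
  have e1 := S.e1
  simp at e0 e1
  exact no_quad_one hP hab e0 e1

/-- A vector with exactly one odd coordinate is supported there, or has norm at least `5`. -/
theorem odd_place {x : Fin 4 → ℤ} {i : Fin 4} (hx : x i % 2 = 1) (hxj : ∀ j, j ≠ i → x j % 2 = 0) :
    1 ≤ dot x x ∧ (5 ≤ dot x x ∨ ∀ y, dot y x = y i * x i) := by
  have h4 : ∀ {x : ℤ}, x % 2 = 0 → x = 0 ∨ 4 ≤ x * x := by
    intro x hx
    obtain ⟨k, rfl⟩ : ∃ k, x = 2 * k := ⟨x / 2, by omega⟩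
    by_cases hk : k = 0
    · left; omega
    · right
      have := mul_self_pos.2 hk
      nlinarith
  have h1 : 1 ≤ x i * x i := by
    have : x i ≠ 0 := by omega
    have := mul_self_pos.2 this
    omega
  have n0 := mul_self_nonneg (x 0)
  have n1 := mul_self_nonneg (x 1)
  have n2 := mul_self_nonneg (x 2)
  have n3 := mul_self_nonneg (x 3)
  have m : ∀ j, j = i ∨ x j = 0 ∨ 4 ≤ x j * x j :=
    fun j => or_iff_not_imp_left.2 fun h => h4 (hxj j h)
  have m0 := m 0
  have m1 := m 1
  have m2 := m 2
  have m3 := m 3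
  simp only [dot]
  by_cases hz : ∀ j, j ≠ i → x j = 0
  · refine ⟨?_, Or.inr fun y => ?_⟩
    · fin_cases i <;> simp at h1 <;> linarith
    · have z0 := hz 0
      have z1 := hz 1
      have z2 := hz 2
      have z3 := hz 3
      fin_cases i <;> simp at z0 z1 z2 z3 ⊢ <;> simp [z0, z1, z2, z3]
  · push Not at hz
    obtain ⟨j, hj, hxj0⟩ := hz
    have h5 := (m j).resolve_left hj |>.resolve_left hxj0
    have : 5 ≤ x 0 * x 0 + x 1 * x 1 + x 2 * x 2 + x 3 * x 3 := by
      fin_cases i <;> fin_cases j <;> simp at h1 h5 hj <;> linarith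
    exact ⟨by linarith, Or.inl this⟩

/-- The element `7 + ((1 + r)/2)²`, when all three radicands are `1 mod 4`. -/
theorem no_sys_one_type1 {u v g : ℤ} (hu : 0 < u) (huv : u < v) (hvg : v < g) (hP : 17 ≤ u * v)
    (hu2 : u % 2 = 1) (hv : v % 4 = u % 4) (hg : g % 4 = u % 4)
    (hns : ∀ x y : ℤ, x * x = u * v * (y * y) → y = 0)
    {a b c d : Fin 4 → ℤ} (S : Sys u v g (116 + 4 * (u * v)) 4 0 0 a b c d)
    (hp : ∀ i, (a i % 2 = 1 ∧ b i % 2 = 1 ∧ c i % 2 = 1 ∧ d i % 2 = 1) ∨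
      ∃ a' b' c' d' : ℤ, a i = 2 * a' ∧ b i = 2 * b' ∧ c i = 2 * c' ∧ d i = 2 * d' ∧
      (a' + b' + c' + d') % 2 = 0) : False := by
  have ha := dot_self_nonneg a
  have hb := dot_self_nonneg b
  have hc := dot_self_nonneg c
  have hd := dot_self_nonneg d
  have hQ : u * v + 4 * u ≤ u * g := by nlinarith [show v + 4 ≤ g by omega]
  have hR : u * v + 8 * v ≤ v * g := by nlinarith [show u + 8 ≤ g by omega]
  have hv7 : 7 ≤ v := by
    by_contra hcon
    have : v ≤ 6 := by omega
    have : 5 ≤ v := by nlinarith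
    interval_cases v <;> omega
  have e0 := S.e0
  have hQ0 : 0 ≤ u * g := by nlinarith
  have hR0 : 0 ≤ v * g := by nlinarith
  by_cases h2 : ∃ i j, i ≠ j ∧ a i % 2 = 1 ∧ a j % 2 = 1
  · -- two elements with odd coordinates are too large
    obtain ⟨i, j, hij, hi, hj⟩ := h2
    have hi' := (hp i).resolve_right (by rintro ⟨a', b', c', d', h, -⟩; omega)
    have hj' := (hp j).resolve_right (by rintro ⟨a', b', c', d', h, -⟩; omega)
    have k0 := dot_ge_two hij hi'.1 hj'.1
    have k1 : u * v * 2 ≤ u * v * dot b b := by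
      nlinarith [dot_ge_two hij hi'.2.1 hj'.2.1]
    have k2 : u * g * 2 ≤ u * g * dot c c := by
      nlinarith [dot_ge_two hij hi'.2.2.1 hj'.2.2.1]
    have k3 : v * g * 2 ≤ v * g * dot d d := by
      nlinarith [dot_ge_two hij hi'.2.2.2 hj'.2.2.2]
    linarith
  · by_cases h1 : ∃ i, a i % 2 = 1
    · obtain ⟨i, hi⟩ := h1
      have hi' := (hp i).resolve_right (by rintro ⟨a', b', c', d', h, -⟩; omega)
      have hj' : ∀ j, j ≠ i → c j % 2 = 0 ∧ d j % 2 = 0 := by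
        intro j hj
        rcases hp j with h | ⟨a', b', c', d', h, h', h'', h''', -⟩
        · exact absurd ⟨j, i, hj, h.1, hi⟩ h2
        · omega
      -- the remaining elements lie in `ℚ(r)`
      have hb1 : 1 ≤ dot b b := (odd_place hi'.2.1 (fun j hj => by
        rcases hp j with h | ⟨a', b', c', d', h, h', -⟩
        · exact absurd ⟨j, i, hj, h.1, hi⟩ h2
        · omega)).1
      obtain ⟨hc1, hc5⟩ := odd_place hi'.2.2.1 (fun j hj => (hj' j hj).1)
      obtain ⟨hd1, hd5⟩ := odd_place hi'.2.2.2 (fun j hj => (hj' j hj).2)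
      have k1 : u * v * 1 ≤ u * v * dot b b := mul_le_mul_of_nonneg_left hb1 (by positivity)
      have k2 : u * g * 1 ≤ u * g * dot c c := mul_le_mul_of_nonneg_left hc1 hQ0
      have k3 : v * g * 1 ≤ v * g * dot d d := mul_le_mul_of_nonneg_left hd1 hR0
      rcases hc5 with hc5 | hc5
      · have : u * g * 5 ≤ u * g * dot c c := mul_le_mul_of_nonneg_left hc5 hQ0
        linarith
      rcases hd5 with hd5 | hd5
      · have : v * g * 5 ≤ v * g * dot d d := mul_le_mul_of_nonneg_left hd5 hR0
        linarith
      have e2 := S.e2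
      have e3 := S.e3
      rw [hc5, hd5] at e2 e3
      have hcd : c i * d i ≠ 0 := mul_ne_zero (by omega) (by omega)
      have := hns (a i) (b i) (by
        apply mul_right_cancel₀ hcd
        linear_combination (a i * d i) * e2 - (v * b i * d i) * e3)
      omega
    · -- all coordinates are even
      have hev : ∀ i, ∃ a' b' c' d' : ℤ, a i = 2 * a' ∧ b i = 2 * b' ∧ c i = 2 * c' ∧
          d i = 2 * d' ∧ (a' + b' + c' + d') % 2 = 0 := by
        intro i
        rcases hp i with h | h
        · exact absurd ⟨i, h.1⟩ h1
        · exact h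
      choose a' b' c' d' wa wb wc wd hpar using hev
      have S' : Sys u v g (29 + u * v) 1 0 0 a' b' c' d' := by
        obtain ⟨s0, s1, s2, s3⟩ := S
        simp only [dot_two_left wa, dot_two_right wa, dot_two_left wb, dot_two_right wb,
          dot_two_left wc, dot_two_right wc, dot_two_left wd, dot_two_right wd] at s0 s1 s2 s3
        constructor <;> linarith
      clear e0 S wa wb wc wd hp h1 h2 ha hb hc hd
      obtain ⟨s0, s1, s2, s3⟩ := S'
      have ha := dot_self_nonneg a'
      have hb := dot_self_nonneg b'
      have hc := dot_self_nonneg c'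
      have hd := dot_self_nonneg d'
      have hd0 : dot d' d' = 0 := by
        by_contra hcon
        have hd1 : 1 ≤ dot d' d' := by omega
        have k1 : 0 ≤ u * v * dot b' b' := by positivity
        have k2 : 0 ≤ u * g * dot c' c' := by positivity
        have k3 : v * g ≤ v * g * dot d' d' := by nlinarith
        linarith
      obtain rfl := eq_zero_of_dot_self hd0
      simp at s0 s1 s2 s3
      have hs3 : dot b' c' = 0 := by
        rcases s3 with h | h
        · omega
        · exact h
      have hb0 : dot b' b' ≠ 0 := by
        intro h
        rw [eq_zero_of_dot_self h] at s1
        simp at s1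
      by_cases hc0 : dot c' c' = 0
      · obtain rfl := eq_zero_of_dot_self hc0
        simp at s0 hpar
        exact no_quad_one hP (fun i => by have := hpar i; omega) s0 s1
      · have hbc : dot b' b' = 1 ∧ dot c' c' = 1 := by
          by_contra hcon
          have k1 : u * v * 1 ≤ u * v * dot b' b' :=
            mul_le_mul_of_nonneg_left (by omega) (by positivity)
          have k2 : u * g * 1 ≤ u * g * dot c' c' :=
            mul_le_mul_of_nonneg_left (by omega) (by positivity)
          by_cases hb2 : 2 ≤ dot b' b'
          · have k1 : u * v * 2 ≤ u * v * dot b' b' :=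
              mul_le_mul_of_nonneg_left (by omega) (by positivity)
            linarith
          · have k2 : u * g * 2 ≤ u * g * dot c' c' :=
              mul_le_mul_of_nonneg_left (by omega) (by positivity)
            linarith
        -- `b` and `c` are unit vectors at different places, and `a` is odd at both
        obtain ⟨T, hT, hTc⟩ := exists_perm_one hbc.2
        have p := hT.par4 _ _ _ _ hpar 0
        have q1 : dot (T b') (T c') = 0 := by rw [hT.dot, hs3]
        have q2 : dot (T a') (T c') = 0 := by rw [hT.dot, s2]
        rw [hTc] at q1 q2 p
        rw [hT.zero] at p
        simp [dot] at q1 q2 p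
        omega

theorem Data.notSq {K : IntermediateField ℚ ℝ} {u v g : ℤ} {r s t : ℝ} (D : Data K u v g r s t)
    (x y : ℤ) (h : x * x = u * v * (y * y)) : y = 0 := by
  have := irr_sq D.F.irr (m := u * v) (by push_cast; exact D.F.rr) (x := x) (y := y)
    (by exact_mod_cast h)
  exact_mod_cast this.2

theorem mod_four_of_sq {K : IntermediateField ℚ ℝ} {u v g : ℤ} {r s t : ℝ}
    (D : Data K u v g r s t) : u % 4 ≠ 0 ∧ v % 4 ≠ 0 ∧ g % 4 ≠ 0 ∧ (u % 2 = 1 ∨ v % 2 = 1) ∧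
      (u % 2 = 1 ∨ g % 2 = 1) ∧ (v % 2 = 1 ∨ g % 2 = 1) := by
  have key : ∀ {x y : ℤ}, Squarefree (x * y) → x % 4 ≠ 0 ∧ y % 4 ≠ 0 ∧ (x % 2 = 1 ∨ y % 2 = 1) := by
    intro x y h
    have h4 : ¬ (2 * 2 : ℤ) ∣ x * y := by
      intro hd
      have := Int.isUnit_iff.1 (h 2 hd)
      omega
    refine ⟨fun hx => h4 ?_, fun hy => h4 ?_, ?_⟩
    · exact Dvd.dvd.mul_right (by omega) _
    · exact Dvd.dvd.mul_left (by omega) _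
    · by_contra hcon
      exact h4 (mul_dvd_mul (by omega) (by omega))
  have h1 := key D.F.sfp
  have h2 := key D.F.sfq
  have h3 := key D.F.sfr
  omega

/-- The witness is `2² + 1² + 1² + 1² + ((1 + r)/2)²`. -/
theorem Data.big_of_one_mod_four {K : IntermediateField ℚ ℝ} {u v g : ℤ} {r s t : ℝ}
    (D : Data K u v g r s t) (hP : 17 ≤ u * v) (hu2 : u % 2 = 1) (hv : v % 4 = u % 4) : Big K := by
  have hP4 : (u * v) % 4 = 1 := by
    have : u % 4 = 1 ∨ u % 4 = 3 := by omega
    rcases this with h | h <;> rw [Int.mul_emod, hv, h] <;> rfl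
  have hm := mod_four_of_sq D
  have h1 : ((1 : ℤ) + r) / 2 ∈ intRing K :=
    Data.half_mem D.r_mem hP4 (by push_cast; exact D.F.rr) rfl
  refine Big.of_five (ofNat_mem _ 2) (one_mem _) (one_mem _) (one_mem _) h1 fun h => ?_
  have hrr := D.F.rr
  by_cases hg : g % 4 = u % 4
  · obtain ⟨a, b, c, d, S, hp⟩ := D.F.sys1 D.span hu2 hv hg h (T0 := 116 + 4 * (u * v)) (T1 := 4)
      (T2 := 0) (T3 := 0) (by push_cast; linear_combination 4 * hrr)
    exact no_sys_one_type1 D.pos D.uv D.vg hP hu2 hv hg D.notSq S hp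
  · obtain ⟨a, b, c, d, S, h1, h2, -⟩ := D.F.sysP D.span (by unfold SpecP; omega) h
      (T0 := 29 + u * v) (T1 := 1) (T2 := 0) (T3 := 0) (by push_cast; linear_combination hrr)
    exact no_sys_one_specP D.pos D.uv D.vg hP hP4 S h1 h2
/-! ### The case `uv ≢ 1 mod 4`, `uv ≥ 14` -/

/-- Size constraints on `u < v < g`, and the consequences of squarefreeness which exclude small
triples. -/
structure Sizes (u v g : ℤ) : Prop where
  hu : 0 < u
  huv : u < v
  hvg : v < g
  u4 : u % 4 ≠ 0
  v4 : v % 4 ≠ 0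
  g4 : g % 4 ≠ 0
  p9 : (u * v) % 9 ≠ 0
  q9 : (u * g) % 9 ≠ 0

/-- Lower bounds for the four norms give a lower bound for the rational coordinate. -/
theorem Sys.lower {u v g M T1 T2 T3 : ℤ} {a b c d : Fin 4 → ℤ} (Z : Sizes u v g)
    (S : Sys u v g M T1 T2 T3 a b c d) (i j k l : ℤ) (hi : i ≤ dot a a)
    (hj : j ≤ dot b b) (hk : k ≤ dot c c) (hl : l ≤ dot d d) :
    i + u * v * j + u * g * k + v * g * l ≤ M := by
  have h := S.e0
  obtain ⟨hu, huv, hvg, -⟩ := Z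
  have hv : 0 < v := by linarith
  have hg : 0 < g := by linarith
  have k1 : u * v * j ≤ u * v * dot b b := mul_le_mul_of_nonneg_left hj (by positivity)
  have k2 : u * g * k ≤ u * g * dot c c := mul_le_mul_of_nonneg_left hk (by positivity)
  have k3 : v * g * l ≤ v * g * dot d d := mul_le_mul_of_nonneg_left hl (by positivity)
  linarith

/-- The equation for `7 + (3 + r)²` has no solution inside `ℤ[r]`. -/
theorem no_quad_three {P : ℤ} (hP : 14 ≤ P) {a b : Fin 4 → ℤ} (ha : ∀ i, a i % 2 = 0)
    (hb : ∀ i, b i % 2 = 0) (h0 : dot a a + P * dot b b = 64 + 4 * P) (h1 : dot a b = 12) :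
    False := by
  obtain ⟨a, wa⟩ := exists_half ha
  obtain ⟨b, wb⟩ := exists_half hb
  simp only [dot_two_left wa, dot_two_right wa, dot_two_left wb, dot_two_right wb] at h0 h1
  have hcs := dot_cauchy a b
  have ha := dot_self_nonneg a
  have hb := dot_self_nonneg b
  have h1' : dot a b = 3 := by linarith
  rw [h1'] at hcs
  have hlt : dot b b < 3 := by nlinarith
  have hb1 : dot b b = 1 := by
    interval_cases h : dot b b
    · omega
    · rfl
    · omega
  obtain ⟨T, hT, hTb⟩ := exists_perm_one hb1
  have q0 : dot (T a) (T a) = 16 := by rw [hT.dot]; rw [hb1] at h0; linarith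
  have q1 : dot (T a) (T b) = 3 := by rw [hT.dot]; exact h1'
  rw [hTb] at q1
  simp [dot] at q0 q1
  rw [q1] at q0
  exact three_squares_ne_seven (T a 1) (T a 2) (T a 3) (by linarith)

/-- The case of vanishing `d` for the distinguished root `s`, and of vanishing `c` for the
distinguished root `t`. -/
theorem no_three_vectors {P Q : ℤ} (hP : 14 ≤ P) (hPQ : P < Q) {a b c : Fin 4 → ℤ}
    (hb : ∀ i, b i % 2 = 0) (hac : ∀ i, (a i + c i) % 2 = 0)
    (h0 : dot a a + P * dot b b + Q * dot c c = 64 + 4 * P) (h1 : dot a b = 12)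
    (h2 : dot a c = 0) : False := by
  have hc := dot_self_nonneg c
  have ha := dot_self_nonneg a
  by_cases hc0 : dot c c = 0
  · obtain rfl := eq_zero_of_dot_self hc0
    simp at h0
    exact no_quad_three hP (fun i => by simpa using hac i) hb h0 h1
  obtain ⟨b', wb⟩ := exists_half hb
  simp only [dot_two_left wb, dot_two_right wb] at h0 h1
  have h1' : dot a b' = 6 := by linarith
  have hcs := dot_cauchy a b'
  rw [h1'] at hcs
  have hb0 := dot_self_nonneg b'
  have hQc : Q * 1 ≤ Q * dot c c := mul_le_mul_of_nonneg_left (by omega) (by linarith)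
  have hlt : dot b' b' < 3 := by nlinarith
  have hb1 : dot b' b' = 1 := by
    interval_cases h : dot b' b'
    · omega
    · rfl
    · omega
  rw [hb1] at h0 hcs
  have hc1 : dot c c = 1 := by
    have : dot c c < 2 := by nlinarith
    omega
  obtain ⟨T, hT, hTc⟩ := exists_perm_one hc1
  have q := hT.par _ _ hac 0
  have q1 : dot (T a) (T c) = 0 := by rw [hT.dot, h2]
  rw [hTc] at q q1
  simp [dot] at q q1
  omega

/-- If `b` vanished, then `g (c · d) = 12`, which the sizes exclude. -/
theorem three_b_ne_zero {u v g : ℤ} (Z : Sizes u v g) (hP : 14 ≤ u * v) {M : ℤ}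
    {a b c d : Fin 4 → ℤ} (S : Sys u v g M 12 0 0 a b c d) : 1 ≤ dot b b := by
  by_contra hcon
  have hb := dot_self_nonneg b
  have hb0 : dot b b = 0 := by omega
  have e1 := S.e1
  rw [eq_zero_of_dot_self hb0] at e1
  simp at e1
  obtain ⟨hu, huv, hvg, u4, v4, g4, p9, q9⟩ := Z
  have hv5 : 5 ≤ v := by nlinarith
  have hdvd : g ∣ 12 := ⟨_, e1.symm⟩
  have hg12 := Int.le_of_dvd (by norm_num) hdvd
  have hg6' : 6 ≤ g := by omega
  have hg6 : g = 6 := by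
    interval_cases g <;> omega
  subst hg6
  have : v = 5 := by omega
  subst this
  have : 3 ≤ u := by omega
  interval_cases u <;> omega

/-- The three smallest cases of the size analysis, separated by the inequality available. -/
theorem small_cases {u v g : ℤ} (Z : Sizes u v g) (hP : 14 ≤ u * v)
    (h : u * g + 2 * (v * g) ≤ 64 + 2 * (u * v)) :
    g = 7 ∧ (u = 3 ∧ v = 5 ∨ u = 5 ∧ v = 6) := by
  obtain ⟨hu, huv, hvg, u4, v4, g4, p9, q9⟩ := Z
  have hv5 : 5 ≤ v := by nlinarith
  have hv6 : v ≤ 6 := by nlinarith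
  have hu3 : 3 ≤ u := by nlinarith
  have hg7 : g ≤ 7 := by nlinarith
  have hg6 : 6 ≤ g := by linarith
  clear hP
  interval_cases v <;> interval_cases u <;> interval_cases g <;> omega

theorem small_cases' {u v g : ℤ} (Z : Sizes u v g) (hP : 14 ≤ u * v)
    (h : u * v + v * g ≤ 64) : u = 3 ∧ v = 5 ∧ g = 7 := by
  obtain ⟨hu, huv, hvg, u4, v4, g4, p9, q9⟩ := Z
  have hv5 : 5 ≤ v := by nlinarith
  have hv6 : v ≤ 6 := by nlinarith
  have hu3 : 3 ≤ u := by nlinarith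
  have hg7 : g ≤ 9 := by nlinarith
  have hg6 : 6 ≤ g := by linarith
  clear hP
  interval_cases v <;> interval_cases u <;> interval_cases g <;> omega

theorem small_cases'' {u v g : ℤ} (Z : Sizes u v g) (hP : 14 ≤ u * v)
    (h : v * v + u * g + 2 * (v * g) ≤ 64 + 3 * (u * v)) : False := by
  obtain ⟨hu, huv, hvg, u4, v4, g4, p9, q9⟩ := Z
  have hv5 : 5 ≤ v := by nlinarith
  have h1 : v * (v + 1) ≤ v * g := mul_le_mul_of_nonneg_left (by linarith) (by linarith)
  have h2 : u * (v + 1) ≤ u * g := mul_le_mul_of_nonneg_left (by linarith) (by linarith)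
  have hv6 : v ≤ 6 := by nlinarith
  have hu3 : 3 ≤ u := by nlinarith
  have hg7 : g ≤ 10 := by nlinarith
  have hg6 : 6 ≤ g := by linarith
  clear hP h1 h2
  interval_cases v <;> interval_cases u <;> interval_cases g <;> omega

/-- The element `7 + (3 + r)²` when `√(uv)` is distinguished. -/
theorem no_sys_three_specP {u v g : ℤ} (Z : Sizes u v g) (hP : 14 ≤ u * v) (hg2 : g % 4 = 2)
    (hu2 : u % 2 = 1) (hv2 : v % 2 = 1)
    {a b c d : Fin 4 → ℤ} (S : Sys u v g (64 + 4 * (u * v)) 12 0 0 a b c d)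
    (hab : ∀ i, (a i + b i) % 2 = 0) (hcd : ∀ i, (c i + d i) % 2 = 0)
    (ha2 : ∀ i, a i % 2 = 0) : False := by
  have hb1 := three_b_ne_zero Z hP S
  have hb2 : ∀ i, b i % 2 = 0 := fun i => by have := hab i; have := ha2 i; omega
  have hb4 : 4 ≤ dot b b := by
    obtain ⟨b', wb⟩ := exists_half hb2
    simp only [dot_two_left wb, dot_two_right wb] at hb1 ⊢
    omega
  have ha := dot_self_nonneg a
  have hc := dot_self_nonneg c
  have hd := dot_self_nonneg d
  have hm := dot_self_mod_four hcd
  have hz : dot c c = 0 ∧ dot d d = 0 := by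
    by_contra hcon
    have hQ : u * v + u ≤ u * g := by nlinarith [Z.hu, Z.hvg]
    have hR : u * g < v * g := by nlinarith [Z.huv, Z.hvg, Z.hu]
    have hQ2 : (u * g) % 4 = 2 := by
      have : u % 4 = 1 ∨ u % 4 = 3 := by omega
      rcases this with h | h <;> rw [Int.mul_emod, hg2, h] <;> rfl
    have hu := Z.hu
    by_cases h1 : 1 ≤ dot c c ∧ 1 ≤ dot d d
    · have := S.lower Z 0 4 1 1 ha hb4 h1.1 h1.2
      obtain ⟨hu, huv, hvg, u4, v4, g4, p9, q9⟩ := Z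
      have hv5 : 5 ≤ v := by nlinarith
      have hv7 : v ≤ 7 := by nlinarith
      have : g ≤ 12 := by nlinarith
      interval_cases v <;> interval_cases g <;> omega
    · by_cases h2 : 4 ≤ dot c c
      · have := S.lower Z 0 4 4 0 ha hb4 h2 hd
        omega
      · have := S.lower Z 0 4 0 4 ha hb4 hc (by omega)
        omega
  have e0 := S.e0
  have e1 := S.e1
  rw [eq_zero_of_dot_self hz.1, eq_zero_of_dot_self hz.2] at e0 e1
  simp at e0 e1
  exact no_quad_three hP ha2 hb2 e0 e1

theorem unit_cong {b : Fin 4 → ℤ} (hb : dot b b = 1) (h : ∀ i, (b i + ![1, 0, 0, 0] i) % 2 = 0) :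
    ∃ e : ℤ, (e = 1 ∨ e = -1) ∧ b = ![e, 0, 0, 0] := by
  have h0 := h 0
  have h1 := h 1
  have h2 := h 2
  have h3 := h 3
  simp at h0 h1 h2 h3
  simp only [dot] at hb
  have n0 := mul_self_nonneg (b 0)
  have n1 := mul_self_nonneg (b 1)
  have n2 := mul_self_nonneg (b 2)
  have n3 := mul_self_nonneg (b 3)
  have h01 : 0 < b 0 * b 0 := mul_self_pos.2 (by omega)
  have z1 : b 1 = 0 := mul_self_eq_zero.1 (by omega)
  have z2 : b 2 = 0 := mul_self_eq_zero.1 (by omega)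
  have z3 : b 3 = 0 := mul_self_eq_zero.1 (by omega)
  have e0 : b 0 * b 0 = 1 := by omega
  refine ⟨b 0, ?_, ?_⟩
  · exact mul_self_eq_one_iff.1 e0
  · funext i
    fin_cases i <;> simp [z1, z2, z3]

theorem sq_coord_le (a : Fin 4 → ℤ) : a 0 * a 0 ≤ dot a a := by
  simp only [dot]
  nlinarith [mul_self_nonneg (a 1), mul_self_nonneg (a 2), mul_self_nonneg (a 3)]

set_option maxHeartbeats 1000000 in
/-- The element `7 + (3 + r)²` when `√(ug)` is distinguished. -/
theorem no_sys_three_specQ {u v g : ℤ} (Z : Sizes u v g) (hP : 14 ≤ u * v)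
    {a b c d : Fin 4 → ℤ} (S : Sys u v g (64 + 4 * (u * v)) 12 0 0 a b c d)
    (hac : ∀ i, (a i + c i) % 2 = 0) (hbd : ∀ i, (b i + d i) % 2 = 0) : False := by
  have hb1 := three_b_ne_zero Z hP S
  have ha := dot_self_nonneg a
  have hc := dot_self_nonneg c
  have hd := dot_self_nonneg d
  have hm := dot_self_mod_four hbd
  have hcs := dot_cauchy a b
  have hcd := dot_cauchy c d
  have e0 := S.e0
  have e1 := S.e1
  have e2 := S.e2
  have e3 := S.e3
  have hlow := fun i j k l => S.lower Z i j k l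
  obtain ⟨hu, huv, hvg, u4, v4, g4, p9, q9⟩ := id Z
  have hv5 : 5 ≤ v := by nlinarith
  have hR30 : 30 ≤ v * g := by nlinarith
  have hQ : u * v + u ≤ u * g := by nlinarith
  have hR : u * v + 2 * v ≤ v * g := by nlinarith
  by_cases hd0 : dot d d = 0
  · obtain rfl := eq_zero_of_dot_self hd0
    simp at e0 e1 e2 hbd
    exact no_three_vectors hP (by linarith) (fun i => by have := hbd i; omega) hac e0 e1 e2
  have hd1 : 1 ≤ dot d d := by omega
  by_cases k4 : 4 ≤ dot b b ∧ 4 ≤ dot d d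
  · have := hlow 0 4 0 4 ha k4.1 hc k4.2
    linarith
  by_cases k3 : 3 ≤ dot b b ∧ 3 ≤ dot d d
  · have := hlow 0 3 0 3 ha k3.1 hc k3.2
    nlinarith
  by_cases k2 : 2 ≤ dot b b ∧ 2 ≤ dot d d
  · by_cases hb6 : 6 ≤ dot b b
    · have := hlow 0 6 0 2 ha hb6 hc k2.2
      linarith
    by_cases hd6 : 6 ≤ dot d d
    · have := hlow 0 2 0 6 ha k2.1 hc hd6
      linarith
    have hb2 : dot b b = 2 := by omega
    have hd2 : dot d d = 2 := by omega
    by_cases hc0 : dot c c = 0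
    · obtain rfl := eq_zero_of_dot_self hc0
      simp at e1
      have := hlow 72 2 0 2 (by rw [e1, hb2] at hcs; linarith) k2.1 hc k2.2
      linarith
    · have hc1 : 1 ≤ dot c c := by omega
      have h := hlow 0 2 1 2 ha k2.1 hc1 k2.2
      have hg7 : g = 7 ∧ dot a a ≤ 5 ∧ dot c c ≤ 1 := by
        have hs := small_cases Z hP (by linarith)
        rw [hb2, hd2] at e0
        clear hQ hR hR30 hlow h hP p9 q9
        obtain ⟨rfl, ⟨rfl, rfl⟩ | ⟨rfl, rfl⟩⟩ := hs <;> omega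
      obtain ⟨rfl, hA, hC⟩ := hg7
      rw [hb2] at hcs
      rw [hd2] at hcd
      have h1 : dot a b ≤ 3 := by
        have h10 : dot a b ^ 2 ≤ 10 := by linarith
        clear * - h10
        nlinarith
      have h2 : dot c d ≤ 1 := by
        have h10 : dot c d ^ 2 ≤ 2 := by linarith
        clear * - h10
        nlinarith
      linarith
  -- the remaining residue class: both norms are `1` modulo `4`
  by_cases hd5 : 5 ≤ dot d d
  · have := hlow 0 1 0 5 ha hb1 hc hd5
    linarith
  have hd1' : dot d d = 1 := by omega
  by_cases hb9 : 9 ≤ dot b b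
  · have := hlow 0 9 0 1 ha hb9 hc hd1
    linarith
  by_cases hb5 : 5 ≤ dot b b
  · have hb5' : dot b b = 5 := by omega
    have h := hlow 0 5 0 1 ha hb5 hc hd1
    have key : dot c c = 0 ∧ dot a a ≤ 14 := by
      obtain ⟨rfl, rfl, rfl⟩ := small_cases' Z hP (by linarith)
      rw [hb5', hd1'] at e0
      omega
    obtain rfl := eq_zero_of_dot_self key.1
    simp at e1
    rw [e1, hb5'] at hcs
    linarith
  have hb1' : dot b b = 1 := by omega
  obtain ⟨T, hT, hTd⟩ := exists_perm_one hd1'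
  obtain ⟨e, he, hTb⟩ := unit_cong (b := T b) (by rw [hT.dot, hb1']) (by
    rw [← hTd]; exact hT.par _ _ hbd)
  obtain ⟨f0, f1, f2, f3⟩ := S.map hT
  have nA := sq_coord_le (T a)
  have nC := sq_coord_le (T c)
  rw [hT.dot] at nA nC
  have f2' := f2
  rw [hTb, hTd] at f1 f2 f3
  simp [dot] at f1 f2 f3
  have ee : e * e = 1 := by rcases he with rfl | rfl <;> rfl
  have ha0 : T a 0 = -(u * e * T c 0) := by linarith
  have hc0 : (g - u) * T c 0 = 12 := by
    rw [ha0] at f1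
    linear_combination f1 + u * T c 0 * ee
  have haa : T a 0 * T a 0 = u * u * (T c 0 * T c 0) := by
    rw [ha0]; linear_combination u * u * (T c 0 * T c 0) * ee
  have hcpos : 0 < T c 0 := by
    by_contra hcon
    clear * - hc0 hcon hvg huv
    nlinarith
  have hc2 : 2 ≤ dot c c := by
    by_contra hcon
    have hc1 : dot c c = 1 := by
      have : 1 ≤ T c 0 * T c 0 := by
        clear * - hcpos
        nlinarith
      omega
    have hc1' := hc1
    rw [← hT.dot] at hc1'
    simp only [dot] at hc1'
    have n1 := mul_self_nonneg (T c 1)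
    have n2 := mul_self_nonneg (T c 2)
    have n3 := mul_self_nonneg (T c 3)
    have n0 : 1 ≤ T c 0 * T c 0 := by
      clear * - hcpos
      nlinarith
    have z1 : T c 1 = 0 := mul_self_eq_zero.1 (by omega)
    have z2 : T c 2 = 0 := mul_self_eq_zero.1 (by omega)
    have z3 : T c 3 = 0 := mul_self_eq_zero.1 (by omega)
    have z0 : T c 0 = 1 := by
      have z0' : T c 0 * T c 0 = 1 := by linarith
      clear * - z0' hcpos
      nlinarith
    rw [z1, z2, z3, z0, ha0, z0] at f2
    rcases he with rfl | rfl <;> linarith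
  have hcc : ∀ k : ℤ, 0 ≤ k → k ≤ T c 0 → k * k ≤ dot c c := fun k hk h =>
    (mul_self_le_mul_self hk h).trans nC
  by_cases hc3 : 3 ≤ T c 0
  · have := hlow 0 1 9 1 ha hb1 (hcc 3 (by norm_num) hc3) hd1
    linarith
  by_cases hc22 : T c 0 = 2
  · rw [hc22] at hc0 haa nC
    have hgu : g = u + 6 := by linarith
    subst hgu
    have := hlow 4 1 4 1 (by nlinarith) hb1 (by linarith) hd1
    clear * - this hu huv hvg hP hv5
    nlinarith
  · have hc11 : T c 0 = 1 := by omega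
    rw [hc11] at hc0 haa
    have hgu : g = u + 12 := by linarith
    subst hgu
    have := hlow (u * u) 1 2 1 (by linarith) hb1 hc2 hd1
    clear * - this hu huv hvg hP hv5
    nlinarith

set_option maxHeartbeats 1000000 in
/-- The element `7 + (3 + r)²` when `√(vg)` is distinguished. -/
theorem no_sys_three_specR {u v g : ℤ} (Z : Sizes u v g) (hP : 14 ≤ u * v)
    {a b c d : Fin 4 → ℤ} (S : Sys u v g (64 + 4 * (u * v)) 12 0 0 a b c d)
    (had : ∀ i, (a i + d i) % 2 = 0) (hbc : ∀ i, (b i + c i) % 2 = 0) : False := by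
  have hb1 := three_b_ne_zero Z hP S
  have ha := dot_self_nonneg a
  have hc := dot_self_nonneg c
  have hd := dot_self_nonneg d
  have hm := dot_self_mod_four hbc
  have hm2 := dot_mod_two hbc
  have hm3 := dot_mod_two had
  have hm4 := dot_self_mod_four had
  have hcs := dot_cauchy a b
  have e0 := S.e0
  have e1 := S.e1
  have e2 := S.e2
  have e3 := S.e3
  have hlow := fun i j k l => S.lower Z i j k l
  obtain ⟨hu, huv, hvg, u4, v4, g4, p9, q9⟩ := id Z
  have hv5 : 5 ≤ v := by nlinarith
  have hQ : u * v + u ≤ u * g := by nlinarith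
  have hR : u * v + 2 * v ≤ v * g := by nlinarith
  have hR30 : 30 ≤ v * g := by nlinarith
  by_cases hc0 : dot c c = 0
  · obtain rfl := eq_zero_of_dot_self hc0
    simp at e0 e1 e2 e3 hbc
    exact no_three_vectors hP (Q := v * g) (by linarith) (fun i => by have := hbc i; omega) had
      e0 e1 e3
  have hc1 : 1 ≤ dot c c := by omega
  by_cases hd0 : dot d d = 0
  · -- then `b · c = 0`, so that the norms of `b` and `c` are even
    obtain rfl := eq_zero_of_dot_self hd0
    simp at e1 e2 e3
    have hbc0 : dot b c = 0 := e3.resolve_left (by omega)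
    rw [e1] at hcs
    by_cases hb4 : 4 ≤ dot b b ∧ 4 ≤ dot c c
    · by_cases h8 : 8 ≤ dot b b
      · have := hlow 0 8 4 0 ha h8 hb4.2 hd
        linarith
      · have := hlow 36 4 4 0 (by nlinarith) hb4.1 hb4.2 hd
        linarith
    · by_cases hb10 : 10 ≤ dot b b
      · have := hlow 0 10 2 0 ha hb10 (by omega) hd
        linarith
      by_cases hb6 : 6 ≤ dot b b
      · have := hlow 24 6 2 0 (by nlinarith) hb6 (by omega) hd
        linarith
      · have hb2 : dot b b = 2 := by omega
        have := hlow 72 2 2 0 (by rw [hb2] at hcs; linarith) (by omega) (by omega) hd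
        linarith
  have hd1 : 1 ≤ dot d d := by omega
  have hsum : ¬ (u * v + u * g + v * g ≤ 64) := by
    intro h
    obtain ⟨rfl, rfl, rfl⟩ := small_cases' Z hP (by linarith)
    linarith
  by_cases h33 : 3 ≤ dot b b ∧ 3 ≤ dot c c
  · have := hlow 0 3 3 1 ha h33.1 h33.2 hd1
    nlinarith
  by_cases h11 : dot b b % 4 = 1
  · by_cases hb5 : 5 ≤ dot b b
    · have := hlow 0 5 1 1 ha hb5 hc1 hd1
      exact hsum (by linarith)
    by_cases hc5 : 5 ≤ dot c c
    · have := hlow 0 1 5 1 ha hb1 hc5 hd1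
      nlinarith
    have hb1' : dot b b = 1 := by omega
    have hc1' : dot c c = 1 := by omega
    obtain ⟨T, hT, hTc⟩ := exists_perm_one hc1'
    obtain ⟨e, he, hTb⟩ := unit_cong (b := T b) (by rw [hT.dot, hb1']) (by
      rw [← hTc]; exact hT.par _ _ hbc)
    obtain ⟨f0, f1, f2, f3⟩ := S.map hT
    have nA := sq_coord_le (T a)
    rw [hT.dot] at nA
    rw [hTb, hTc] at f1 f2 f3
    simp [dot] at f1 f2 f3
    have ee : e * e = 1 := by rcases he with rfl | rfl <;> rfl
    have ha0 : T a 0 = -(v * e * T d 0) := by linarith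
    have hd00 : (g - v) * T d 0 = 12 := by
      rw [ha0] at f1
      linear_combination f1 + v * T d 0 * ee
    have haa : T a 0 * T a 0 = v * v * (T d 0 * T d 0) := by
      rw [ha0]; linear_combination v * v * (T d 0 * T d 0) * ee
    have hdne : T d 0 ≠ 0 := by
      intro h
      rw [h] at hd00
      linarith
    have hdp : 1 ≤ T d 0 * T d 0 := by
      have := mul_self_pos.2 hdne
      omega
    have hd2 : 2 ≤ dot d d := by
      by_contra hcon
      have hd1' : dot d d = 1 := by omega
      rw [← hT.dot] at hd1'
      simp only [dot] at hd1'
      have n1 := mul_self_nonneg (T d 1)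
      have n2 := mul_self_nonneg (T d 2)
      have n3 := mul_self_nonneg (T d 3)
      have z1 : T d 1 = 0 := mul_self_eq_zero.1 (by omega)
      have z2 : T d 2 = 0 := mul_self_eq_zero.1 (by omega)
      have z3 : T d 3 = 0 := mul_self_eq_zero.1 (by omega)
      have z0 : T d 0 * T d 0 = 1 := by omega
      rw [z1, z2, z3, ha0] at f3
      have : (u - v) * e = 0 := by linear_combination f3 + v * e * z0
      rcases he with rfl | rfl <;> linarith
    have := hlow (v * v) 1 1 2 (by nlinarith) hb1 hc1 hd2
    exact small_cases'' Z hP (by linarith)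
  · have h2b : 2 ≤ dot b b := by omega
    have h2c : 2 ≤ dot c c := by omega
    by_cases hd2 : 2 ≤ dot d d
    · have := hlow 0 2 2 2 ha h2b h2c hd2
      nlinarith
    · -- a contradiction modulo 2 in the coefficient of `t`
      have hbc2 : dot b c % 2 = 0 := by omega
      have : (u * dot b c) % 2 = 0 := by rw [Int.mul_emod, hbc2]; simp
      omega

theorem Data.sizes {K : IntermediateField ℚ ℝ} {u v g : ℤ} {r s t : ℝ} (D : Data K u v g r s t) :
    Sizes u v g := by
  have hm := mod_four_of_sq D
  have key : ∀ {x : ℤ}, Squarefree x → x % 9 ≠ 0 := by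
    intro x h h9
    have := Int.isUnit_iff.1 (h 3 (by omega))
    omega
  exact ⟨D.pos, D.uv, D.vg, hm.1, hm.2.1, hm.2.2.1, key D.F.sfp, key D.F.sfq⟩

/-- Unless all of `u, v, g` are congruent modulo `4`, or `uv ≡ 1 mod 4`, one of the three
quadratic subfields is distinguished. -/
theorem Data.spec_cases {K : IntermediateField ℚ ℝ} {u v g : ℤ} {r s t : ℝ}
    (D : Data K u v g r s t) (hP4 : u % 2 = 0 ∨ v % 4 ≠ u % 4) :
    SpecP u v g ∨ SpecP u g v ∨ SpecP v g u := by
  obtain ⟨m1, m2, m3, m4, m5, m6⟩ := mod_four_of_sq D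
  have key : ∀ x : ℤ, x % 4 ≠ 0 → (x % 4 = 1 ∧ x % 2 = 1) ∨ (x % 4 = 2 ∧ x % 2 = 0) ∨
      (x % 4 = 3 ∧ x % 2 = 1) := fun x _ => by omega
  have cu := key u m1
  have cv := key v m2
  have cg := key g m3
  clear D key m1 m2 m3
  unfold SpecP
  rcases cu with ⟨cu, du⟩ | ⟨cu, du⟩ | ⟨cu, du⟩ <;> rcases cv with ⟨cv, dv⟩ | ⟨cv, dv⟩ | ⟨cv, dv⟩ <;>
    rcases cg with ⟨cg, dg⟩ | ⟨cg, dg⟩ | ⟨cg, dg⟩ <;>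
    simp only [cu, cv, cg, du, dv, dg] at hP4 m4 m5 m6 ⊢ <;> revert hP4 m4 m5 m6 <;> decide

/-- The witness is `2² + 1² + 1² + 1² + (3 + r)²`. -/
theorem Data.big_of_not_one_mod_four {K : IntermediateField ℚ ℝ} {u v g : ℤ} {r s t : ℝ}
    (D : Data K u v g r s t) (hP : 14 ≤ u * v) (hP4 : u % 2 = 0 ∨ v % 4 ≠ u % 4) : Big K := by
  have hm := mod_four_of_sq D
  have h1 : (3 : ℝ) + r ∈ intRing K := add_mem (ofNat_mem _ 3) D.r_mem
  refine Big.of_five (ofNat_mem _ 2) (one_mem _) (one_mem _) (one_mem _) h1 fun h => ?_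
  have hrr := D.F.rr
  have hT : 4 * ((2 : ℝ) ^ 2 + 1 ^ 2 + 1 ^ 2 + 1 ^ 2 + (3 + r) ^ 2)
      = ((64 + 4 * (u * v) : ℤ) : ℝ) + 2 * (12 : ℤ) * r + 2 * (0 : ℤ) * s + 2 * (0 : ℤ) * t := by
    push_cast
    linear_combination 4 * hrr
  by_cases hSP : SpecP u v g
  · obtain ⟨a, b, c, d, S, h1, h2, h3⟩ := D.F.sysP D.span hSP h hT
    obtain ⟨k1, k2, k3⟩ := hSP
    exact no_sys_three_specP D.sizes hP (by omega) k1 k2 S h1 h2 (h3 (by omega))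
  by_cases hSQ : SpecP u g v
  · obtain ⟨a, b, c, d, S, h1, h2, h3⟩ := D.F.sysQ D.span hSQ h hT
    exact no_sys_three_specQ D.sizes hP S h1 h2
  have hSR : SpecP v g u := by
    rcases D.spec_cases hP4 with h | h | h
    · exact absurd h hSP
    · exact absurd h hSQ
    · exact h
  obtain ⟨a, b, c, d, S, h1, h2, h3⟩ := D.F.sysR D.span hSR h hT
  exact no_sys_three_specR D.sizes hP S h1 h2
/-! ### Small radicands: the impossible systems with one nonzero coordinate in `c` -/

theorem two_squares_ne_three (x y : ℤ) : x * x + y * y ≠ 3 := by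
  intro h
  have h1 := sq_mod_eight x
  have h2 := sq_mod_eight y
  rw [pow_two] at h1 h2
  omega

/-- After removing the place carrying `y`, two squares with sum `3` would remain. -/
theorem no_three_place {x₁ x₂ x₃ y₁ y₂ y₃ k : ℤ} (hy : y₁ * y₁ + y₂ * y₂ + y₃ * y₃ = 1)
    (hx : x₁ * x₁ + x₂ * x₂ + x₃ * x₃ = k * k + 3) (hxy : x₁ * y₁ + x₂ * y₂ + x₃ * y₃ = k) :
    False := by
  have n1 := mul_self_nonneg y₁
  have n2 := mul_self_nonneg y₂
  have n3 := mul_self_nonneg y₃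
  have key : ∀ {y : ℤ}, y * y ≠ 0 → 1 ≤ y * y := fun {y} h => by
    have := mul_self_nonneg y
    omega
  subst hxy
  by_cases z1 : y₁ * y₁ = 0
  · by_cases z2 : y₂ * y₂ = 0
    · have z3 : y₃ * y₃ = 1 := by omega
      rw [mul_self_eq_zero] at z1 z2
      subst z1 z2
      exact two_squares_ne_three x₁ x₂ (by linear_combination hx + x₃ * x₃ * z3)
    · have := key z2
      have z2' : y₂ * y₂ = 1 := by omega
      have z3 : y₃ * y₃ = 0 := by omega
      rw [mul_self_eq_zero] at z1 z3
      subst z1 z3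
      exact two_squares_ne_three x₁ x₃ (by linear_combination hx + x₂ * x₂ * z2')
  · have := key z1
    have z1' : y₁ * y₁ = 1 := by omega
    have z2 : y₂ * y₂ = 0 := by omega
    have z3 : y₃ * y₃ = 0 := by omega
    rw [mul_self_eq_zero] at z2 z3
    subst z2 z3
    exact two_squares_ne_three x₂ x₃ (by linear_combination hx + x₁ * x₁ * z1')

theorem four_le_of_even {b : Fin 4 → ℤ} (hb : ∀ i, b i % 2 = 0) (h : dot b b ≠ 0) :
    4 ≤ dot b b ∧ dot b b % 4 = 0 := by
  obtain ⟨b', wb⟩ := exists_half hb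
  have := dot_self_nonneg b'
  simp only [dot_two_left wb, dot_two_right wb] at h ⊢
  omega

theorem dot_even_mod_four {a b : Fin 4 → ℤ} (ha : ∀ i, a i % 2 = 0) (hb : ∀ i, b i % 2 = 0) :
    dot a b % 4 = 0 := by
  obtain ⟨a', wa⟩ := exists_half ha
  obtain ⟨b', wb⟩ := exists_half hb
  simp only [dot_two_left wa, dot_two_right wb]
  omega

theorem dot_self_pos_of_ne {a b : Fin 4 → ℤ} (h : dot a b ≠ 0) : dot b b ≠ 0 := by
  intro h0
  rw [eq_zero_of_dot_self h0] at h
  simp at h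

theorem even_half {x : ℤ} (h : x % 2 = 0) : ∃ y, x = 2 * y := ⟨x / 2, by omega⟩

/-- The element `((1 - s) / 2)² + 3 + (1 + r)²`. -/
theorem no_sys_A {v g : ℤ} (hv : 6 ≤ v) (hg : 13 ≤ g) {a b c d : Fin 4 → ℤ}
    (S : Sys 1 v g (17 + 4 * v + g) 4 (-1) 0 a b c d) (hac : ∀ i, (a i + c i) % 2 = 0)
    (hbd : ∀ i, (b i + d i) % 2 = 0) : False := by
  obtain ⟨e0, e1, e2, e3⟩ := id S
  have ha := dot_self_nonneg a
  have hb := dot_self_nonneg b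
  have hc := dot_self_nonneg c
  have hd := dot_self_nonneg d
  have hvb := mul_nonneg (show (0 : ℤ) ≤ v by linarith) hb
  have hgc := mul_nonneg (show (0 : ℤ) ≤ g by linarith) hc
  have hd0 : dot d d = 0 := by
    by_contra hne
    have h1 : v * g * 1 ≤ v * g * dot d d :=
      mul_le_mul_of_nonneg_left (by omega) (by positivity)
    nlinarith
  obtain rfl := eq_zero_of_dot_self hd0
  simp at e0 e1 e2 e3 hbd
  have hb4 := four_le_of_even (b := b) (fun i => by have := hbd i; omega)
    (dot_self_pos_of_ne (a := a) (by omega))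
  have hodd := dot_mod_two (a := c) (b := a) (fun i => by have := hac i; omega)
  rw [dot_comm, e2] at hodd
  have h4 := mul_le_mul_of_nonneg_left hb4.1 (show (0 : ℤ) ≤ v by linarith)
  have hc1 : dot c c = 1 := by
    by_contra hne
    have := mul_le_mul_of_nonneg_left (show 3 ≤ dot c c by omega) (show (0 : ℤ) ≤ g by linarith)
    linarith
  obtain ⟨T, hT, hTc⟩ := exists_perm_one hc1
  have p := hT.par _ _ hac
  have pb := hT.par b 0 (fun i => by simpa using hbd i)
  obtain ⟨f0, f1, f2, f3⟩ := S.map hT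
  rw [hTc] at f0 f2 f3 p
  rw [hT.zero] at f0 f1 f2 f3 pb
  simp [dot] at f0 f1 f2 f3
  have p1 := p 1
  have p2 := p 2
  have p3 := p 3
  have b1 := pb 1
  have b2 := pb 2
  have b3 := pb 3
  simp at p1 p2 p3 b1 b2 b3
  obtain ⟨x₁, hx₁⟩ := even_half (show T a 1 % 2 = 0 by omega)
  obtain ⟨x₂, hx₂⟩ := even_half (show T a 2 % 2 = 0 by omega)
  obtain ⟨x₃, hx₃⟩ := even_half (show T a 3 % 2 = 0 by omega)
  obtain ⟨y₁, hy₁⟩ := even_half (show T b 1 % 2 = 0 by omega)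
  obtain ⟨y₂, hy₂⟩ := even_half (show T b 2 % 2 = 0 by omega)
  obtain ⟨y₃, hy₃⟩ := even_half (show T b 3 % 2 = 0 by omega)
  rw [f2, f3, hx₁, hx₂, hx₃, hy₁, hy₂, hy₃] at f0
  rw [f2, f3, hx₁, hx₂, hx₃, hy₁, hy₂, hy₃] at f1
  have g0 : x₁ * x₁ + x₂ * x₂ + x₃ * x₃ + v * (y₁ * y₁ + y₂ * y₂ + y₃ * y₃) = 4 + v := by
    linarith
  have g1 : x₁ * y₁ + x₂ * y₂ + x₃ * y₃ = 1 := by linarith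
  have n1 := mul_self_nonneg x₁
  have n2 := mul_self_nonneg x₂
  have n3 := mul_self_nonneg x₃
  have hy : y₁ * y₁ + y₂ * y₂ + y₃ * y₃ = 1 := by
    have m1 := mul_self_nonneg y₁
    have m2 := mul_self_nonneg y₂
    have m3 := mul_self_nonneg y₃
    by_contra hne
    by_cases h0 : y₁ * y₁ + y₂ * y₂ + y₃ * y₃ = 0
    · rw [mul_self_eq_zero.1 (show y₁ * y₁ = 0 by linarith),
        mul_self_eq_zero.1 (show y₂ * y₂ = 0 by linarith),
        mul_self_eq_zero.1 (show y₃ * y₃ = 0 by linarith)] at g1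
      simp at g1
    · have := mul_le_mul_of_nonneg_left (show 2 ≤ y₁ * y₁ + y₂ * y₂ + y₃ * y₃ by omega)
        (show (0 : ℤ) ≤ v by linarith)
      linarith
  rw [hy] at g0
  exact no_three_place hy (k := 1) (by linarith) g1
/-- The common end of several cases: with `c` a unit vector, the remaining three coordinates of
`a` and `b` are not compatible. -/
theorem no_end_one {v k : ℤ} (hv : 5 ≤ v) {a b c : Fin 4 → ℤ} (hc : dot c c = 1)
    (hac : dot a c = k) (hbc : dot b c = 0) (hab : dot a b = 1)
    (h0 : dot a a + v * dot b b = k * k + 4 + v) : False := by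
  obtain ⟨T, hT, hTc⟩ := exists_perm_one hc
  rw [← hT.dot, hTc] at hac hbc
  have hb1 : dot b b = 1 := by
    have hb := dot_self_nonneg b
    have hne := dot_self_pos_of_ne (a := a) (b := b) (by omega)
    have hk : k * k ≤ dot a a := by
      have := sq_coord_le (T a)
      simp [dot] at hac
      rwa [hac, hT.dot] at this
    by_contra hne1
    have := mul_le_mul_of_nonneg_left (show 2 ≤ dot b b by omega) (show (0 : ℤ) ≤ v by linarith)
    linarith
  rw [hb1] at h0
  rw [← hT.dot] at h0 hab hb1
  simp [dot] at hac hbc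
  simp only [dot, hac, hbc] at h0 hab hb1
  exact no_three_place (k := 1) (x₁ := T a 1) (x₂ := T a 2) (x₃ := T a 3) (y₁ := T b 1)
    (y₂ := T b 2) (y₃ := T b 3) (by linarith) (by linarith) (by linarith)

theorem no_end_zero {v k : ℤ} (hv : 8 ≤ v) {a b c : Fin 4 → ℤ} (hc : dot c c = 1)
    (hac : dot a c = k) (h0 : dot a a + v * dot b b = k * k + 7) : False := by
  obtain ⟨T, hT, hTc⟩ := exists_perm_one hc
  rw [← hT.dot, hTc] at hac
  simp [dot] at hac
  have hb1 : dot b b = 0 := by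
    have hb := dot_self_nonneg b
    have hk : k * k ≤ dot a a := by
      have := sq_coord_le (T a)
      rwa [hac, hT.dot] at this
    by_contra hne1
    have := mul_le_mul_of_nonneg_left (show 1 ≤ dot b b by omega) (show (0 : ℤ) ≤ v by linarith)
    linarith
  rw [hb1, ← hT.dot] at h0
  simp only [dot, hac] at h0
  exact three_squares_ne_seven (T a 1) (T a 2) (T a 3) (by linarith)

/-- The element `7 + (1 + s)²`, with `r` or `s` distinguished. -/
theorem no_sys_D {v g : ℤ} (hv : 10 ≤ v) (hg : 11 ≤ g) {a b c d : Fin 4 → ℤ}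
    (S : Sys 1 v g (32 + 4 * g) 0 4 0 a b c d) (ha2 : ∀ i, a i % 2 = 0)
    (hd2 : dot d d = 0 → ∀ i, b i % 2 = 0 ∧ c i % 2 = 0) : False := by
  obtain ⟨e0, e1, e2, e3⟩ := id S
  have ha := dot_self_nonneg a
  have hb := dot_self_nonneg b
  have hc := dot_self_nonneg c
  have hd := dot_self_nonneg d
  have hvb := mul_nonneg (show (0 : ℤ) ≤ v by linarith) hb
  have hgc := mul_nonneg (show (0 : ℤ) ≤ g by linarith) hc
  have hd0 : dot d d = 0 := by
    by_contra hne
    have h1 : v * g * 1 ≤ v * g * dot d d :=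
      mul_le_mul_of_nonneg_left (by omega) (by positivity)
    nlinarith
  have hb2 := fun i => (hd2 hd0 i).1
  have hc2 := fun i => (hd2 hd0 i).2
  obtain rfl := eq_zero_of_dot_self hd0
  simp at e0 e1 e2 e3
  have hc4 := four_le_of_even hc2 (dot_self_pos_of_ne (a := a) (by omega))
  have hc1 : dot c c = 4 := by
    by_contra hne
    have := mul_le_mul_of_nonneg_left (show 8 ≤ dot c c by omega) (show (0 : ℤ) ≤ g by linarith)
    linarith
  rw [hc1] at e0
  obtain ⟨a', wa⟩ := exists_half ha2
  obtain ⟨b', wb⟩ := exists_half hb2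
  obtain ⟨c', wc⟩ := exists_half hc2
  simp only [dot_two_left wa, dot_two_right wa, dot_two_left wb, dot_two_right wb,
    dot_two_left wc, dot_two_right wc] at e0 e1 e2 e3 hc1
  exact no_end_zero (v := v) (k := 1) (a := a') (b := b') (c := c') (by linarith) (by linarith)
    (by linarith) (by linarith)

/-- The element `(1 ± s)² + 3 + (1 + r)²`. -/
theorem no_sys_E {v g k : ℤ} (hv : 6 ≤ v) (hg : 7 ≤ g) (hk : k = 1 ∨ k = -1)
    {a b c d : Fin 4 → ℤ}
    (S : Sys 1 v g (20 + 4 * v + 4 * g) 4 (4 * k) 0 a b c d) (ha2 : ∀ i, a i % 2 = 0)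
    (hd0 : dot d d = 0) (hd2 : ∀ i, b i % 2 = 0 ∧ c i % 2 = 0) : False := by
  obtain ⟨e0, e1, e2, e3⟩ := id S
  have ha := dot_self_nonneg a
  have hb2 := fun i => (hd2 i).1
  have hc2 := fun i => (hd2 i).2
  obtain rfl := eq_zero_of_dot_self hd0
  simp at e0 e1 e2 e3
  have hb4 := four_le_of_even hb2 (dot_self_pos_of_ne (a := a) (by omega))
  have hc4 := four_le_of_even hc2 (dot_self_pos_of_ne (a := a) (by omega))
  have hvb := mul_le_mul_of_nonneg_left hb4.1 (show (0 : ℤ) ≤ v by linarith)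
  have hc1 : dot c c = 4 := by
    by_contra hne
    have := mul_le_mul_of_nonneg_left (show 8 ≤ dot c c by omega) (show (0 : ℤ) ≤ g by linarith)
    linarith
  rw [hc1] at e0
  obtain ⟨a', wa⟩ := exists_half ha2
  obtain ⟨b', wb⟩ := exists_half hb2
  obtain ⟨c', wc⟩ := exists_half hc2
  simp only [dot_two_left wa, dot_two_right wa, dot_two_left wb, dot_two_right wb,
    dot_two_left wc, dot_two_right wc] at e0 e1 e2 e3 hc1
  have kk : k * k = 1 := by rcases hk with rfl | rfl <;> rfl
  exact no_end_one (v := v) (k := k) (a := a') (b := b') (c := c') (by linarith) (by linarith)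
    (by linarith) (by linarith) (by linarith) (by rw [kk]; linarith)

/-- `v = 7`, `g ≡ 2 mod 4`. -/
theorem no_sys_E₂ {g : ℤ} (hg : 10 ≤ g) {a b c d : Fin 4 → ℤ}
    (S : Sys 1 7 g (48 + 4 * g) 4 4 0 a b c d) (ha2 : ∀ i, a i % 2 = 0)
    (hb2 : ∀ i, b i % 2 = 0) (hcd : ∀ i, (c i + d i) % 2 = 0) : False := by
  have hm := dot_self_mod_four hcd
  have hm2 := dot_mod_two hcd
  obtain ⟨e0, e1, e2, e3⟩ := id S
  have ha := dot_self_nonneg a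
  have hb := dot_self_nonneg b
  have hc := dot_self_nonneg c
  have hd := dot_self_nonneg d
  have h4 := dot_even_mod_four ha2 hb2
  have hb4 : 4 ≤ dot b b := by
    refine (four_le_of_even hb2 (dot_self_pos_of_ne (a := a) fun h => ?_)).1
    rw [h] at e1
    have hdvd : g ∣ 4 := ⟨dot c d, by linarith⟩
    have := Int.le_of_dvd (by norm_num) hdvd
    linarith
  have hd0 : dot d d = 0 := by
    by_contra hne
    by_cases hc0 : dot c c = 0
    · have := mul_le_mul_of_nonneg_left (show 4 ≤ dot d d by omega) (show (0 : ℤ) ≤ g by linarith)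
      rw [hc0] at e0
      linarith
    · have := mul_le_mul_of_nonneg_left (show 1 ≤ dot d d by omega) (show (0 : ℤ) ≤ g by linarith)
      have := mul_le_mul_of_nonneg_left (show 1 ≤ dot c c by omega) (show (0 : ℤ) ≤ g by linarith)
      linarith
  have hd00 := eq_zero_of_dot_self hd0
  refine no_sys_E (v := 7) (g := g) (c := c) (k := 1) (by norm_num) (by linarith) (Or.inl rfl) ?_ ha2 hd0
    (fun i => ⟨hb2 i, ?_⟩)
  · convert S using 1 <;> ring
  · have := hcd i
    rw [hd00] at this
    simpa using this

/-- `v = 6`, `g ≡ 3 mod 4`. -/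
theorem no_sys_E₃ {g : ℤ} (hg : 7 ≤ g) {a b c d : Fin 4 → ℤ}
    (S : Sys 1 6 g (44 + 4 * g) 4 (-4) 0 a b c d) (ha2 : ∀ i, a i % 2 = 0)
    (hac : ∀ i, (a i + c i) % 2 = 0) (hbd : ∀ i, (b i + d i) % 2 = 0) : False := by
  have hm := dot_self_mod_four hbd
  have hc2 : ∀ i, c i % 2 = 0 := fun i => by have := hac i; have := ha2 i; omega
  obtain ⟨e0, e1, e2, e3⟩ := id S
  have ha := dot_self_nonneg a
  have hb := dot_self_nonneg b
  have hc := dot_self_nonneg c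
  have hd := dot_self_nonneg d
  have hc4 : 4 ≤ dot c c := by
    refine (four_le_of_even hc2 (dot_self_pos_of_ne (a := a) fun h => ?_)).1
    rw [h] at e2
    omega
  have hgc := mul_le_mul_of_nonneg_left hc4 (show (0 : ℤ) ≤ g by linarith)
  have hd0 : dot d d = 0 := by
    by_contra hne
    have := mul_le_mul_of_nonneg_left (show 1 ≤ dot d d by omega) (show (0 : ℤ) ≤ g by linarith)
    have hb0 : dot b b < 1 := by linarith
    have := mul_le_mul_of_nonneg_left (show 4 ≤ dot d d by omega) (show (0 : ℤ) ≤ g by linarith)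
    linarith
  have hd00 := eq_zero_of_dot_self hd0
  refine no_sys_E (v := 6) (g := g) (b := b) (k := -1) (by norm_num) (by linarith) (Or.inr rfl) ?_ ha2 hd0
    (fun i => ⟨?_, hc2 i⟩)
  · convert S using 1 <;> ring
  · have := hbd i
    rw [hd00] at this
    simpa using this

/-- With `c` a unit vector and `b` of norm `5`, two even squares with sum `12` would remain. -/
theorem no_end_five {k e : ℤ} {a b c : Fin 4 → ℤ} (hc : dot c c = 1) (hac : dot a c = 0)
    (he : e * e = 1)
    (hbc : dot b c = e) (hab : dot a b = 4 * k) (hb : dot b b = 5) (h0 : dot a a = 4 * (k * k) + 12)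
    (ha2 : ∀ i, a i % 2 = 0) (hbc2 : ∀ i, (b i + c i) % 2 = 0) : False := by
  obtain ⟨T, hT, hTc⟩ := exists_perm_one hc
  have p := hT.par _ _ hbc2
  rw [hTc] at p
  rw [← hT.dot, hTc] at hac hbc
  rw [← hT.dot] at h0 hab hb
  have b1 := p 1
  have b2 := p 2
  have b3 := p 3
  have pa := hT.even _ ha2
  simp [dot] at hac hbc b1 b2 b3
  obtain ⟨x₁, hx₁⟩ := even_half (pa 1)
  obtain ⟨x₂, hx₂⟩ := even_half (pa 2)
  obtain ⟨x₃, hx₃⟩ := even_half (pa 3)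
  obtain ⟨y₁, hy₁⟩ := even_half (show T b 1 % 2 = 0 by omega)
  obtain ⟨y₂, hy₂⟩ := even_half (show T b 2 % 2 = 0 by omega)
  obtain ⟨y₃, hy₃⟩ := even_half (show T b 3 % 2 = 0 by omega)
  simp only [dot, hac, hbc, he, hx₁, hx₂, hx₃, hy₁, hy₂, hy₃] at h0 hab hb
  exact no_three_place (k := k) (x₁ := x₁) (x₂ := x₂) (x₃ := x₃) (y₁ := y₁)
    (y₂ := y₂) (y₃ := y₃) (by linarith) (by linarith) (by linarith)

/-- The element `((r + s) / 2)² + 3 + (2 - r)²` for `v = 7`. -/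
theorem no_sys_E₇ {g : ℤ} (hg : 11 ≤ g) {a b c d : Fin 4 → ℤ}
    (S : Sys 1 7 g (63 + g) (-8) 0 1 a b c d) (had : ∀ i, (a i + d i) % 2 = 0)
    (hbc : ∀ i, (b i + c i) % 2 = 0) : False := by
  have hm := dot_self_mod_four hbc
  have hm2 := dot_mod_two hbc
  obtain ⟨e0, e1, e2, e3⟩ := id S
  have ha := dot_self_nonneg a
  have hb := dot_self_nonneg b
  have hc := dot_self_nonneg c
  have hd := dot_self_nonneg d
  have hgc := mul_nonneg (show (0 : ℤ) ≤ g by linarith) hc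
  have hd0 : dot d d = 0 := by
    by_contra hne
    have := mul_le_mul_of_nonneg_left (show 1 ≤ dot d d by omega) (show (0 : ℤ) ≤ g by linarith)
    linarith
  obtain rfl := eq_zero_of_dot_self hd0
  have ha2 : ∀ i, a i % 2 = 0 := fun i => by simpa using had i
  simp at e0 e1 e2 e3
  have hcs := dot_cauchy a b
  rw [e1] at hcs
  have hb2 : 2 ≤ dot b b := by
    by_contra hcon
    have hb1 : dot b b = 1 := by omega
    have := mul_le_mul_of_nonneg_left (show 1 ≤ dot c c by omega) (show (0 : ℤ) ≤ g by linarith)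
    rw [hb1] at hcs
    linarith
  have hc1 : dot c c = 1 := by
    by_contra hne
    have h3 : 3 ≤ dot c c := by omega
    have h3b : 3 ≤ dot b b := by omega
    have := mul_le_mul_of_nonneg_left h3 (show (0 : ℤ) ≤ g by linarith)
    by_cases h5 : 5 ≤ dot c c
    · have := mul_le_mul_of_nonneg_left h5 (show (0 : ℤ) ≤ g by linarith)
      linarith
    · have hb5 : dot b b ≤ 5 := by linarith
      have hb3 : dot b b = 3 := by omega
      rw [hb3] at hcs e0
      linarith
  rw [hc1] at e0
  have hb5 : dot b b = 5 := by
    by_contra hne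
    have : dot b b = 9 := by omega
    rw [this] at hcs e0
    linarith
  exact no_end_five (k := -2) (e := 1) hc1 e2 rfl e3 (by linarith) hb5 (by linarith) ha2 hbc

/-- The element `7 + ((r + s) / 2)²` for `v = 11`. -/
theorem no_sys_B₁₁ {g : ℤ} (hg : 15 ≤ g) {a b c d : Fin 4 → ℤ}
    (S : Sys 1 11 g (39 + g) 0 0 1 a b c d) (had : ∀ i, (a i + d i) % 2 = 0)
    (hbc : ∀ i, (b i + c i) % 2 = 0) : False := by
  have hm := dot_self_mod_four hbc
  have hm2 := dot_mod_two hbc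
  obtain ⟨e0, e1, e2, e3⟩ := id S
  have ha := dot_self_nonneg a
  have hb := dot_self_nonneg b
  have hc := dot_self_nonneg c
  have hd := dot_self_nonneg d
  have hgc := mul_nonneg (show (0 : ℤ) ≤ g by linarith) hc
  have hd0 : dot d d = 0 := by
    by_contra hne
    have := mul_le_mul_of_nonneg_left (show 1 ≤ dot d d by omega) (show (0 : ℤ) ≤ g by linarith)
    linarith
  obtain rfl := eq_zero_of_dot_self hd0
  have ha2 : ∀ i, a i % 2 = 0 := fun i => by simpa using had i
  simp at e0 e1 e2 e3
  have hc1 : dot c c = 1 := by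
    by_contra hne
    have := mul_le_mul_of_nonneg_left (show 3 ≤ dot c c by omega) (show (0 : ℤ) ≤ g by linarith)
    have : dot b b ≤ 0 := by omega
    omega
  rw [hc1] at e0
  have hb1 : dot b b = 1 := by omega
  obtain ⟨T, hT, hTc⟩ := exists_perm_one hc1
  rw [← hT.dot, hTc] at e2
  have pa := hT.even _ ha2
  simp [dot] at e2
  rw [hb1, ← hT.dot] at e0
  simp only [dot, e2] at e0
  exact three_even_squares_ne (pa 1) (pa 2) (pa 3) (by linarith)

/-- The element `7 + ((r + s) / 2)²` for `u = 2`, `v = 5`. -/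
theorem no_sys_B₁₀ {g : ℤ} (hg : 7 ≤ g) {a b c d : Fin 4 → ℤ}
    (S : Sys 2 5 g (38 + 2 * g) 0 0 2 a b c d) (had : ∀ i, (a i + d i) % 2 = 0)
    (hbc : ∀ i, (b i + c i) % 2 = 0) : False := by
  have hm := dot_self_mod_four hbc
  have hm2 := dot_mod_two hbc
  have hmd := dot_self_mod_four had
  have hmd2 := dot_mod_two had
  obtain ⟨e0, e1, e2, e3⟩ := id S
  have ha := dot_self_nonneg a
  have hb := dot_self_nonneg b
  have hc := dot_self_nonneg c
  have hd := dot_self_nonneg d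
  have hgc := mul_nonneg (show (0 : ℤ) ≤ g by linarith) hc
  have hd0 : dot d d = 0 := by
    by_contra hne
    have h1 := mul_le_mul_of_nonneg_left (show 1 ≤ dot d d by omega) (show (0 : ℤ) ≤ g by linarith)
    have hc0 : dot c c = 0 := by
      by_contra hne
      have := mul_le_mul_of_nonneg_left (show 1 ≤ dot c c by omega)
        (show (0 : ℤ) ≤ g by linarith)
      have : dot b b < 1 := by linarith
      have : 4 ≤ dot c c := by omega
      have := mul_le_mul_of_nonneg_left this (show (0 : ℤ) ≤ g by linarith)
      linarith
    have hd1 : dot d d = 1 := by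
      by_contra hne
      have := mul_le_mul_of_nonneg_left (show 2 ≤ dot d d by omega) (show (0 : ℤ) ≤ g by linarith)
      linarith
    rw [eq_zero_of_dot_self hc0] at e3
    simp at e3
    omega
  obtain rfl := eq_zero_of_dot_self hd0
  have ha2 : ∀ i, a i % 2 = 0 := fun i => by simpa using had i
  simp at e0 e1 e2 e3
  have hc1 : dot c c = 1 := by
    by_contra hne
    have := mul_le_mul_of_nonneg_left (show 3 ≤ dot c c by omega) (show (0 : ℤ) ≤ g by linarith)
    have : dot b b < 2 := by linarith
    have := mul_le_mul_of_nonneg_left (show 5 ≤ dot c c by omega) (show (0 : ℤ) ≤ g by linarith)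
    have : 1 ≤ dot b b := by omega
    linarith
  rw [hc1] at e0
  have hb1 : dot b b = 1 := by omega
  obtain ⟨T, hT, hTc⟩ := exists_perm_one hc1
  rw [← hT.dot, hTc] at e2
  have pa := hT.even _ ha2
  simp [dot] at e2
  rw [hb1, ← hT.dot] at e0
  simp only [dot, e2] at e0
  exact three_even_squares_ne (pa 1) (pa 2) (pa 3) (by linarith)
theorem no_end_unit {a b c : Fin 4 → ℤ} (hc : dot c c = 1) (hb : dot b b = 1)
    (hac : dot a c = 0) (hbc2 : ∀ i, (b i + c i) % 2 = 0) : dot a b = 0 := by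
  obtain ⟨T, hT, hTc⟩ := exists_perm_one hc
  obtain ⟨e, -, hTb⟩ := unit_cong (b := T b) (by rw [hT.dot, hb]) (by
    rw [← hTc]; exact hT.par _ _ hbc2)
  rw [← hT.dot, hTc] at hac
  rw [← hT.dot, hTb]
  simp [dot] at hac ⊢
  exact Or.inl hac

/-- The element `((r - s) / 2)² + 3 + (1 + r)²` for `u = 2`, `v = 3`, `g ≡ 3 mod 4`. -/
theorem no_sys_F₃ {g : ℤ} (hg : 7 ≤ g) (hg3 : g % 4 = 3) {a b c d : Fin 4 → ℤ}
    (S : Sys 2 3 g (46 + 2 * g) 4 0 (-2) a b c d) (had : ∀ i, (a i + d i) % 2 = 0)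
    (hbc : ∀ i, (b i + c i) % 2 = 0) : False := by
  have hm := dot_self_mod_four hbc
  have hm2 := dot_mod_two hbc
  have hmd := dot_self_mod_four had
  have hmd2 := dot_mod_two had
  obtain ⟨e0, e1, e2, e3⟩ := id S
  have ha := dot_self_nonneg a
  have hb := dot_self_nonneg b
  have hc := dot_self_nonneg c
  have hd := dot_self_nonneg d
  have hg0 : (0 : ℤ) ≤ g := by linarith
  have hgc := mul_nonneg hg0 hc
  have hd0 : dot d d = 0 := by
    by_contra hne
    have h1 := mul_le_mul_of_nonneg_left (show 1 ≤ dot d d by omega) hg0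
    have hd3 : dot d d < 3 := by
      by_contra hcon
      have := mul_le_mul_of_nonneg_left (show 3 ≤ dot d d by omega) hg0
      linarith
    by_cases hc0 : dot c c = 0
    · obtain rfl := eq_zero_of_dot_self hc0
      simp at e0 e1 e2 e3
      have hd2 : dot d d = 2 := by omega
      have hb4 := four_le_of_even (b := b) (fun i => by simpa using hbc i)
        (dot_self_pos_of_ne (a := a) (by omega))
      rw [hd2] at e0
      linarith
    · have hc1 := mul_le_mul_of_nonneg_left (show 1 ≤ dot c c by omega) hg0
      have hc4 : dot c c < 4 := by
        by_contra hcon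
        have := mul_le_mul_of_nonneg_left (show 4 ≤ dot c c by omega) hg0
        linarith
      have hd1 : dot d d = 1 := by
        by_contra hne
        have hd2 : dot d d = 2 := by omega
        rw [hd2] at e0
        have : dot b b < 1 := by linarith
        omega
      rw [hd1] at e0
      have hc1 : dot c c = 1 := by
        by_contra hne
        have := mul_le_mul_of_nonneg_left (show 2 ≤ dot c c by omega) hg0
        have : dot b b < 2 := by linarith
        omega
      rw [hc1] at e0
      omega
  obtain rfl := eq_zero_of_dot_self hd0
  have ha2 : ∀ i, a i % 2 = 0 := fun i => by simpa using had i
  simp at e0 e1 e2 e3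
  have hbc1 : dot b c = -1 := by linarith
  have hcs := dot_cauchy a b
  rw [e1] at hcs
  have hc1 : dot c c = 1 := by
    by_contra hne
    have := mul_le_mul_of_nonneg_left (show 3 ≤ dot c c by omega) hg0
    have hc5 : dot c c < 5 := by
      by_contra hcon
      have := mul_le_mul_of_nonneg_left (show 5 ≤ dot c c by omega) hg0
      have : 1 ≤ dot b b := by omega
      linarith
    have hb3 : dot b b = 3 := by
      have : dot b b < 4 := by linarith
      omega
    rw [hb3] at e0 hcs
    linarith
  rw [hc1] at e0
  have hb5 : dot b b = 5 := by
    by_contra hne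
    have hb1 : dot b b = 1 := by omega
    have := no_end_unit hc1 hb1 e2 hbc
    omega
  exact no_end_five (k := 1) (e := -1) hc1 e2 rfl hbc1 (by linarith) hb5 (by linarith) ha2 hbc

/-- The element `((r - s) / 2)² + 3 + (2 + r)²` for `u = 2`, `v = 3`, `g ≡ 1 mod 4`. -/
theorem no_sys_F₁ {g : ℤ} (hg : 5 ≤ g) {a b c d : Fin 4 → ℤ}
    (S : Sys 2 3 g (58 + 2 * g) 8 0 (-2) a b c d) (had : ∀ i, (a i + d i) % 2 = 0)
    (hbc : ∀ i, (b i + c i) % 2 = 0) (ha2 : ∀ i, a i % 2 = 0) : False := by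
  have hm := dot_self_mod_four hbc
  have hm2 := dot_mod_two hbc
  obtain ⟨e0, e1, e2, e3⟩ := id S
  have ha := dot_self_nonneg a
  have hb := dot_self_nonneg b
  have hc := dot_self_nonneg c
  have hd := dot_self_nonneg d
  have hg0 : (0 : ℤ) ≤ g := by linarith
  have hgc := mul_nonneg hg0 hc
  have hd2 : ∀ i, d i % 2 = 0 := fun i => by have := had i; have := ha2 i; omega
  have hd0 : dot d d = 0 := by
    by_contra hne
    have h1 := mul_le_mul_of_nonneg_left (four_le_of_even hd2 hne).1 hg0
    by_cases hc0 : dot c c = 0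
    · obtain rfl := eq_zero_of_dot_self hc0
      simp at e0 e1 e2 e3
      have hb4 := four_le_of_even (b := b) (fun i => by simpa using hbc i)
        (dot_self_pos_of_ne (a := a) (by omega))
      linarith
    · have hc1 := mul_le_mul_of_nonneg_left (show 1 ≤ dot c c by omega) hg0
      linarith
  obtain rfl := eq_zero_of_dot_self hd0
  simp at e0 e1 e2 e3
  have hbc1 : dot b c = -1 := by linarith
  have hcs := dot_cauchy a b
  rw [e1] at hcs
  have hc1 : dot c c = 1 := by
    by_contra hne
    have := mul_le_mul_of_nonneg_left (show 3 ≤ dot c c by omega) hg0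
    have hc7 : dot c c < 7 := by
      by_contra hcon
      have := mul_le_mul_of_nonneg_left (show 7 ≤ dot c c by omega) hg0
      linarith
    by_cases hc5 : 5 ≤ dot c c
    · have := mul_le_mul_of_nonneg_left hc5 hg0
      have hb1 : dot b b = 1 := by
        have : dot b b < 4 := by linarith
        omega
      rw [hb1] at e0 hcs
      linarith
    have hb3 : dot b b = 3 := by
      have : dot b b < 7 := by linarith
      omega
    rw [hb3] at e0 hcs
    linarith
  rw [hc1] at e0
  have hb5 : dot b b = 5 := by
    by_contra hne
    have hb1 : dot b b = 1 := by
      by_contra hne1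
      have hb9 : dot b b = 9 := by omega
      rw [hb9] at e0 hcs
      linarith
    have := no_end_unit hc1 hb1 e2 hbc
    omega
  exact no_end_five (k := 2) (e := -1) hc1 e2 rfl hbc1 (by linarith) hb5 (by linarith) ha2 hbc

/-! ### The radicand `13` -/

theorem same_parity {y : Fin 4 → ℤ} (h : dot y y % 4 = 0) (i j : Fin 4) : y i % 2 = y j % 2 := by
  have key : ∀ x : ℤ, x % 2 = 0 ∧ x * x % 4 = 0 ∨ x % 2 = 1 ∧ x * x % 4 = 1 := by
    intro x
    have h : x % 4 = 0 ∨ x % 4 = 1 ∨ x % 4 = 2 ∨ x % 4 = 3 := by omega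
    rw [Int.mul_emod]
    rcases h with h | h | h | h <;> rw [h] <;> omega
  have h0 := key (y 0)
  have h1 := key (y 1)
  have h2 := key (y 2)
  have h3 := key (y 3)
  simp only [dot] at h
  have e1 : y 1 % 2 = y 0 % 2 := by omega
  have e2 : y 2 % 2 = y 0 % 2 := by omega
  have e3 : y 3 % 2 = y 0 % 2 := by omega
  have : ∀ i, y i % 2 = y 0 % 2 := by
    intro i
    fin_cases i
    exacts [rfl, e1, e2, e3]
  rw [this i, this j]

theorem dot_even_of_norms {y b : Fin 4 → ℤ} (hy : dot y y % 4 = 0) (hb : dot b b % 2 = 0) :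
    dot y b % 2 = 0 := by
  have h0 := same_parity hy
  rcases Int.emod_two_eq_zero_or_one (y 0) with h | h
  · obtain ⟨y', wy⟩ := exists_half (a := y) (fun i => by rw [h0 i 0, h])
    rw [dot_two_left wy]
    omega
  · have e : ∀ i, (y i * b i) % 2 = (b i * b i) % 2 := fun i => by
      rw [mul_self_mod_two, Int.mul_emod, h0 i 0, h]; omega
    have e0 := e 0
    have e1 := e 1
    have e2 := e 2
    have e3 := e 3
    simp only [dot] at hb ⊢
    omega

/-- `12 + 2√13` is not a sum of four squares in `ℤ[(1 + √13) / 2]`. -/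
theorem no_quad_thirteen {a b : Fin 4 → ℤ} (hab : ∀ i, (a i + b i) % 2 = 0)
    (h0 : dot a a + 13 * dot b b = 48) (h1 : dot a b = 4) : False := by
  have ha := dot_self_nonneg a
  have hb := dot_self_nonneg b
  have hm := dot_mod_two hab
  have hne := dot_self_pos_of_ne (a := a) (b := b) (by omega)
  have hb2 : dot b b = 2 := by omega
  obtain ⟨y, hy⟩ : ∃ y : Fin 4 → ℤ, ∀ i, a i = 2 * y i + b i :=
    ⟨fun i => (a i - b i) / 2, fun i => by have := hab i; simp only []; omega⟩
  have k1 : dot a b = 2 * dot y b + dot b b := by simp only [dot, hy]; ring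
  have k2 : dot a a = 4 * dot y y + 4 * dot y b + dot b b := by simp only [dot, hy]; ring
  have := dot_even_of_norms (y := y) (b := b) (by omega) (by omega)
  omega

/-- The element `12 + 2 r = ((3 + r)/2)² + ((1 + r)/2)² + 3` for `v = 13`: the size of the trace forces
`c = d = 0`. -/
theorem no_sys_C {g : ℤ} (hg : 14 ≤ g) {a b c d : Fin 4 → ℤ}
    (S : Sys 1 13 g 48 4 0 0 a b c d) (hab : ∀ i, (a i + b i) % 2 = 0)
    (hcd : ∀ i, (c i + d i) % 2 = 0) : False := by
  have hm := dot_self_mod_four hcd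
  obtain ⟨e0, e1, e2, e3⟩ := id S
  have ha := dot_self_nonneg a
  have hb := dot_self_nonneg b
  have hc := dot_self_nonneg c
  have hd := dot_self_nonneg d
  have hg0 : (0 : ℤ) ≤ g := by linarith
  have hgc := mul_nonneg hg0 hc
  have hd0 : dot d d = 0 := by
    by_contra hne
    have := mul_le_mul_of_nonneg_left (show 1 ≤ dot d d by omega) hg0
    linarith
  have hc0 : dot c c = 0 := by
    by_contra hne
    have := mul_le_mul_of_nonneg_left (show 4 ≤ dot c c by omega) hg0
    rw [hd0] at e0
    linarith
  obtain rfl := eq_zero_of_dot_self hd0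
  obtain rfl := eq_zero_of_dot_self hc0
  simp at e0 e1
  exact no_quad_thirteen hab e0 e1

theorem exists_halves {u v g T0 T1 T2 T3 : ℤ} {a b c d : Fin 4 → ℤ}
    (S : Sys u v g (4 * T0) (4 * T1) (4 * T2) (4 * T3) a b c d)
    (hp : ∀ i, ∃ a' b' c' d' : ℤ, a i = 2 * a' ∧ b i = 2 * b' ∧ c i = 2 * c' ∧ d i = 2 * d' ∧
      (a' + b' + c' + d') % 2 = 0) :
    ∃ a b c d : Fin 4 → ℤ, Sys u v g T0 T1 T2 T3 a b c d ∧ ∀ i, (a i + b i + c i + d i) % 2 = 0 := by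
  choose a' b' c' d' wa wb wc wd hp using hp
  obtain ⟨e0, e1, e2, e3⟩ := S
  simp only [dot_two_left wa, dot_two_right wa, dot_two_left wb, dot_two_right wb,
    dot_two_left wc, dot_two_right wc, dot_two_left wd, dot_two_right wd] at e0 e1 e2 e3
  exact ⟨a', b', c', d', ⟨by linarith, by linarith, by linarith, by linarith⟩, hp⟩

/-- The element `12 + 2 r` for `v = 13`, `g ≡ 1 mod 4`. -/
theorem no_sys_C₁ {g : ℤ} (hg : 17 ≤ g) {a b c d : Fin 4 → ℤ}
    (S : Sys 1 13 g 192 16 0 0 a b c d)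
    (hp : ∀ i, (a i % 2 = 1 ∧ b i % 2 = 1 ∧ c i % 2 = 1 ∧ d i % 2 = 1) ∨
      ∃ a' b' c' d' : ℤ, a i = 2 * a' ∧ b i = 2 * b' ∧ c i = 2 * c' ∧ d i = 2 * d' ∧
      (a' + b' + c' + d') % 2 = 0) : False := by
  have hg0 : (0 : ℤ) ≤ g := by linarith
  have hd0 : dot d d = 0 := by
    have e0 := S.e0
    have ha := dot_self_nonneg a
    have hb := dot_self_nonneg b
    have hd := dot_self_nonneg d
    have hgc := mul_nonneg hg0 (dot_self_nonneg c)
    by_contra hne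
    have := mul_le_mul_of_nonneg_left (show 1 ≤ dot d d by omega) hg0
    linarith
  have hp' := fun i => (hp i).resolve_left (by
    rintro ⟨-, -, -, h⟩
    rw [eq_zero_of_dot_self hd0] at h
    simp at h)
  obtain ⟨a, b, c, d, ⟨e0, e1, e2, e3⟩, hp⟩ := exists_halves (T0 := 48) (T1 := 4) (T2 := 0)
    (T3 := 0) S hp'
  have ha := dot_self_nonneg a
  have hb := dot_self_nonneg b
  have hc := dot_self_nonneg c
  have hd := dot_self_nonneg d
  have hgc := mul_nonneg hg0 hc
  have hd0 : dot d d = 0 := by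
    by_contra hne
    have := mul_le_mul_of_nonneg_left (show 1 ≤ dot d d by omega) hg0
    linarith
  obtain rfl := eq_zero_of_dot_self hd0
  simp at e0 e1 e2 e3 hp
  by_cases hc0 : dot c c = 0
  · obtain rfl := eq_zero_of_dot_self hc0
    simp at e0 e1 e2 e3 hp
    exact no_quad_thirteen (fun i => by have := hp i; omega) e0 e1
  have := mul_le_mul_of_nonneg_left (show 1 ≤ dot c c by omega) hg0
  have hne := dot_self_pos_of_ne (a := a) (b := b) (by omega)
  have hcs := dot_cauchy a b
  rw [e1] at hcs
  have hb1 : dot b b = 1 := by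
    by_contra hne1
    have hb2 : dot b b = 2 := by
      have : dot b b < 3 := by linarith
      omega
    rw [hb2] at e0 hcs
    linarith
  obtain ⟨T, hT, hTb⟩ := exists_perm_one hb1
  have p := hT.par4 a b c 0 (fun i => by simpa using hp i) 0
  rw [← hT.dot, hTb] at e1 e3
  rw [hTb, hT.zero] at p
  simp [dot] at e1 e3 p
  omega
/-! ### Fields with `uv ∈ {6, 7, 10, 11, 13}` -/

section SmallP

variable {K : IntermediateField ℚ ℝ} {u v g : ℤ} {r s t : ℝ}

theorem Data.half_rs_mem_two (D : Data K 2 v g r s t) (hv : v % 2 = 1) (hg : g % 2 = 1) :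
    (r + s) / 2 ∈ intRing K := by
  apply Data.mem_of_sq _ (div_mem (add_mem D.hr D.hs) (ofNat_mem K 2))
  have e : ((r + s) / 2) ^ 2 = (((v + g) / 2 : ℤ) : ℝ) + t := by
    have h5 : (((v + g) / 2 : ℤ) : ℝ) = (v + g) / 2 := by
      have : v + g = 2 * ((v + g) / 2) := by omega
      have := congrArg (Int.cast : ℤ → ℝ) this
      push_cast at this
      linarith
    have h1 := D.F.rr
    have h2 := D.F.ss
    have h3 := D.F.rs
    push_cast at h1 h2 h3
    rw [h5]
    linear_combination h1 / 4 + h2 / 4 + h3 / 2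
  rw [e]
  exact add_mem (intCast_mem _ _) D.t_mem

theorem Data.big_A (D : Data K 1 v g r s t) (hv : 6 ≤ v) (hv4 : v % 4 ≠ 1) (hg : g % 4 = 1) :
    Big K := by
  have hrr := D.F.rr
  have hss := D.F.ss
  have hvg := D.vg
  have h9 := D.sizes.q9
  have hv0 := D.sizes.v4
  push_cast at hrr hss
  have hx : ((1 : ℤ) + -s) / 2 ∈ intRing K :=
    Data.half_mem (neg_mem D.s_mem) hg (by linear_combination hss) (by norm_num)
  refine Big.of_five hx (one_mem _) (one_mem _) (one_mem _)
    (add_mem (one_mem _) D.r_mem) fun h => ?_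
  obtain ⟨a, b, c, d, S, h1, h2, -⟩ := D.F.sysQ D.span (by unfold SpecP; omega) h
    (T0 := 17 + 4 * v + g) (T1 := 4) (T2 := -1) (T3 := 0)
    (by push_cast; linear_combination 4 * hrr + hss)
  exact no_sys_A hv (by omega) S h1 h2

theorem Data.big_D (D : Data K 1 v g r s t) (h : v = 11 ∧ g % 4 = 2 ∨ v = 10 ∧ g % 4 = 3) :
    Big K := by
  have hss := D.F.ss
  have hvg := D.vg
  push_cast at hss
  refine Big.of_five (ofNat_mem _ 2) (one_mem _) (one_mem _) (one_mem _)
    (add_mem (one_mem _) D.s_mem) fun hα => ?_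
  have hT : 4 * ((2 : ℝ) ^ 2 + 1 ^ 2 + 1 ^ 2 + 1 ^ 2 + (1 + s) ^ 2)
      = ((32 + 4 * g : ℤ) : ℝ) + 2 * (0 : ℤ) * r + 2 * (4 : ℤ) * s + 2 * (0 : ℤ) * t := by
    push_cast
    linear_combination 4 * hss
  rcases h with ⟨rfl, hg⟩ | ⟨rfl, hg⟩
  · obtain ⟨a, b, c, d, S, h1, h2, h3⟩ := D.F.sysP D.span (by unfold SpecP; omega) hα hT
    have h3 := h3 (by norm_num)
    refine no_sys_D (by norm_num) (by omega) S h3 fun hd i => ?_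
    obtain rfl := eq_zero_of_dot_self hd
    have := h1 i
    have := h2 i
    have := h3 i
    simp only [Pi.zero_apply] at *
    omega
  · obtain ⟨a, b, c, d, S, h1, h2, h3⟩ := D.F.sysQ D.span (by unfold SpecP; omega) hα hT
    have h3 := h3 (by omega)
    refine no_sys_D (by norm_num) (by omega) S h3 fun hd i => ?_
    obtain rfl := eq_zero_of_dot_self hd
    have := h1 i
    have := h2 i
    have := h3 i
    simp only [Pi.zero_apply] at *
    omega

theorem Data.big_E₂ (D : Data K 1 7 g r s t) (hg : g % 4 = 2) : Big K := by
  have hrr := D.F.rr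
  have hss := D.F.ss
  have hvg := D.vg
  push_cast at hrr hss
  refine Big.of_five (add_mem (one_mem _) D.s_mem) (one_mem _) (one_mem _) (one_mem _)
    (add_mem (one_mem _) D.r_mem) fun h => ?_
  obtain ⟨a, b, c, d, S, h1, h2, h3⟩ := D.F.sysP D.span (by unfold SpecP; omega) h
    (T0 := 48 + 4 * g) (T1 := 4) (T2 := 4) (T3 := 0)
    (by push_cast; linear_combination 4 * hrr + 4 * hss)
  have h3 := h3 (by norm_num)
  exact no_sys_E₂ (by omega) S h3 (fun i => by have := h1 i; have := h3 i; omega) h2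

theorem Data.big_E₃ (D : Data K 1 6 g r s t) (hg : g % 4 = 3) : Big K := by
  have hrr := D.F.rr
  have hss := D.F.ss
  have hvg := D.vg
  push_cast at hrr hss
  refine Big.of_five (sub_mem (one_mem _) D.s_mem) (one_mem _) (one_mem _) (one_mem _)
    (add_mem (one_mem _) D.r_mem) fun h => ?_
  obtain ⟨a, b, c, d, S, h1, h2, h3⟩ := D.F.sysQ D.span (by unfold SpecP; omega) h
    (T0 := 44 + 4 * g) (T1 := 4) (T2 := -4) (T3 := 0)
    (by push_cast; linear_combination 4 * hrr + 4 * hss)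
  exact no_sys_E₃ (by omega) S (h3 (by omega)) h1 h2

theorem Data.big_E₇ (D : Data K 1 7 g r s t) (hg : g % 4 = 3) : Big K := by
  have hrr := D.F.rr
  have hss := D.F.ss
  have hrs := D.F.rs
  have hvg := D.vg
  push_cast at hrr hss hrs
  refine Big.of_five (D.half_rs_mem (by norm_num) (by omega)) (one_mem _) (one_mem _) (one_mem _)
    (sub_mem (ofNat_mem _ 2) D.r_mem) fun h => ?_
  obtain ⟨a, b, c, d, S, h1, h2, h3⟩ := D.F.sysR D.span (by unfold SpecP; omega) h
    (T0 := 63 + g) (T1 := -8) (T2 := 0) (T3 := 1)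
    (by push_cast; linear_combination 5 * hrr + hss + 2 * hrs)
  exact no_sys_E₇ (by omega) S h1 h2

theorem Data.big_B₁₁ (D : Data K 1 11 g r s t) (hg : g % 4 = 3) : Big K := by
  have hrr := D.F.rr
  have hss := D.F.ss
  have hrs := D.F.rs
  have hvg := D.vg
  push_cast at hrr hss hrs
  refine Big.of_five (D.half_rs_mem (by norm_num) (by omega)) (one_mem _) (one_mem _) (one_mem _)
    (ofNat_mem _ 2) fun h => ?_
  obtain ⟨a, b, c, d, S, h1, h2, h3⟩ := D.F.sysR D.span (by unfold SpecP; omega) h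
    (T0 := 39 + g) (T1 := 0) (T2 := 0) (T3 := 1)
    (by push_cast; linear_combination hrr + hss + 2 * hrs)
  exact no_sys_B₁₁ (by omega) S h1 h2

theorem Data.big_B₁₀ (D : Data K 2 5 g r s t) (hg : g % 2 = 1) : Big K := by
  have hrr := D.F.rr
  have hss := D.F.ss
  have hrs := D.F.rs
  have hvg := D.vg
  push_cast at hrr hss hrs
  refine Big.of_five (D.half_rs_mem_two (by norm_num) (by omega)) (one_mem _) (one_mem _)
    (one_mem _) (ofNat_mem _ 2) fun h => ?_
  obtain ⟨a, b, c, d, S, h1, h2, h3⟩ := D.F.sysR D.span (by unfold SpecP; omega) h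
    (T0 := 38 + 2 * g) (T1 := 0) (T2 := 0) (T3 := 2)
    (by push_cast; linear_combination hrr + hss + 2 * hrs)
  exact no_sys_B₁₀ (by omega) S h1 h2

theorem Data.big_F (D : Data K 2 3 g r s t) (hg : g % 2 = 1) : Big K := by
  have hrr := D.F.rr
  have hss := D.F.ss
  have hrs := D.F.rs
  have hvg := D.vg
  push_cast at hrr hss hrs
  have hx := sub_mem (D.half_rs_mem_two (by norm_num) (by omega)) D.s_mem
  rcases (show g % 4 = 3 ∨ g % 4 = 1 by omega) with h4 | h4
  · refine Big.of_five hx (one_mem _) (one_mem _) (one_mem _)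
      (add_mem (one_mem _) D.r_mem) fun h => ?_
    obtain ⟨a, b, c, d, S, h1, h2, h3⟩ := D.F.sysR D.span (by unfold SpecP; omega) h
      (T0 := 46 + 2 * g) (T1 := 4) (T2 := 0) (T3 := -2)
      (by push_cast; linear_combination 5 * hrr + hss - 2 * hrs)
    exact no_sys_F₃ (by omega) h4 S h1 h2
  · refine Big.of_five hx (one_mem _) (one_mem _) (one_mem _)
      (add_mem (ofNat_mem _ 2) D.r_mem) fun h => ?_
    obtain ⟨a, b, c, d, S, h1, h2, h3⟩ := D.F.sysR D.span (by unfold SpecP; omega) h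
      (T0 := 58 + 2 * g) (T1 := 8) (T2 := 0) (T3 := -2)
      (by push_cast; linear_combination 5 * hrr + hss - 2 * hrs)
    exact no_sys_F₁ (by omega) S h1 h2 (h3 (by omega))

theorem Data.big_C (D : Data K 1 13 g r s t) : Big K := by
  have hrr := D.F.rr
  have hvg := D.vg
  have hg0 := D.sizes.g4
  push_cast at hrr
  have hx (k : ℤ) (hk : k % 2 = 1) : ((k : ℝ) + r) / 2 ∈ intRing K :=
    Data.half_mem D.r_mem (m := 13) (by norm_num) (by linear_combination hrr) hk
  refine Big.of_five (hx 3 (by norm_num)) (hx 1 (by norm_num)) (one_mem _) (one_mem _)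
    (one_mem _) fun h => ?_
  by_cases h4 : g % 4 = 1
  · obtain ⟨a, b, c, d, S, hp⟩ := D.F.sys1 D.span (by norm_num) (by norm_num) (by omega) h
      (T0 := 192) (T1 := 16) (T2 := 0) (T3 := 0)
      (by push_cast; linear_combination 8 * hrr)
    exact no_sys_C₁ (by omega) S hp
  · obtain ⟨a, b, c, d, S, h1, h2, h3⟩ := D.F.sysP D.span (by unfold SpecP; omega) h
      (T0 := 48) (T1 := 4) (T2 := 0) (T3 := 0)
      (by push_cast; linear_combination 2 * hrr)
    exact no_sys_C (by omega) S h1 h2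

end SmallP

/-! ### A finite search for single fields -/

/-- The coordinates of the square of `a + b r + c s + d t`, the three cross coordinates halved. -/
def contr (u v g a b c d : ℤ) : ℤ × ℤ × ℤ × ℤ :=
  (a * a + u * v * (b * b) + u * g * (c * c) + v * g * (d * d),
    a * b + g * (c * d), a * c + v * (b * d), a * d + u * (b * c))

/-- Nonnegativity of the traces of `t₀ + 2 t₁ r + 2 t₂ s + 2 t₃ t` to the three quadratic
subfields. -/
def traceNonneg (u v g : ℤ) (t : ℤ × ℤ × ℤ × ℤ) : Bool :=
  decide (0 ≤ t.1 ∧ 4 * (u * v) * (t.2.1 * t.2.1) ≤ t.1 * t.1 ∧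
    4 * (u * g) * (t.2.2.1 * t.2.2.1) ≤ t.1 * t.1 ∧
    4 * (v * g) * (t.2.2.2 * t.2.2.2) ≤ t.1 * t.1)

/-- The integers of absolute value at most `n`, as a list that evaluates in the kernel. -/
def box (n : ℕ) : List ℤ := (List.range (2 * n + 1)).map fun i : ℕ => (i : ℤ) - n

/-- Squares of the elements in a coordinate box whose difference from `t` has nonnegative
traces. -/
def candidates (u v g : ℤ) (par : ℤ → ℤ → ℤ → ℤ → Bool) (t : ℤ × ℤ × ℤ × ℤ) (A B C D : ℕ) :
    List (ℤ × ℤ × ℤ × ℤ) :=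
  (box A).flatMap fun a => (box B).flatMap fun b => (box C).flatMap fun c =>
    (box D).filterMap fun d =>
      if par a b c d && traceNonneg u v g (t - contr u v g a b c d) then
        some (contr u v g a b c d) else none

/-- Whether `t` is possibly a sum of `n` members of `L`; the search always removes a summand of
largest trace. -/
def reach (u v g : ℤ) (L : List (ℤ × ℤ × ℤ × ℤ)) : ℕ → ℤ × ℤ × ℤ × ℤ → Bool
  | 0, t => decide (t = 0)
  | n + 1, t => L.any fun s => decide (t.1 ≤ (n + 1 : ℕ) * s.1) &&
      (traceNonneg u v g (t - s) && reach u v g L n (t - s))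

theorem mem_box {n : ℕ} {x : ℤ} (h : x * x < (n + 1 : ℕ) * (n + 1 : ℕ)) : x ∈ box n := by
  have h1 : x < (n + 1 : ℕ) := by
    by_contra hc
    have : ((n + 1 : ℕ) : ℤ) ≤ x := by linarith
    nlinarith
  have h2 : -((n + 1 : ℕ) : ℤ) < x := by
    by_contra hc
    have : ((n + 1 : ℕ) : ℤ) ≤ -x := by linarith
    nlinarith
  refine List.mem_map.2 ⟨(x + n).toNat, List.mem_range.2 ?_, ?_⟩
  · push_cast at h1 h2
    omega
  · push_cast at h1 h2
    omega

/-- The cone `√k |y| ≤ x` is closed under addition. -/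
theorem cone_add {k x y x' y' : ℤ} (hk : 0 ≤ k) (hx : 0 ≤ x) (hx' : 0 ≤ x')
    (h : k * (y * y) ≤ x * x) (h' : k * (y' * y') ≤ x' * x') :
    k * ((y + y') * (y + y')) ≤ (x + x') * (x + x') := by
  have h1 : (k * (y * y')) ^ 2 ≤ (x * x') ^ 2 := by
    have := mul_le_mul h h' (mul_nonneg hk (mul_self_nonneg y')) (mul_self_nonneg x)
    linarith
  have h2 := abs_le_of_sq_le_sq' h1 (mul_nonneg hx hx')
  linarith [h2.2]

theorem traceNonneg_add {u v g : ℤ} (hu : 0 ≤ u) (hv : 0 ≤ v) (hg : 0 ≤ g)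
    {s t : ℤ × ℤ × ℤ × ℤ} (hs : traceNonneg u v g s) (ht : traceNonneg u v g t) :
    traceNonneg u v g (s + t) := by
  simp only [traceNonneg, decide_eq_true_eq] at *
  obtain ⟨s0, s1, s2, s3⟩ := hs
  obtain ⟨t0, t1, t2, t3⟩ := ht
  exact ⟨add_nonneg s0 t0, cone_add (by positivity) s0 t0 s1 t1,
    cone_add (by positivity) s0 t0 s2 t2, cone_add (by positivity) s0 t0 s3 t3⟩

theorem traceNonneg_contr {u v g : ℤ} (hu : 0 ≤ u) (hv : 0 ≤ v) (hg : 0 ≤ g) (a b c d : ℤ) :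
    traceNonneg u v g (contr u v g a b c d) := by
  have two {k x y : ℤ} (hk : 0 ≤ k) : 4 * k * ((x * y) * (x * y)) ≤
      (x * x + k * (y * y)) * (x * x + k * (y * y)) := by
    nlinarith [sq_nonneg (x * x - k * (y * y))]
  have key {k m p q x y z w : ℤ} (hk : 0 ≤ k) (hm : 0 ≤ m) (hp : 0 ≤ p) (hq : 0 ≤ q)
      (hpq : p * q = k * (m * m)) :
      4 * k * ((x * y + m * (z * w)) * (x * y + m * (z * w))) ≤
      (x * x + k * (y * y) + p * (z * z) + q * (w * w)) *
      (x * x + k * (y * y) + p * (z * z) + q * (w * w)) := by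
    have h2 : 4 * k * ((m * (z * w)) * (m * (z * w))) ≤
        (p * (z * z) + q * (w * w)) * (p * (z * z) + q * (w * w)) := by
      have : 4 * k * ((m * (z * w)) * (m * (z * w))) = 4 * (p * q) * (z * z * (w * w)) := by
        rw [hpq]; ring
      rw [this]
      nlinarith [sq_nonneg (p * (z * z) - q * (w * w))]
    have := cone_add (k := 4 * k) (by positivity)
      (add_nonneg (mul_self_nonneg x) (mul_nonneg hk (mul_self_nonneg y)))
      (add_nonneg (mul_nonneg hp (mul_self_nonneg z)) (mul_nonneg hq (mul_self_nonneg w)))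
      (two hk) h2
    linarith
  have hab := mul_nonneg hu hv
  have hac := mul_nonneg hu hg
  have hbc := mul_nonneg hv hg
  refine decide_eq_true ⟨?_, ?_, ?_, ?_⟩ <;> simp only [contr]
  · have := mul_self_nonneg a
    have := mul_nonneg hab (mul_self_nonneg b)
    have := mul_nonneg hac (mul_self_nonneg c)
    have := mul_nonneg hbc (mul_self_nonneg d)
    linarith
  · exact key hab hg hac hbc (by ring)
  · have := key (x := a) (y := c) (z := b) (w := d) hac hv hab hbc (by ring)
    linarith
  · have := key (x := a) (y := d) (z := b) (w := c) hbc hu hab hac (by ring)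
    linarith

theorem traceNonneg_sum {u v g : ℤ} (hu : 0 ≤ u) (hv : 0 ≤ v) (hg : 0 ≤ g) :
    ∀ l : List (ℤ × ℤ × ℤ × ℤ), (∀ s ∈ l, traceNonneg u v g s) → traceNonneg u v g l.sum
  | [], _ => by simp [traceNonneg]
  | s :: l, h => by
    rw [List.sum_cons]
    exact traceNonneg_add hu hv hg (h s (by simp))
      (traceNonneg_sum hu hv hg l fun x hx => h x (by simp [hx]))

theorem sum_fst_le {m : ℤ} : ∀ l : List (ℤ × ℤ × ℤ × ℤ), (∀ s ∈ l, s.1 ≤ m) →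
    l.sum.1 ≤ l.length * m
  | [], _ => by simp
  | s :: l, h => by
    have h1 := h s (by simp)
    have h2 := sum_fst_le l fun x hx => h x (by simp [hx])
    rw [List.sum_cons, Prod.fst_add, List.length_cons]
    push_cast
    linarith

/-- The search is exhaustive: some summand always has at least the average trace, and a sum of the
others has nonnegative traces. -/
theorem reach_sum {u v g : ℤ} (hu : 0 ≤ u) (hv : 0 ≤ v) (hg : 0 ≤ g)
    {L : List (ℤ × ℤ × ℤ × ℤ)} : ∀ (n : ℕ) (l : List (ℤ × ℤ × ℤ × ℤ)), l.length = n →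
      (∀ s ∈ l, s ∈ L ∧ traceNonneg u v g s) → reach u v g L n l.sum
  | 0, l, hl, _ => by
    rw [List.length_eq_zero_iff] at hl
    simp [hl, reach]
  | n + 1, l, hl, h => by
    have hne : l ≠ [] := by
      rintro rfl
      simp at hl
    obtain ⟨m, hm, hmax⟩ := l.toFinset.exists_max_image (fun s => s.1)
      (by simpa using hne)
    rw [List.mem_toFinset] at hm
    have hs : l.sum - m = (l.erase m).sum := by
      rw [(List.perm_cons_erase hm).sum_eq, List.sum_cons, add_sub_cancel_left]
    have hmem : ∀ s ∈ l.erase m, s ∈ L ∧ traceNonneg u v g s := fun s hs =>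
      h s (List.mem_of_mem_erase hs)
    rw [reach, List.any_eq_true]
    refine ⟨m, (h m hm).1, ?_⟩
    rw [Bool.and_eq_true, Bool.and_eq_true, hs, decide_eq_true_eq]
    refine ⟨?_, traceNonneg_sum hu hv hg _ fun s hs => (hmem s hs).2,
      reach_sum hu hv hg n _ (by rw [List.length_erase_of_mem hm, hl]; rfl) hmem⟩
    have := sum_fst_le l (m := m.1) fun s hs => hmax s (List.mem_toFinset.2 hs)
    rwa [hl] at this

/-- A failed search shows that the system has no solutions satisfying the parity condition. The
bounds on `A, B, C, D` say that the box contains all coordinates allowed by the trace. -/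
theorem Sys.not_of_search {u v g T0 T1 T2 T3 : ℤ} (hu : 0 ≤ u) (hv : 0 ≤ v) (hg : 0 ≤ g)
    (par : ℤ → ℤ → ℤ → ℤ → Bool) (A B C D : ℕ)
    (hA : T0 < (A + 1 : ℕ) * (A + 1 : ℕ)) (hB : T0 < u * v * ((B + 1 : ℕ) * (B + 1 : ℕ)))
    (hC : T0 < u * g * ((C + 1 : ℕ) * (C + 1 : ℕ))) (hD : T0 < v * g * ((D + 1 : ℕ) * (D + 1 : ℕ)))
    (hr : reach u v g (candidates u v g par (T0, T1, T2, T3) A B C D) 4 (T0, T1, T2, T3) = false)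
    {a b c d : Fin 4 → ℤ} (S : Sys u v g T0 T1 T2 T3 a b c d)
    (hp : ∀ i, par (a i) (b i) (c i) (d i)) : False := by
  set f : Fin 4 → ℤ × ℤ × ℤ × ℤ := fun i => contr u v g (a i) (b i) (c i) (d i) with hf
  have hsum : ∑ i, f i = (T0, T1, T2, T3) := by
    obtain ⟨e0, e1, e2, e3⟩ := S
    simp only [dot] at e0 e1 e2 e3
    simp only [Fin.sum_univ_four, hf, contr, Prod.mk_add_mk, Prod.mk.injEq]
    refine ⟨?_, ?_, ?_, ?_⟩ <;> linarith
  have hpos (i) : traceNonneg u v g (f i) := traceNonneg_contr hu hv hg _ _ _ _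
  have hrest (i) : traceNonneg u v g ((T0, T1, T2, T3) - f i) := by
    have : (T0, T1, T2, T3) - f i = ∑ j ∈ Finset.univ.erase i, f j := by
      rw [← hsum, ← Finset.add_sum_erase _ _ (Finset.mem_univ i)]
      abel
    rw [this, ← Finset.sum_map_toList]
    refine traceNonneg_sum hu hv hg _ fun s hs => ?_
    obtain ⟨j, -, rfl⟩ := List.mem_map.1 hs
    exact hpos j
  have hle (i) : (f i).1 ≤ T0 := by
    have := hrest i
    simp only [traceNonneg, decide_eq_true_eq] at this
    have := this.1
    rw [Prod.fst_sub] at this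
    linarith
  have hmem (i) : f i ∈ candidates u v g par (T0, T1, T2, T3) A B C D := by
    have h0 := hle i
    simp only [hf, contr] at h0
    have ha := mul_self_nonneg (a i)
    have hb := mul_nonneg (mul_nonneg hu hv) (mul_self_nonneg (b i))
    have hc := mul_nonneg (mul_nonneg hu hg) (mul_self_nonneg (c i))
    have hd := mul_nonneg (mul_nonneg hv hg) (mul_self_nonneg (d i))
    simp only [candidates, List.mem_flatMap, List.mem_filterMap]
    refine ⟨a i, mem_box (by linarith), b i, mem_box ?_, c i, mem_box ?_, d i, mem_box ?_, ?_⟩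
    · exact lt_of_mul_lt_mul_left (by linarith) (mul_nonneg hu hv)
    · exact lt_of_mul_lt_mul_left (by linarith) (mul_nonneg hu hg)
    · exact lt_of_mul_lt_mul_left (by linarith) (mul_nonneg hv hg)
    · rw [if_pos]
      rw [hp i, Bool.true_and]
      exact hrest i
  have := reach_sum hu hv hg 4 (List.ofFn f) (by simp) (by
    intro s hs
    obtain ⟨i, rfl⟩ := (List.mem_ofFn' _ _).1 hs
    exact ⟨hmem i, hpos i⟩) (L := candidates u v g par (T0, T1, T2, T3) A B C D)
  rw [List.sum_ofFn, hsum, hr] at this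
  exact absurd this (by decide)

/-- The element `28 + 12 r + 4 s + 4 t` of `ℚ(√2, √13)`. -/
theorem no_sys_two_thirteen {a b c d : Fin 4 → ℤ} (S : Sys 1 2 13 112 24 8 8 a b c d)
    (hac : ∀ i, (a i + c i) % 2 = 0) (hbd : ∀ i, (b i + d i) % 2 = 0) : False := by
  refine Sys.not_of_search (by norm_num) (by norm_num) (by norm_num)
    (fun a b c d => decide ((a + c) % 2 = 0 ∧ (b + d) % 2 = 0)) 10 7 2 2 (by norm_num)
    (by norm_num) (by norm_num) (by norm_num) ?_ S fun i => by simp [hac i, hbd i]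
  decide +kernel

/-! ### The radicand `3` -/

/-- Positivity of the conjugates of `∑ (a_i + b_i √v)²`. -/
theorem four_mul_dot_le {v : ℤ} (a b : Fin 4 → ℤ) (hv : 0 ≤ v) :
    4 * v * (dot a b * dot a b) ≤
      (dot a a + v * dot b b) * (dot a a + v * dot b b) := by
  have := mul_le_mul_of_nonneg_left (dot_cauchy a b) hv
  linarith [mul_self_nonneg (dot a a - v * dot b b)]

theorem mem_Icc_of_sq {n : ℕ} {x : ℤ} (h : x * x < (n + 1 : ℕ) * (n + 1 : ℕ)) :
    x ∈ Finset.Icc (-n : ℤ) n := by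
  obtain ⟨i, hi, rfl⟩ := List.mem_map.1 (mem_box h)
  rw [List.mem_range] at hi
  rw [Finset.mem_Icc]
  omega

theorem exists_perm_tail {c : Fin 4 → ℤ} (h0 : c 0 = 1) (h : dot c c = 2) :
    ∃ T, SignedPerm T ∧ T ![1, 0, 0, 0] = ![1, 0, 0, 0] ∧ T c = ![1, 1, 0, 0] := by
  have hs : c 1 * c 1 + c 2 * c 2 + c 3 * c 3 = 1 := by
    simp only [dot, h0] at h
    linarith
  have n1 := mul_self_nonneg (c 1)
  have n2 := mul_self_nonneg (c 2)
  have n3 := mul_self_nonneg (c 3)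
  have key (j : Fin 4) (hj0 : j ≠ 0) (hj : c j * c j = 1)
      (hz : ∀ i, i ≠ 0 → i ≠ j → c i = 0) :
      ∃ T, SignedPerm T ∧ T ![1, 0, 0, 0] = ![1, 0, 0, 0] ∧ T c = ![1, 1, 0, 0] := by
    have hcj : c j = 1 ∨ c j = -1 := mul_self_eq_one_iff.1 hj
    refine ⟨_, signedPerm_mk (Equiv.swap 1 j) ![1, c j, c j, c j] (fun i => ?_), ?_, ?_⟩
    · fin_cases i <;> simp [hcj]
    · funext i
      fin_cases j <;> fin_cases i <;> first | exact absurd rfl hj0 | simp [Equiv.swap_apply_def]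
    · funext i
      fin_cases j <;> fin_cases i <;>
        first
        | exact absurd rfl hj0
        | (simp at hj hz; simp [Equiv.swap_apply_def, h0, hj, hz])
  have one {x : ℤ} (h : x ≠ 0) : 1 ≤ x * x := by
    have := mul_self_pos.2 h
    omega
  have zero {x : ℤ} (h : x * x ≤ 0) : x = 0 := by
    by_contra hc
    linarith [one hc]
  by_cases h1 : c 1 = 0
  · by_cases h2 : c 2 = 0
    · refine key 3 (by decide) (by rw [h1, h2] at hs; linarith only [hs]) fun i hi0 hi => ?_
      fin_cases i
      exacts [absurd rfl hi0, h1, h2, absurd rfl hi]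
    · have := one h2
      have h3 : c 3 = 0 := zero (by linarith)
      refine key 2 (by decide) (by rw [h1, h3] at hs; linarith only [hs]) fun i hi0 hi => ?_
      fin_cases i
      exacts [absurd rfl hi0, h1, absurd rfl hi, h3]
  · have := one h1
    have h2 : c 2 = 0 := zero (by linarith)
    have h3 : c 3 = 0 := zero (by linarith)
    refine key 1 (by decide) (by rw [h2, h3] at hs; linarith only [hs]) fun i hi0 hi => ?_
    fin_cases i
    exacts [absurd rfl hi0, absurd rfl hi, h2, h3]

theorem exists_perm_pair {c d : Fin 4 → ℤ} (hc : dot c c = 2) (hd : dot d d = 1)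
    (hcd : dot c d = 1) :
    ∃ T, SignedPerm T ∧ T d = ![1, 0, 0, 0] ∧ T c = ![1, 1, 0, 0] := by
  obtain ⟨T, hT, hTd⟩ := exists_perm_one hd
  rw [← hT.dot, hTd] at hcd
  simp [dot] at hcd
  obtain ⟨T', hT', h1, h2⟩ := exists_perm_tail hcd (by rw [hT.dot, hc])
  exact ⟨_, hT'.comp hT, by rw [hTd, h1], h2⟩

theorem exists_perm_two {c : Fin 4 → ℤ} (hc : dot c c = 2) :
    ∃ T, SignedPerm T ∧ T c = ![1, 1, 0, 0] := by
  have hi : ∃ i, c i ≠ 0 := by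
    by_contra hcon
    push Not at hcon
    simp [dot, hcon] at hc
  obtain ⟨i, hi⟩ := hi
  have hci : c i * c i = 1 := by
    have h1 : c i * c i ≤ 2 := by
      simp only [dot] at hc
      have h0 := mul_self_nonneg (c 0)
      have h1 := mul_self_nonneg (c 1)
      have h2 := mul_self_nonneg (c 2)
      have h3 := mul_self_nonneg (c 3)
      fin_cases i <;> simp <;> linarith
    have h2 : c i ≤ 1 := by nlinarith
    have h3 : -1 ≤ c i := by nlinarith
    rcases (show c i = 1 ∨ c i = -1 by omega) with h | h <;> rw [h] <;> rfl
  obtain ⟨T, hT, hT0⟩ : ∃ T, SignedPerm T ∧ T c 0 = 1 :=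
    ⟨_, signedPerm_mk (Equiv.swap 0 i) (fun _ => c i) (fun _ => mul_self_eq_one_iff.1 hci),
      by simpa using hci⟩
  obtain ⟨T', hT', -, h2⟩ := exists_perm_tail hT0 (by rw [hT.dot, hc])
  exact ⟨_, hT'.comp hT, h2⟩

set_option maxRecDepth 10000 in
/-- The finite system left over for `v = 3`, once `c`, `d` are normalised and their orthogonality
relations to `a`, `b` solved. -/
theorem no_end_three {p m x y z w e : ℤ} (he : e = 2 ∨ e = -2)
    (h : 2 * (p * (p + 1)) + 6 * (m * m) + x * x + y * y + 3 * (z * z) + 3 * (w * w) = 9)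
    (h' : (2 * p + 1) * m + x * z + y * w = e) : False := by
  have key : ∀ p ∈ Finset.Icc (-3 : ℤ) 3, ∀ m ∈ Finset.Icc (-1 : ℤ) 1,
      ∀ z ∈ Finset.Icc (-1 : ℤ) 1, ∀ w ∈ Finset.Icc (-1 : ℤ) 1, ∀ x ∈ Finset.Icc (-3 : ℤ) 3,
      ∀ y ∈ Finset.Icc (-3 : ℤ) 3,
      2 * (p * (p + 1)) + 6 * (m * m) + x * x + y * y + 3 * (z * z) + 3 * (w * w) = 9 →
      (2 * p + 1) * m + x * z + y * w ≠ 2 ∧ (2 * p + 1) * m + x * z + y * w ≠ -2 := by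
    decide +kernel
  have n1 : 0 ≤ p * (p + 1) := by
    rcases le_or_gt 0 p with h | h
    · positivity
    · nlinarith
  have n2 := mul_self_nonneg m
  have n3 := mul_self_nonneg x
  have n4 := mul_self_nonneg y
  have n5 := mul_self_nonneg z
  have n6 := mul_self_nonneg w
  have := key p (mem_Icc_of_sq (n := 3) (by push_cast; nlinarith)) m
    (mem_Icc_of_sq (n := 1) (by push_cast; linarith)) z
    (mem_Icc_of_sq (n := 1) (by push_cast; linarith)) w
    (mem_Icc_of_sq (n := 1) (by push_cast; linarith)) x
    (mem_Icc_of_sq (n := 3) (by push_cast; linarith)) y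
    (mem_Icc_of_sq (n := 3) (by push_cast; linarith)) h
  rcases he with rfl | rfl
  · exact this.1 h'
  · exact this.2 h'

/-- The element `(1 + h)² + h² + 1 + 2 (1 - r)²` with `h = (r - s)/2`, for `v = 3`, `g ≡ 3 mod 4`. -/
theorem no_sys_three_R {g : ℤ} (hg : 19 ≤ g) (hg4 : g % 4 = 3) {a b c d : Fin 4 → ℤ}
    (S : Sys 1 3 g (46 + 2 * g) (-6) (-2) (-2) a b c d)
    (had : ∀ i, (a i + d i) % 2 = 0) (hbc : ∀ i, (b i + c i) % 2 = 0) : False := by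
  have hS := S
  obtain ⟨e0, e1, e2, e3⟩ := S
  have na := dot_self_nonneg a
  have nb := dot_self_nonneg b
  have nc := dot_self_nonneg c
  have nd := dot_self_nonneg d
  have hg0 : 0 ≤ g := by linarith
  have hw := four_mul_dot_le (v := 3) a b (by norm_num)
  by_cases hd : dot d d = 0
  · obtain rfl := eq_zero_of_dot_self hd
    simp only [dot_zero_right] at e0 e1 e2 e3
    rw [show dot a b = -6 by linarith] at hw
    have c3 : dot c c ≤ 3 := by
      by_contra hc
      have := mul_le_mul_of_nonneg_left (show 4 ≤ dot c c by omega) hg0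
      have : dot a a + 3 * dot b b ≤ 8 := by linarith
      nlinarith
    have ha : ∀ i, a i % 2 = 0 := fun i => by simpa using had i
    rcases (show dot c c = 0 ∨ dot c c = 1 ∨ dot c c = 2 ∨ dot c c = 3 by omega) with
      hc | hc | hc | hc
    · obtain rfl := eq_zero_of_dot_self hc
      simp at e2
    · obtain ⟨T, hT, hTc⟩ := exists_perm_one hc
      have h3 := (hS.map hT).e3
      have hp := hT.par _ _ hbc 0
      rw [hT.zero, hTc] at h3
      rw [hTc] at hp
      simp [dot] at h3 hp
      omega
    · obtain ⟨T, hT, hTc⟩ := exists_perm_two hc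
      obtain ⟨f0, f1, f2, f3⟩ := hS.map hT
      have hp := hT.par _ _ hbc
      obtain ⟨a', ha'⟩ := exists_half (hT.even _ ha)
      rw [hT.zero, hTc] at f0 f1 f2 f3
      rw [hTc] at hp
      have p0 := hp 0
      have p2 := hp 2
      have p3 := hp 3
      generalize T b = b at *
      simp [dot, ha'] at f0 f1 f2 f3 p0 p2 p3
      obtain ⟨m, hm⟩ : ∃ m, b 0 = 2 * m - 1 := ⟨(b 0 + 1) / 2, by omega⟩
      obtain ⟨z, hz⟩ : ∃ z, b 2 = 2 * z := ⟨b 2 / 2, by omega⟩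
      obtain ⟨w, hw⟩ : ∃ w, b 3 = 2 * w := ⟨b 3 / 2, by omega⟩
      have hb1 : b 1 = -1 - 2 * m := by linarith
      have ha1 : a' 1 = -1 - a' 0 := by linarith
      rw [hm, hb1, hz, hw, ha1] at f0 f1
      exact no_end_three (p := a' 0) (m := m) (x := a' 2) (y := a' 3) (z := z) (w := w)
        (Or.inr rfl) (by linarith) (by linarith)
    · have := dot_self_mod_four hbc
      have := dot_even_mod_four ha ha
      rw [hc] at e0
      omega
  · have h5 : dot c c + 3 * dot d d ≤ 4 := by
      by_contra hc
      have := mul_le_mul_of_nonneg_left (show 5 ≤ dot c c + 3 * dot d d by omega) hg0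
      linarith
    have hd1 : dot d d = 1 := by omega
    rcases (show dot c c = 0 ∨ dot c c = 1 by omega) with hc | hc
    · obtain rfl := eq_zero_of_dot_self hc
      simp at e2
      omega
    · have hk := dot_cauchy c d
      rw [hc, hd1] at hk e0
      have k1 : dot c d ≤ 1 := by nlinarith
      have k2 : -1 ≤ dot c d := by nlinarith
      have hX : dot a a + 3 * dot b b ≤ 8 := by linarith
      rcases (show dot c d = 0 ∨ dot c d = 1 ∨ dot c d = -1 by omega) with h | h | h <;>
        rw [h] at e1 <;> nlinarith

/-- The element `((1 - s)/2)² + ((3 - s)/2)² + 2 + (2 + r)²` for `v = 3`, `g ≡ 1 mod 4`. -/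
theorem no_sys_three_Q {g : ℤ} (hg : 13 ≤ g) (hg4 : g % 4 = 1) {a b c d : Fin 4 → ℤ}
    (S : Sys 1 3 g (46 + 2 * g) 8 (-4) 0 a b c d)
    (hac : ∀ i, (a i + c i) % 2 = 0) (hbd : ∀ i, (b i + d i) % 2 = 0) : False := by
  have hS := S
  obtain ⟨e0, e1, e2, e3⟩ := S
  have na := dot_self_nonneg a
  have nb := dot_self_nonneg b
  have nc := dot_self_nonneg c
  have nd := dot_self_nonneg d
  have hg0 : 0 ≤ g := by linarith
  have hw := four_mul_dot_le (v := 3) a b (by norm_num)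
  by_cases hd : dot d d = 0
  · obtain rfl := eq_zero_of_dot_self hd
    simp only [dot_zero_right] at e0 e1 e2 e3
    rw [show dot a b = 8 by linarith] at hw
    have c3 : dot c c ≤ 3 := by
      by_contra hc
      have := mul_le_mul_of_nonneg_left (show 4 ≤ dot c c by omega) hg0
      have : dot a a + 3 * dot b b ≤ 20 := by linarith
      nlinarith
    have hb : ∀ i, b i % 2 = 0 := fun i => by simpa using hbd i
    rcases (show dot c c = 0 ∨ dot c c = 1 ∨ dot c c = 2 ∨ dot c c = 3 by omega) with
      hc | hc | hc | hc
    · obtain rfl := eq_zero_of_dot_self hc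
      simp at e2
    · obtain ⟨T, hT, hTc⟩ := exists_perm_one hc
      have h2 := (hS.map hT).e2
      have hp := hT.par _ _ hac 0
      rw [hT.zero, hTc] at h2
      rw [hTc] at hp
      simp [dot] at h2 hp
      omega
    · obtain ⟨T, hT, hTc⟩ := exists_perm_two hc
      obtain ⟨f0, f1, f2, f3⟩ := hS.map hT
      have hp := hT.par _ _ hac
      obtain ⟨b', hb'⟩ := exists_half (hT.even _ hb)
      rw [hT.zero, hTc] at f0 f1 f2 f3
      rw [hTc] at hp
      have p0 := hp 0
      have p2 := hp 2
      have p3 := hp 3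
      generalize T a = a at *
      simp [dot, hb'] at f0 f1 f2 f3 p0 p2 p3
      obtain ⟨p, hp⟩ : ∃ p, a 0 = 2 * p - 1 := ⟨(a 0 + 1) / 2, by omega⟩
      obtain ⟨x, hx⟩ : ∃ x, a 2 = 2 * x := ⟨a 2 / 2, by omega⟩
      obtain ⟨y, hy⟩ : ∃ y, a 3 = 2 * y := ⟨a 3 / 2, by omega⟩
      have ha1 : a 1 = -3 - 2 * p := by linarith
      have hb1 : b' 1 = -b' 0 := by linarith
      rw [hp, ha1, hx, hy, hb1] at f0 f1
      exact no_end_three (p := p) (m := b' 0) (x := x) (y := y) (z := b' 2) (w := b' 3)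
        (Or.inl rfl) (by linarith) (by linarith)
    · have := dot_self_mod_four hac
      have := dot_even_mod_four hb hb
      rw [hc] at e0
      omega
  · have h5 : dot c c + 3 * dot d d ≤ 5 := by
      by_contra hc
      have := mul_le_mul_of_nonneg_left (show 6 ≤ dot c c + 3 * dot d d by omega) hg0
      linarith
    have hd1 : dot d d = 1 := by omega
    have hk := dot_cauchy c d
    rcases (show dot c c = 0 ∨ dot c c = 1 ∨ dot c c = 2 by omega) with hc | hc | hc
    · obtain rfl := eq_zero_of_dot_self hc
      simp at e2
      omega
    · rw [hc, hd1] at hk e0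
      have k1 : dot c d ≤ 1 := by nlinarith
      have k2 : -1 ≤ dot c d := by nlinarith
      have hX : dot a a + 3 * dot b b ≤ 20 := by linarith
      rcases (show dot c d = 0 ∨ dot c d = 1 ∨ dot c d = -1 by omega) with h | h | h
      · rw [h] at e1
        nlinarith
      · have hcd : c - d = 0 := eq_zero_of_dot_self (by
          simp only [dot, Pi.sub_apply] at hc hd1 h ⊢
          linarith)
        obtain rfl : c = d := sub_eq_zero.1 hcd
        obtain ⟨T, hT, hTc⟩ := exists_perm_one hc
        have h2 := (hS.map hT).e2
        have h3 := (hS.map hT).e3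
        have hp := hT.par _ _ hbd 0
        rw [hTc] at h2 h3 hp
        simp [dot] at h2 h3 hp
        omega
      · rw [h] at e1
        nlinarith
    · rw [hc, hd1] at hk e0
      have k1 : dot c d ≤ 1 := by nlinarith
      have k2 : -1 ≤ dot c d := by nlinarith
      have hX : dot a a + 3 * dot b b ≤ 7 := by linarith
      rcases (show dot c d = 0 ∨ dot c d = 1 ∨ dot c d = -1 by omega) with h | h | h <;>
        rw [h] at e1 <;> nlinarith

/-- The element `h² + (1 - h)² + 1 + 2 (1 + r)²` with `h = (s - t)/2`, for `v = 3`, `g ≡ 2 mod 4`. -/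
theorem no_sys_three_P {g : ℤ} (hg : 10 ≤ g) (hg4 : g % 4 = 2) {a b c d : Fin 4 → ℤ}
    (S : Sys 1 3 g (40 + 8 * g) (8 - 2 * g) (-2) 2 a b c d)
    (ha : ∀ i, a i % 2 = 0) (hb : ∀ i, b i % 2 = 0) (hcd : ∀ i, (c i + d i) % 2 = 0) : False := by
  have hS := S
  obtain ⟨e0, e1, e2, e3⟩ := S
  have na := dot_self_nonneg a
  have nb := dot_self_nonneg b
  have nc := dot_self_nonneg c
  have nd := dot_self_nonneg d
  have hg0 : 0 ≤ g := by linarith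
  have hw := four_mul_dot_le (v := 3) a b (by norm_num)
  have hab := dot_even_mod_four ha hb
  have hk2 := dot_mod_two hcd
  have hm := dot_self_mod_four hcd
  have hk : dot c d % 2 = 0 := by
    obtain ⟨k, rfl⟩ : ∃ k, g = 4 * k + 2 := ⟨g / 4, by omega⟩
    have : (4 * k + 2) * dot c d = 4 * (k * dot c d) + 2 * dot c d := by ring
    omega
  have h8 : dot c c + 3 * dot d d ≤ 8 := by
    by_contra hc
    have := mul_le_mul_of_nonneg_left (show 12 ≤ dot c c + 3 * dot d d by omega) hg0
    obtain rfl := eq_zero_of_dot_self (show dot a a = 0 by linarith)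
    obtain rfl := eq_zero_of_dot_self (show dot b b = 0 by linarith)
    simp at e2
  have hd : dot d d ≠ 0 := by
    intro hd
    obtain rfl := eq_zero_of_dot_self hd
    have := dot_even_mod_four ha (b := c) (fun i => by simpa using hcd i)
    simp at e2
    omega
  have hd2 : dot d d = 2 := by omega
  have hc2 : dot c c = 2 := by omega
  have hcau := dot_cauchy c d
  rw [hc2, hd2] at hcau e0
  have k1 : dot c d ≤ 2 := by nlinarith
  have k2 : -2 ≤ dot c d := by nlinarith
  have hX : dot a a + 3 * dot b b = 40 := by linarith
  rw [hX] at hw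
  rcases (show dot c d = 0 ∨ dot c d = 2 ∨ dot c d = -2 by omega) with h | h | h
  · rw [h] at e1
    nlinarith
  · rw [h] at e1
    nlinarith
  · have hcd' : d + c = 0 := eq_zero_of_dot_self (by
      simp only [dot, Pi.add_apply] at hc2 hd2 h ⊢
      linarith)
    obtain ⟨T, hT, hTc⟩ := exists_perm_two hc2
    obtain ⟨a', ha'⟩ := exists_half (hT.even _ ha)
    obtain ⟨b', hb'⟩ := exists_half (hT.even _ hb)
    obtain rfl : d = -c := eq_neg_of_add_eq_zero_left hcd'
    have neg (x y : Fin 4 → ℤ) : dot x (-y) = -dot x y := by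
      simp only [dot, Pi.neg_apply]
      ring
    rw [neg, ← hT.dot, ← hT.dot b c, hTc] at e2 e3
    rw [h] at e1
    have e1 : dot a b = 8 := by linarith
    rw [← hT.dot] at e1
    rw [← hT.dot a, ← hT.dot b] at hX
    simp [dot, ha', hb'] at e1 e2 e3 hX
    have hb1 : b' 1 = -b' 0 := by linarith
    have ha1 : a' 1 = -1 - a' 0 := by linarith
    rw [ha1, hb1] at e1 hX
    exact no_end_three (p := a' 0) (m := b' 0) (x := a' 2) (y := a' 3) (z := b' 2) (w := b' 3)
        (Or.inl rfl) (by linarith) (by linarith)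

/-- The element of `no_sys_three_R` for `g = 11`, which is too small for the general argument. -/
theorem no_sys_three_eleven {a b c d : Fin 4 → ℤ} (S : Sys 1 3 11 68 (-6) (-2) (-2) a b c d)
    (had : ∀ i, (a i + d i) % 2 = 0) (hbc : ∀ i, (b i + c i) % 2 = 0) : False := by
  refine Sys.not_of_search (by norm_num) (by norm_num) (by norm_num)
    (fun a b c d => decide ((a + d) % 2 = 0 ∧ (b + c) % 2 = 0)) 8 4 2 1 (by norm_num)
    (by norm_num) (by norm_num) (by norm_num) ?_ S fun i => by simp [had i, hbc i]
  decide +kernel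

/-- The element `35 + 3 r + 5 s + 3 t` of `ℚ(√5, √11)`. -/
theorem no_sys_five_eleven {a b c d : Fin 4 → ℤ} (S : Sys 1 5 11 140 6 10 6 a b c d)
    (hab : ∀ i, (a i + b i) % 2 = 0) (hcd : ∀ i, (c i + d i) % 2 = 0) : False := by
  refine Sys.not_of_search (by norm_num) (by norm_num) (by norm_num)
    (fun a b c d => decide ((a + b) % 2 = 0 ∧ (c + d) % 2 = 0)) 11 5 3 1 (by norm_num)
    (by norm_num) (by norm_num) (by norm_num) ?_ S fun i => by simp [hab i, hcd i]
  decide +kernel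

/-- The element `30 - 14 r + 2 s` of `ℚ(√2, √17)`. -/
theorem no_sys_two_seventeen {a b c d : Fin 4 → ℤ} (S : Sys 1 2 17 120 (-28) 4 0 a b c d)
    (hac : ∀ i, (a i + c i) % 2 = 0) (hbd : ∀ i, (b i + d i) % 2 = 0) : False := by
  refine Sys.not_of_search (by norm_num) (by norm_num) (by norm_num)
    (fun a b c d => decide ((a + c) % 2 = 0 ∧ (b + d) % 2 = 0)) 10 7 2 1 (by norm_num)
    (by norm_num) (by norm_num) (by norm_num) ?_ S fun i => by simp [hac i, hbd i]
  decide +kernel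

/-! ### The radicand `2` -/

set_option maxRecDepth 10000 in
/-- The finite system left over for `v = 2`, once `c`, `d` are normalised and their relations to `a`,
`b` solved. -/
theorem no_end_two {j l x y z w : ℤ}
    (h : 4 * (j * j) + 4 * (l * (l - 1)) + x * x + y * y + 2 * (z * z) + 2 * (w * w) = 6)
    (h' : j - j * j - l - 2 * (j * l) + l * l + x * z + y * w = 1) : False := by
  have key : ∀ j ∈ Finset.Icc (-1 : ℤ) 1, ∀ l ∈ Finset.Icc (-1 : ℤ) 1,
      ∀ z ∈ Finset.Icc (-1 : ℤ) 1, ∀ w ∈ Finset.Icc (-1 : ℤ) 1, ∀ x ∈ Finset.Icc (-2 : ℤ) 2,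
      ∀ y ∈ Finset.Icc (-2 : ℤ) 2,
      4 * (j * j) + 4 * (l * (l - 1)) + x * x + y * y + 2 * (z * z) + 2 * (w * w) = 6 →
      j - j * j - l - 2 * (j * l) + l * l + x * z + y * w ≠ 1 := by
    decide +kernel
  have n1 : 0 ≤ l * (l - 1) := by
    rcases le_or_gt 1 l with h | h
    · exact mul_nonneg (by omega) (by omega)
    · nlinarith
  have n2 := mul_self_nonneg j
  have n3 := mul_self_nonneg x
  have n4 := mul_self_nonneg y
  have n5 := mul_self_nonneg z
  have n6 := mul_self_nonneg w
  have l1 : l ≤ 1 := by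
    by_contra hc
    nlinarith
  have l2 : 0 ≤ l := by
    by_contra hc
    nlinarith
  exact key j (mem_Icc_of_sq (n := 1) (by push_cast; linarith)) l
    (Finset.mem_Icc.2 ⟨by linarith, l1⟩) z
    (mem_Icc_of_sq (n := 1) (by push_cast; linarith)) w
    (mem_Icc_of_sq (n := 1) (by push_cast; linarith)) x
    (mem_Icc_of_sq (n := 2) (by push_cast; linarith)) y
    (mem_Icc_of_sq (n := 2) (by push_cast; linarith)) h h'

/-- The element `(h (1 + r))² + (h + r)² + (1 + r)² + 1 + r²` with `h = (1 + s)/2`, for `v = 2`,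
`g ≡ 1 mod 4`. -/
theorem no_sys_two₁ {g : ℤ} (hg : 21 ≤ g) {a b c d : Fin 4 → ℤ}
    (S : Sys 1 2 g (36 + 4 * g) (7 + g) 4 4 a b c d)
    (hac : ∀ i, (a i + c i) % 2 = 0) (hbd : ∀ i, (b i + d i) % 2 = 0) : False := by
  have hS := S
  obtain ⟨e0, e1, e2, e3⟩ := S
  have na := dot_self_nonneg a
  have nb := dot_self_nonneg b
  have nc := dot_self_nonneg c
  have nd := dot_self_nonneg d
  have hg0 : 0 ≤ g := by linarith
  have hw := four_mul_dot_le (v := 2) a b (by norm_num)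
  have hcau := dot_cauchy c d
  obtain ⟨X, hX⟩ : ∃ X, X = dot a a + 2 * dot b b := ⟨_, rfl⟩
  obtain ⟨γ, hγ⟩ : ∃ γ, γ = dot c c + 2 * dot d d := ⟨_, rfl⟩
  have e0' : X + g * γ = 36 + 4 * g := by rw [hX, hγ]; linarith
  have hX0 : 0 ≤ X := by linarith
  rw [← hX] at hw
  have h5 : γ ≤ 5 := by
    by_contra hc
    have := mul_le_mul_of_nonneg_left (show 6 ≤ γ by omega) hg0
    linarith
  -- `c` and `d` cannot be orthogonal unless they are short
  have horth (h2 : 2 ≤ γ) (h : dot c d = 0) : False := by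
    rw [h] at e1
    have := mul_le_mul_of_nonneg_left h2 hg0
    have hX' : X ≤ 36 + 2 * g := by linarith
    rw [show dot a b = 7 + g by linarith] at hw
    nlinarith
  have hγ0 : 0 < γ := by
    by_contra hc
    obtain rfl := eq_zero_of_dot_self (show dot c c = 0 by omega)
    obtain rfl := eq_zero_of_dot_self (show dot d d = 0 by omega)
    simp at e2
  by_cases hd : dot d d = 0
  · obtain rfl := eq_zero_of_dot_self hd
    have hγ1 : γ = 1 := by
      by_contra hc
      exact horth (by omega) (by simp)
    obtain ⟨T, hT, hTc⟩ := exists_perm_one (show dot c c = 1 by omega)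
    have h2 := (hS.map hT).e2
    have hp := hT.par _ _ hac 0
    rw [hT.zero, hTc] at h2
    rw [hTc] at hp
    simp [dot] at h2 hp
    omega
  by_cases hc : dot c c = 0
  · obtain rfl := eq_zero_of_dot_self hc
    by_cases hd1 : dot d d = 1
    · obtain ⟨T, hT, hTd⟩ := exists_perm_one hd1
      have h2 := (hS.map hT).e2
      have hp := hT.par _ _ hbd 0
      rw [hT.zero, hTd] at h2
      rw [hTd] at hp
      simp [dot] at h2 hp
      omega
    · exact horth (by omega) (by simp)
  have hprod : dot c d * dot c d ≤ 3 := by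
    have : dot d d = 1 ∨ dot d d = 2 := by omega
    rcases this with h | h
    · rw [h] at hcau
      omega
    · rw [h, show dot c c = 1 by omega] at hcau
      omega
  have k1 : dot c d ≤ 1 := by nlinarith
  have k2 : -1 ≤ dot c d := by nlinarith
  have hk : dot c d = 1 := by
    by_contra hk
    rcases (show dot c d = 0 ∨ dot c d = -1 by omega) with h | h
    · exact horth (by omega) h
    · rw [h] at e1
      have := mul_le_mul_of_nonneg_left (show 2 ≤ γ by omega) hg0
      have hX' : X ≤ 36 + 2 * g := by linarith
      rw [show dot a b = 7 + 2 * g by linarith] at hw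
      nlinarith
  rw [hk] at e1
  have hab : dot a b = 7 := by linarith
  rw [hab] at hw
  rcases (show γ = 3 ∨ γ = 4 ∨ γ = 5 by omega) with h | h | h
  · have hc1 : dot c c = 1 := by omega
    have hd1 : dot d d = 1 := by omega
    have hcd : c - d = 0 := eq_zero_of_dot_self (by
      simp only [dot, Pi.sub_apply] at hc1 hd1 hk ⊢
      linarith)
    obtain rfl : c = d := sub_eq_zero.1 hcd
    obtain ⟨T, hT, hTc⟩ := exists_perm_one hc1
    have h2 := (hS.map hT).e2
    have h3 := (hS.map hT).e3
    have hp := hT.par _ _ hbd 0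
    rw [hTc] at h2 h3 hp
    simp [dot] at h2 h3 hp
    omega
  · have hd1 : dot d d = 1 := by omega
    have hX' : X = 36 := by rw [h] at e0'; linarith
    obtain ⟨T, hT, hTd, hTc⟩ := exists_perm_pair (show dot c c = 2 by omega) hd1 hk
    have p1 := hT.par _ _ hac
    have p2 := hT.par _ _ hbd
    have f2 := (hS.map hT).e2
    have f3 := (hS.map hT).e3
    rw [hTc] at f2 f3 p1
    rw [hTd] at f2 f3 p2
    rw [← hT.dot] at hab
    rw [hX', ← hT.dot a, ← hT.dot b] at hX
    generalize T a = a at *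
    generalize T b = b at *
    have q2 := p1 2
    have q3 := p1 3
    have r0 := p2 0
    have r1 := p2 1
    have r2 := p2 2
    have r3 := p2 3
    simp [dot] at hab hX f2 f3 q2 q3 r0 r1 r2 r3
    obtain ⟨j, hj⟩ : ∃ j, b 0 = 1 + 2 * j := ⟨b 0 / 2, by omega⟩
    obtain ⟨l, hl⟩ : ∃ l, b 1 = 2 * l := ⟨b 1 / 2, by omega⟩
    obtain ⟨x, hx⟩ : ∃ k, a 2 = 2 * k := ⟨a 2 / 2, by omega⟩
    obtain ⟨y, hy⟩ : ∃ k, a 3 = 2 * k := ⟨a 3 / 2, by omega⟩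
    obtain ⟨z, hz⟩ : ∃ k, b 2 = 2 * k := ⟨b 2 / 2, by omega⟩
    obtain ⟨w, hw⟩ : ∃ k, b 3 = 2 * k := ⟨b 3 / 2, by omega⟩
    rw [show a 0 = 3 - 2 * j - 2 * l by linarith, show a 1 = 2 * l - 1 - 2 * j by linarith,
      hj, hl, hx, hy, hz, hw] at hab hX
    exact no_end_two (j := j) (l := l) (x := x) (y := y) (z := z) (w := w)
      (by linarith) (by linarith)
  · have hX' : X ≤ 15 := by rw [h] at e0'; linarith
    nlinarith

/-- The element `(h + s)² + (1 + h)² + (1 + r)² + 1 + r²` with `h = (r + t)/2`, for `v = 2`,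
`g ≡ 3 mod 4`. -/
theorem no_sys_two₃ {g : ℤ} (hg : 11 ≤ g) {a b c d : Fin 4 → ℤ}
    (S : Sys 1 2 g (32 + 8 * g) (6 + 2 * g) 4 4 a b c d)
    (ha : ∀ i, a i % 2 = 0) (hc : ∀ i, c i % 2 = 0) (hbd : ∀ i, (b i + d i) % 2 = 0) :
    False := by
  obtain ⟨c', hc'⟩ := exists_half hc
  have hcc : dot c c = 4 * dot c' c' := by rw [dot_two_left hc', dot_two_right hc']; ring
  obtain ⟨e0, e1, e2, e3⟩ := S
  rw [hcc] at e0
  rw [dot_two_left hc'] at e1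
  rw [dot_two_right hc'] at e2 e3
  have na := dot_self_nonneg a
  have nb := dot_self_nonneg b
  have nc := dot_self_nonneg c'
  have nd := dot_self_nonneg d
  have hg0 : 0 ≤ g := by linarith
  have hw := four_mul_dot_le (v := 2) a b (by norm_num)
  have hcau := dot_cauchy c' d
  obtain ⟨X, hX⟩ : ∃ X, X = dot a a + 2 * dot b b := ⟨_, rfl⟩
  obtain ⟨γ, hγ⟩ : ∃ γ, γ = 2 * dot c' c' + dot d d := ⟨_, rfl⟩
  have e0' : X + 2 * (g * γ) = 32 + 8 * g := by rw [hX, hγ]; linarith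
  have hX0 : 0 ≤ X := by linarith
  rw [← hX] at hw
  have h5 : γ ≤ 5 := by
    by_contra hc
    have := mul_le_mul_of_nonneg_left (show 6 ≤ γ by omega) hg0
    linarith
  -- `c` and `d` cannot be orthogonal unless they are short
  have horth (h2 : 2 ≤ γ) (h : dot c' d = 0) : False := by
    rw [h] at e1
    have := mul_le_mul_of_nonneg_left h2 hg0
    have hX' : X ≤ 32 + 4 * g := by linarith
    rw [show dot a b = 6 + 2 * g by linarith] at hw
    nlinarith
  have hγ0 : 0 < γ := by
    by_contra hc
    obtain rfl := eq_zero_of_dot_self (show dot c' c' = 0 by omega)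
    obtain rfl := eq_zero_of_dot_self (show dot d d = 0 by omega)
    simp at e2
  by_cases hd : dot d d = 0
  · exact horth (by omega) (by rw [eq_zero_of_dot_self hd]; simp)
  by_cases hc : dot c' c' = 0
  · obtain rfl := eq_zero_of_dot_self hc
    by_cases hd1 : dot d d = 1
    · obtain ⟨T, hT, hTd⟩ := exists_perm_one hd1
      rw [← hT.dot b d, hTd] at e2
      have hp := hT.par _ _ hbd 0
      rw [hTd] at hp
      simp [dot] at e2 hp
      omega
    · exact horth (by omega) (by simp)
  have hprod : dot c' d * dot c' d ≤ 3 := by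
    have : dot c' c' = 1 ∨ dot c' c' = 2 := by omega
    rcases this with h | h
    · rw [h] at hcau
      omega
    · rw [h, show dot d d = 1 by omega] at hcau
      omega
  have k1 : dot c' d ≤ 1 := by nlinarith
  have k2 : -1 ≤ dot c' d := by nlinarith
  have hk : dot c' d = 1 := by
    by_contra hk
    rcases (show dot c' d = 0 ∨ dot c' d = -1 by omega) with h | h
    · exact horth (by omega) h
    · rw [h] at e1
      have := mul_le_mul_of_nonneg_left (show 2 ≤ γ by omega) hg0
      have hX' : X ≤ 32 + 4 * g := by linarith
      rw [show dot a b = 6 + 4 * g by linarith] at hw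
      nlinarith
  rw [hk] at e1
  have hab : dot a b = 6 := by linarith
  rw [hab] at hw
  rcases (show γ = 3 ∨ γ = 4 ∨ γ = 5 by omega) with h | h | h
  · have hc1 : dot c' c' = 1 := by omega
    have hd1 : dot d d = 1 := by omega
    have hcd : c' - d = 0 := eq_zero_of_dot_self (by
      simp only [dot, Pi.sub_apply] at hc1 hd1 hk ⊢
      linarith)
    obtain rfl : c' = d := sub_eq_zero.1 hcd
    obtain ⟨T, hT, hTc⟩ := exists_perm_one hc1
    have hp := hT.par _ _ hbd 0
    rw [← hT.dot a, ← hT.dot b] at e2 e3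
    rw [hTc] at e2 e3 hp
    simp [dot] at e2 e3 hp
    omega
  · have hX' : X = 32 := by rw [h] at e0'; linarith
    have hc1 : dot c' c' = 1 := by omega
    obtain ⟨T, hT, hTc, hTd⟩ := exists_perm_pair (show dot d d = 2 by omega) hc1
      (by rw [dot_comm, hk])
    obtain ⟨a', ha'⟩ := exists_half (hT.even _ ha)
    have p2 := hT.par _ _ hbd
    rw [hTd] at p2
    rw [← hT.dot a, ← hT.dot b, hTc, hTd] at e2 e3
    rw [← hT.dot] at hab
    rw [hX', ← hT.dot a, ← hT.dot b] at hX
    generalize T b = b at *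
    have r0 := p2 0
    have r1 := p2 1
    have r2 := p2 2
    have r3 := p2 3
    simp [dot, ha'] at hab hX e2 e3 r0 r1 r2 r3
    obtain ⟨j, hj⟩ : ∃ j, b 0 = 1 + 2 * j := ⟨b 0 / 2, by omega⟩
    obtain ⟨l, hl⟩ : ∃ l, b 1 = 2 * l - 1 := ⟨(b 1 + 1) / 2, by omega⟩
    obtain ⟨z, hz⟩ : ∃ k, b 2 = 2 * k := ⟨b 2 / 2, by omega⟩
    obtain ⟨w, hw⟩ : ∃ k, b 3 = 2 * k := ⟨b 3 / 2, by omega⟩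
    rw [show a' 0 = 1 - j - l by linarith, show a' 1 = l - j by linarith,
      hj, hl, hz, hw] at hab hX
    exact no_end_two (j := j) (l := l) (x := a' 2) (y := a' 3) (z := z) (w := w)
      (by linarith) (by linarith)
  · have hX' : X ≤ 10 := by rw [h] at e0'; linarith
    nlinarith

/-! ### The radicand `5` -/

set_option maxRecDepth 10000 in
/-- The finite system left over for `v = 5`, `g ≡ 1 mod 4`. -/
theorem no_end_five₁ {p q x y z w : ℤ} (hpq : (p + q) % 2 = 1) (hxz : (x + z) % 2 = 0)
    (hyw : (y + w) % 2 = 0)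
    (h : 2 * (p * (p + 1)) + 10 * (q * (q + 1)) + x * x + y * y + 5 * (z * z) + 5 * (w * w) = 14)
    (h' : 2 * (p * q) + p + q + x * z + y * w = -2) : False := by
  have key : ∀ p ∈ Finset.Icc (-3 : ℤ) 3, ∀ q ∈ Finset.Icc (-1 : ℤ) 0,
      ∀ z ∈ Finset.Icc (-1 : ℤ) 1, ∀ w ∈ Finset.Icc (-1 : ℤ) 1, ∀ x ∈ Finset.Icc (-3 : ℤ) 3,
      ∀ y ∈ Finset.Icc (-3 : ℤ) 3, (p + q) % 2 = 1 → (x + z) % 2 = 0 → (y + w) % 2 = 0 →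
      2 * (p * (p + 1)) + 10 * (q * (q + 1)) + x * x + y * y + 5 * (z * z) + 5 * (w * w) = 14 →
      2 * (p * q) + p + q + x * z + y * w ≠ -2 := by
    decide +kernel
  have nn (k : ℤ) : 0 ≤ k * (k + 1) := by
    rcases le_or_gt 0 k with h | h
    · positivity
    · nlinarith
  have n1 := nn p
  have n2 := nn q
  have n3 := mul_self_nonneg x
  have n4 := mul_self_nonneg y
  have n5 := mul_self_nonneg z
  have n6 := mul_self_nonneg w
  have q1 : q ≤ 0 := by
    by_contra hc
    nlinarith
  have q2 : -1 ≤ q := by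
    by_contra hc
    nlinarith
  exact key p (mem_Icc_of_sq (n := 3) (by push_cast; nlinarith)) q
    (Finset.mem_Icc.2 ⟨q2, q1⟩) z
    (mem_Icc_of_sq (n := 1) (by push_cast; linarith)) w
    (mem_Icc_of_sq (n := 1) (by push_cast; linarith)) x
    (mem_Icc_of_sq (n := 3) (by push_cast; linarith)) y
    (mem_Icc_of_sq (n := 3) (by push_cast; linarith)) hpq hxz hyw h h'

set_option maxRecDepth 10000 in
/-- The finite system left over for `v = 5`, `g ≢ 1 mod 4`. -/
theorem no_end_five₂ {k q x y z w : ℤ} (hkq : (k + q) % 2 = 1) (hxz : (x + z) % 2 = 0)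
    (hyw : (y + w) % 2 = 0)
    (h : 2 * (k * k) + 10 * (q * q) + x * x + y * y + 5 * (z * z) + 5 * (w * w) = 18)
    (h' : 2 * (k * q) + x * z + y * w = 2) : False := by
  have key : ∀ k ∈ Finset.Icc (-3 : ℤ) 3, ∀ q ∈ Finset.Icc (-1 : ℤ) 1,
      ∀ z ∈ Finset.Icc (-1 : ℤ) 1, ∀ w ∈ Finset.Icc (-1 : ℤ) 1, ∀ x ∈ Finset.Icc (-4 : ℤ) 4,
      ∀ y ∈ Finset.Icc (-4 : ℤ) 4, (k + q) % 2 = 1 → (x + z) % 2 = 0 → (y + w) % 2 = 0 →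
      2 * (k * k) + 10 * (q * q) + x * x + y * y + 5 * (z * z) + 5 * (w * w) = 18 →
      2 * (k * q) + x * z + y * w ≠ 2 := by
    decide +kernel
  have n1 := mul_self_nonneg k
  have n2 := mul_self_nonneg q
  have n3 := mul_self_nonneg x
  have n4 := mul_self_nonneg y
  have n5 := mul_self_nonneg z
  have n6 := mul_self_nonneg w
  exact key k (mem_Icc_of_sq (n := 3) (by push_cast; linarith)) q
    (mem_Icc_of_sq (n := 1) (by push_cast; linarith)) z
    (mem_Icc_of_sq (n := 1) (by push_cast; linarith)) w
    (mem_Icc_of_sq (n := 1) (by push_cast; linarith)) x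
    (mem_Icc_of_sq (n := 4) (by push_cast; linarith)) y
    (mem_Icc_of_sq (n := 4) (by push_cast; linarith)) hkq hxz hyw h h'

/-- The Cauchy–Schwarz inequality for the form `⟨1, v⟩ ⊗ ℤ⁴`. -/
theorem weighted_cauchy {v : ℤ} (hv : 0 ≤ v) (a b c d : Fin 4 → ℤ) :
    (dot a c + v * dot b d) * (dot a c + v * dot b d) ≤
      (dot a a + v * dot b b) * (dot c c + v * dot d d) := by
  have h1 := dot_cauchy a c
  have h2 := mul_le_mul_of_nonneg_left (dot_cauchy b d) (mul_nonneg hv hv)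
  have h3 : 2 * (dot a c * dot b d) ≤ dot a a * dot d d + dot b b * dot c c := by
    have e : dot a a * dot d d + dot b b * dot c c - 2 * (dot a c * dot b d) =
        ∑ i, ∑ j, (a i * d j - b j * c i) ^ 2 := by
      simp only [dot, Fin.sum_univ_four]
      ring
    have : 0 ≤ ∑ i, ∑ j, (a i * d j - b j * c i) ^ 2 :=
      Finset.sum_nonneg fun i _ => Finset.sum_nonneg fun j _ => sq_nonneg _
    linarith
  have h3 := mul_le_mul_of_nonneg_left h3 hv
  linarith

/-- The range in which the free parameter of `no_sys_five` has to lie. -/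
theorem exists_odd_between {g : ℤ} (hg : 14 ≤ g) :
    ∃ σ : ℤ, σ % 2 = 1 ∧ 2 * g + 9 < σ * σ ∧ σ * σ < 6 * g - 27 := by
  by_cases h : g < 20
  · exact ⟨7, by norm_num, by linarith, by linarith⟩
  obtain ⟨n, hn0, hn1, hn2⟩ : ∃ n : ℤ, 0 ≤ n ∧ n * n ≤ 2 * g + 9 ∧ 2 * g + 9 < (n + 1) * (n + 1) := by
    obtain ⟨m, hm⟩ := Int.eq_ofNat_of_zero_le (show 0 ≤ 2 * g + 9 by linarith)
    rw [hm]
    refine ⟨m.sqrt, by positivity, ?_, ?_⟩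
    · exact_mod_cast Nat.sqrt_le m
    · exact_mod_cast Nat.lt_succ_sqrt m
  have hn : n + 10 < g := by
    by_contra hc
    nlinarith
  rcases Int.emod_two_eq_zero_or_one n with h | h
  · exact ⟨n + 1, by omega, by linarith, by linarith⟩
  · exact ⟨n + 2, by omega, by linarith, by linarith⟩

/-- The element `((σ + 1)/2 + s)² + ((σ - 1)/2 + s)² + 1 + 2 ((1 + r)/2)²` for `v = 5`, `g ≢ 1 mod 4`.
The odd parameter `σ` grows with `√g`: the lower bound on it excludes
short pairs `(c, d)`, the upper bound excludes long ones. -/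
theorem no_sys_five {g σ : ℤ} (hg : 14 ≤ g) (hσ : σ % 2 = 1) (hσ1 : 2 * g + 9 < σ * σ)
    (hσ2 : σ * σ < 6 * g - 27) {a b c d : Fin 4 → ℤ}
    (S : Sys 1 5 g (2 * (σ * σ) + 18 + 8 * g) 2 (4 * σ) 0 a b c d)
    (hab : ∀ i, (a i + b i) % 2 = 0) (hcd : ∀ i, (c i + d i) % 2 = 0) : False := by
  have hS := S
  obtain ⟨e0, e1, e2, e3⟩ := S
  have na := dot_self_nonneg a
  have nb := dot_self_nonneg b
  have nc := dot_self_nonneg c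
  have nd := dot_self_nonneg d
  have hg0 : 0 ≤ g := by linarith
  have hm4 := dot_self_mod_four hcd
  have hk2 := dot_mod_two hcd
  have hcau := dot_cauchy c d
  obtain ⟨X, hX⟩ : ∃ X, X = dot a a + 5 * dot b b := ⟨_, rfl⟩
  obtain ⟨m, hm⟩ : ∃ m, dot c c + 5 * dot d d = 2 * m :=
    ⟨(dot c c + 5 * dot d d) / 2, by omega⟩
  have hw := weighted_cauchy (v := 5) (by norm_num) a b c d
  rw [e2, hm, ← hX] at hw
  have hXe : X = 2 * (σ * σ) + 18 + 8 * g - 2 * (g * m) := by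
    have : g * (dot c c + 5 * dot d d) = g * (2 * m) := by rw [hm]
    linarith
  have h6 : m ≤ 5 := by
    by_contra hc
    have h1 : 0 ≤ (m - 6) * (g * (m + 6) - (σ * σ + 9 + 4 * g)) := by
      have := mul_le_mul_of_nonneg_left (show 12 ≤ m + 6 by omega) hg0
      exact mul_nonneg (by omega) (by linarith)
    rw [hXe] at hw
    linarith
  rcases (show m ≤ 0 ∨ m = 1 ∨ m = 2 ∨ m = 3 ∨ m = 4 ∨ m = 5 by omega) with
    h | rfl | rfl | rfl | rfl | rfl
  · obtain rfl := eq_zero_of_dot_self (show dot c c = 0 by omega)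
    obtain rfl := eq_zero_of_dot_self (show dot d d = 0 by omega)
    simp at e2
    omega
  · omega
  · rw [hXe] at hw
    linarith
  · have hc : dot c c = 1 := by omega
    have hd : dot d d = 1 := by omega
    rw [hc, hd] at hcau
    have k1 : dot c d ≤ 1 := by nlinarith
    have k2 : -1 ≤ dot c d := by nlinarith
    have h1 := dot_cauchy a c
    have h2 := dot_cauchy b c
    rw [hc] at h1 h2
    have fin (ε : ℤ) (hε : ε * ε = 1) (h : dot c d = ε) : False := by
      have hz : d - ε • c = 0 := eq_zero_of_dot_self (by
        have : dot (d - ε • c) (d - ε • c) = dot d d - 2 * ε * dot c d + ε * ε * dot c c := by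
          simp only [dot, Pi.sub_apply, Pi.smul_apply, smul_eq_mul]
          ring
        rw [this, hc, hd, h]
        linarith)
      obtain rfl : d = ε • c := sub_eq_zero.1 hz
      have sm (x : Fin 4 → ℤ) : dot x (ε • c) = ε * dot x c := by
        simp only [dot, Pi.smul_apply, smul_eq_mul]
        ring
      rw [sm] at e2 e3
      have hbc : dot b c = -ε * dot a c := by linarith
      have hac : dot a c = -σ := by
        rw [hbc] at e2
        have : dot a c - 5 * (ε * ε) * dot a c = 4 * σ := by linarith
        rw [hε] at this
        linarith
      rw [hac] at h1 hbc
      rw [hbc] at h2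
      have : -ε * -σ * (-ε * -σ) = σ * σ := by linear_combination (σ * σ) * hε
      linarith
    rcases (show dot c d = 1 ∨ dot c d = -1 by omega) with h | h
    · exact fin 1 (by norm_num) h
    · exact fin (-1) (by norm_num) h
  · have hd : dot d d = 0 := by omega
    have hc : dot c c = 8 := by omega
    obtain rfl := eq_zero_of_dot_self hd
    obtain ⟨c', hc'⟩ := exists_half (a := c) (fun i => by simpa using hcd i)
    rw [dot_two_left hc', dot_two_right hc'] at hc
    obtain ⟨T, hT, hTc⟩ := exists_perm_two (show dot c' c' = 2 by omega)
    rw [dot_two_right hc', ← hT.dot _ c', hTc] at e2 e3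
    have e1 : dot a b = 2 := by simpa using e1
    rw [← hT.dot] at e1
    have hp := hT.par _ _ hab
    rw [← hT.dot a, ← hT.dot b] at hX
    generalize T a = a at *
    generalize T b = b at *
    have p0 := hp 0
    have p2 := hp 2
    have p3 := hp 3
    simp [dot] at e1 e2 e3 hX
    obtain ⟨k, hk⟩ : ∃ k, a 0 = σ + k := ⟨a 0 - σ, by ring⟩
    have ha1 : a 1 = σ - k := by linarith
    have hb1 : b 1 = -b 0 := by linarith
    rw [hk, ha1, hb1] at e1 hX
    rw [hXe] at hX
    exact no_end_five₂ (k := k) (q := b 0) (x := a 2) (y := a 3) (z := b 2) (w := b 3)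
      (by omega) p2 p3 (by linarith) (by linarith)
  · have hd : dot d d = 1 := by omega
    have hc : dot c c = 5 := by omega
    rw [hc, hd] at hcau
    have k1 : dot c d ≤ 2 := by nlinarith
    have k2 : -2 ≤ dot c d := by nlinarith
    have hκ : dot c d * dot c d = 1 := by
      rcases (show dot c d = 1 ∨ dot c d = -1 by omega) with h | h <;> rw [h] <;> rfl
    obtain ⟨κ, hκ'⟩ : ∃ κ, κ = dot c d := ⟨_, rfl⟩
    rw [← hκ'] at hκ
    -- this choice of vectors makes the bound `2 σ²` on the norm of `(a, b)` optimal
    have hw' := weighted_cauchy (v := 5) (by norm_num) a b (5 • (c - κ • d)) (5 • d - κ • c)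
    have l : dot a (5 • (c - κ • d)) + 5 * dot b (5 • d - κ • c) = 20 * σ := by
      have : dot a (5 • (c - κ • d)) + 5 * dot b (5 • d - κ • c) =
          5 * (dot a c + 5 * dot b d) - 5 * κ * (dot a d + 1 * dot b c) := by
        simp only [dot, Pi.sub_apply, Pi.smul_apply, smul_eq_mul]
        ring
      rw [this, e2, e3]
      ring
    have rgt : dot (5 • (c - κ • d)) (5 • (c - κ • d)) + 5 * dot (5 • d - κ • c) (5 • d - κ • c)
        = 200 := by
      have : dot (5 • (c - κ • d)) (5 • (c - κ • d)) + 5 * dot (5 • d - κ • c) (5 • d - κ • c)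
          = 25 * (dot c c - 2 * κ * dot c d + κ * κ * dot d d) +
            5 * (25 * dot d d - 10 * κ * dot c d + κ * κ * dot c c) := by
        simp only [dot, Pi.sub_apply, Pi.smul_apply, smul_eq_mul]
        ring
      rw [this, hc, hd, ← hκ']
      linear_combination (-50 : ℤ) * hκ
    rw [l, rgt, ← hX, hXe] at hw'
    linarith

/-- The element of `no_sys_five₁` for `g` too small for the general argument. -/
theorem no_sys_five₁_small {g : ℤ} (hg : g = 13 ∨ g = 17) {a b c d : Fin 4 → ℤ}
    (S : Sys 1 5 g (80 + 8 * g) (-4) (-4) (-4) a b c d)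
    (hp : ∀ i, (a i % 2 = 1 ∧ b i % 2 = 1 ∧ c i % 2 = 1 ∧ d i % 2 = 1) ∨
      ∃ a' b' c' d' : ℤ, a i = 2 * a' ∧ b i = 2 * b' ∧ c i = 2 * c' ∧ d i = 2 * d' ∧
      (a' + b' + c' + d') % 2 = 0) : False := by
  have hp' (i) : (decide ((a i % 2 = 1 ∧ b i % 2 = 1 ∧ c i % 2 = 1 ∧ d i % 2 = 1) ∨
      (a i % 2 = 0 ∧ b i % 2 = 0 ∧ c i % 2 = 0 ∧ d i % 2 = 0 ∧
        (a i + b i + c i + d i) % 4 = 0))) = true := by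
    rw [decide_eq_true_eq]
    rcases hp i with h | ⟨a', b', c', d', h⟩
    · exact Or.inl h
    · right
      omega
  rcases hg with rfl | rfl
  · exact Sys.not_of_search (by norm_num) (by norm_num) (by norm_num)
      (fun a b c d => decide ((a % 2 = 1 ∧ b % 2 = 1 ∧ c % 2 = 1 ∧ d % 2 = 1) ∨
        (a % 2 = 0 ∧ b % 2 = 0 ∧ c % 2 = 0 ∧ d % 2 = 0 ∧ (a + b + c + d) % 4 = 0))) 13 6 3 1
      (by norm_num) (by norm_num) (by norm_num) (by norm_num) (by decide +kernel) S hp'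
  · exact Sys.not_of_search (by norm_num) (by norm_num) (by norm_num)
      (fun a b c d => decide ((a % 2 = 1 ∧ b % 2 = 1 ∧ c % 2 = 1 ∧ d % 2 = 1) ∨
        (a % 2 = 0 ∧ b % 2 = 0 ∧ c % 2 = 0 ∧ d % 2 = 0 ∧ (a + b + c + d) % 4 = 0))) 14 6 3 1
      (by norm_num) (by norm_num) (by norm_num) (by norm_num) (by decide +kernel) S hp'

/-- The element `((1 - s)/2)² + ((r - s)/2)² + ((1 - r)/2)² + 2` for `v = 5`, `g ≡ 1 mod 4`. -/
theorem no_sys_five₁ {g : ℤ} (hg : 21 ≤ g) (hg4 : g % 4 = 1) {a b c d : Fin 4 → ℤ}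
    (S : Sys 1 5 g (80 + 8 * g) (-4) (-4) (-4) a b c d)
    (hp : ∀ i, (a i % 2 = 1 ∧ b i % 2 = 1 ∧ c i % 2 = 1 ∧ d i % 2 = 1) ∨
      ∃ a' b' c' d' : ℤ, a i = 2 * a' ∧ b i = 2 * b' ∧ c i = 2 * c' ∧ d i = 2 * d' ∧
      (a' + b' + c' + d') % 2 = 0) : False := by
  have hg0 : (0 : ℤ) ≤ g := by linarith
  have hlt : dot c c + 5 * dot d d < 12 := by
    by_contra hc
    have := mul_le_mul_of_nonneg_left (show 12 ≤ dot c c + 5 * dot d d by omega) hg0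
    have := dot_self_nonneg a
    have := dot_self_nonneg b
    linarith [S.e0]
  -- an odd quadruple contributes `4` to the norm equation modulo `8`, an even one `0`; hence the
  -- number of odd quadruples is even, and two of them already make the norm too large
  have loc (i) : ((a i * a i + 5 * (b i * b i) + g * (c i * c i) + 5 * g * (d i * d i)) % 8 = 4 ∧
      6 ≤ c i * c i + 5 * (d i * d i)) ∨
      ((a i * a i + 5 * (b i * b i) + g * (c i * c i) + 5 * g * (d i * d i)) % 8 = 0 ∧
        0 ≤ c i * c i + 5 * (d i * d i) ∧
      ∃ a' b' c' d' : ℤ, a i = 2 * a' ∧ b i = 2 * b' ∧ c i = 2 * c' ∧ d i = 2 * d' ∧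
      (a' + b' + c' + d') % 2 = 0) := by
    obtain ⟨k, rfl⟩ : ∃ k, g = 4 * k + 1 := ⟨g / 4, by omega⟩
    have odd {x : ℤ} (hx : x % 2 = 1) : ∃ y, x * x = 8 * y + 1 := by
      have h := sq_mod_eight x
      have h2 := mul_self_mod_two x
      rw [pow_two] at h
      exact ⟨x * x / 8, by omega⟩
    rcases hp i with ⟨h1, h2, h3, h4⟩ | h
    · left
      obtain ⟨y1, h1⟩ := odd h1
      obtain ⟨y2, h2⟩ := odd h2
      have n3 : c i ≠ 0 := by omega
      have n4 : d i ≠ 0 := by omega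
      have n3 := mul_self_pos.2 n3
      have n4 := mul_self_pos.2 n4
      obtain ⟨y3, h3⟩ := odd h3
      obtain ⟨y4, h4⟩ := odd h4
      refine ⟨?_, by omega⟩
      rw [h1, h2, h3, h4]
      have : 8 * y1 + 1 + 5 * (8 * y2 + 1) + (4 * k + 1) * (8 * y3 + 1)
          + 5 * (4 * k + 1) * (8 * y4 + 1)
          = 8 * (y1 + 5 * y2 + 4 * k * y3 + y3 + 20 * k * y4 + 5 * y4 + 3 * k + 1) + 4 := by ring
      omega
    · right
      refine ⟨?_, by linarith [mul_self_nonneg (c i), mul_self_nonneg (d i)], h⟩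
      obtain ⟨a', b', c', d', h1, h2, h3, h4, h5⟩ := h
      rw [h1, h2, h3, h4]
      have q1 := mul_self_mod_two a'
      have q2 := mul_self_mod_two b'
      have q3 := mul_self_mod_two c'
      have q4 := mul_self_mod_two d'
      have : 2 * a' * (2 * a') + 5 * (2 * b' * (2 * b')) + (4 * k + 1) * (2 * c' * (2 * c'))
          + 5 * (4 * k + 1) * (2 * d' * (2 * d'))
          = 4 * (a' * a' + b' * b' + c' * c' + d' * d')
            + 8 * (2 * (b' * b') + 2 * k * (c' * c') + 10 * k * (d' * d') + 2 * (d' * d')) := by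
        ring
      omega
  have hp' : ∀ i, ∃ a' b' c' d' : ℤ, a i = 2 * a' ∧ b i = 2 * b' ∧ c i = 2 * c' ∧ d i = 2 * d' ∧
      (a' + b' + c' + d') % 2 = 0 := by
    have e0 := S.e0
    obtain ⟨q, hq⟩ : ∃ q : Fin 4 → ℤ, ∀ i,
      q i = a i * a i + 5 * (b i * b i) + g * (c i * c i) + 5 * g * (d i * d i) := ⟨_, fun _ => rfl⟩
    obtain ⟨w, hw⟩ : ∃ w : Fin 4 → ℤ, ∀ i, w i = c i * c i + 5 * (d i * d i) := ⟨_, fun _ => rfl⟩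
    simp only [← hq, ← hw] at loc
    have e0' : q 0 + q 1 + q 2 + q 3 = 80 + 8 * g := by
      simp only [hq]
      simp only [dot] at e0
      linarith
    have hlt' : w 0 + w 1 + w 2 + w 3 < 12 := by
      simp only [hw]
      simp only [dot] at hlt
      linarith
    clear e0 hlt hq hw hp S
    have l0 := loc 0
    have l1 := loc 1
    have l2 := loc 2
    have l3 := loc 3
    rcases l0 with l0 | ⟨x0, y0, z0⟩ <;> rcases l1 with l1 | ⟨x1, y1, z1⟩ <;>
      rcases l2 with l2 | ⟨x2, y2, z2⟩ <;> rcases l3 with l3 | ⟨x3, y3, z3⟩ <;>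
      first
      | (exfalso; omega)
      | (intro i; fin_cases i; exacts [z0, z1, z2, z3])
  obtain ⟨a, b, c, d, ⟨e0, e1, e2, e3⟩, hp⟩ := exists_halves (u := 1) (v := 5) (g := g) (T0 := 20 + 2 * g) (T1 := -1)
    (T2 := -1) (T3 := -1) 
    (by convert S using 1 <;> ring) hp'
  have na := dot_self_nonneg a
  have nb := dot_self_nonneg b
  have nc := dot_self_nonneg c
  have nd := dot_self_nonneg d
  have h2 : dot c c + 5 * dot d d ≤ 2 := by
    by_contra hc
    have := mul_le_mul_of_nonneg_left (show 3 ≤ dot c c + 5 * dot d d by omega) hg0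
    linarith
  obtain rfl := eq_zero_of_dot_self (show dot d d = 0 by omega)
  have hc2 : dot c c = 2 := by
    have h0 : dot c c ≠ 0 := dot_self_pos_of_ne (a := a) (by simp at e2; omega)
    have := dot_mod_two (a := c) (b := a + b) (fun i => by
      have := hp i
      simp only [Pi.zero_apply, Pi.add_apply] at *
      omega)
    have h1 : dot c (a + b) = dot a c + dot b c := by
      simp only [dot, Pi.add_apply]
      ring
    simp at e2 e3
    omega
  obtain ⟨T, hT, hTc⟩ := exists_perm_two hc2
  have hp := hT.par4 _ _ _ _ hp
  have hX : dot a a + 5 * dot b b = 20 := by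
    rw [hc2] at e0
    simp at e0
    linarith
  simp only [dot_zero_right] at e1 e2 e3
  rw [← hT.dot a, ← hT.dot b] at hX
  rw [← hT.dot a] at e1 e2
  rw [← hT.dot b] at e3
  rw [hTc] at e2 e3 hp
  rw [hT.zero] at hp
  generalize T a = a at *
  generalize T b = b at *
  have p0 := hp 0
  have p2 := hp 2
  have p3 := hp 3
  simp [dot] at e1 e2 e3 hX p0 p2 p3
  have ha1 : a 1 = -1 - a 0 := by linarith
  have hb1 : b 1 = -1 - b 0 := by linarith
  rw [ha1, hb1] at e1 hX
  exact no_end_five₁ (p := a 0) (q := b 0) (x := a 2) (y := a 3) (z := b 2) (w := b 3)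
    (by omega) (by omega) (by omega) (by linarith) (by linarith)
/-! ### Fields with `uv ∈ {2, 3, 5}` -/

section SmallestP

variable {K : IntermediateField ℚ ℝ} {g : ℤ} {r s t : ℝ}

theorem Data.big_three_R (D : Data K 1 3 g r s t) (hg : g % 4 = 3) (hg' : g = 11 ∨ 19 ≤ g) :
    Big K := by
  have hrr := D.F.rr
  have hss := D.F.ss
  have hrs := D.F.rs
  push_cast at hrr hss hrs
  have hh : (r + s) / 2 - s ∈ intRing K :=
    sub_mem (D.half_rs_mem (by norm_num) (by omega)) D.s_mem
  have h1r : 1 - r ∈ intRing K := sub_mem (one_mem _) D.r_mem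
  refine Big.of_five (add_mem (one_mem _) hh) hh (one_mem _) h1r h1r fun h => ?_
  obtain ⟨a, b, c, d, S, h1, h2, -⟩ := D.F.sysR D.span (by unfold SpecP; omega) h
    (T0 := 46 + 2 * g) (T1 := -6) (T2 := -2) (T3 := -2)
    (by push_cast; linear_combination 10 * hrr + 2 * hss - 4 * hrs)
  rcases hg' with rfl | hg'
  · exact no_sys_three_eleven S h1 h2
  · exact no_sys_three_R hg' hg S h1 h2

theorem Data.big_three_Q (D : Data K 1 3 g r s t) (hg : g % 4 = 1) (hg' : 13 ≤ g) : Big K := by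
  have hrr := D.F.rr
  have hss := D.F.ss
  push_cast at hrr hss
  have hx (k : ℤ) (hk : k % 2 = 1) : ((k : ℝ) + -s) / 2 ∈ intRing K :=
    Data.half_mem (neg_mem D.s_mem) hg (by linear_combination hss) hk
  refine Big.of_five (hx 1 (by norm_num)) (hx 3 (by norm_num)) (one_mem _) (one_mem _)
    (add_mem (ofNat_mem _ 2) D.r_mem) fun h => ?_
  obtain ⟨a, b, c, d, S, h1, h2, -⟩ := D.F.sysQ D.span (by unfold SpecP; omega) h
    (T0 := 46 + 2 * g) (T1 := 8) (T2 := -4) (T3 := 0)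
    (by push_cast; linear_combination 4 * hrr + 2 * hss)
  exact no_sys_three_Q hg' hg S h1 h2

theorem Data.big_three_P (D : Data K 1 3 g r s t) (hg : g % 4 = 2) (hg' : 10 ≤ g) : Big K := by
  have hrr := D.F.rr
  have hss := D.F.ss
  have htt := D.F.tt
  have hst := D.F.st
  push_cast at hrr hss htt hst
  have hh : (s - t) / 2 ∈ intRing K := by
    apply Data.mem_of_sq _ (div_mem (sub_mem D.hs D.ht) (ofNat_mem K 2))
    have h2 : ((g / 2 : ℤ) : ℝ) = g / 2 := by
      have : g = 2 * (g / 2) := by omega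
      have := congrArg (Int.cast : ℤ → ℝ) this
      push_cast at this
      linarith
    have e : ((s - t) / 2) ^ 2 = (g : ℝ) - ((g / 2 : ℤ) : ℝ) * r := by
      rw [h2]
      linear_combination hss / 4 + htt / 4 - hst / 2
    rw [e]
    exact sub_mem (intCast_mem _ _) (mul_mem (intCast_mem _ _) D.r_mem)
  have h1r : 1 + r ∈ intRing K := add_mem (one_mem _) D.r_mem
  refine Big.of_five hh (sub_mem (one_mem _) hh) h1r (one_mem _) h1r fun h => ?_
  obtain ⟨a, b, c, d, S, h1, h2, h3⟩ := D.F.sysP D.span (by unfold SpecP; omega) h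
    (T0 := 40 + 8 * g) (T1 := 8 - 2 * g) (T2 := -2) (T3 := 2)
    (by push_cast; linear_combination 8 * hrr + 2 * hss + 2 * htt - 4 * hst)
  have h3 := h3 (by norm_num)
  exact no_sys_three_P hg' hg S h3 (fun i => by have := h1 i; have := h3 i; omega) h2

theorem Data.big_five₁ (D : Data K 1 5 g r s t) (hg : g % 4 = 1) (hg' : 13 ≤ g) : Big K := by
  have hrr := D.F.rr
  have hss := D.F.ss
  have hrs := D.F.rs
  push_cast at hrr hss hrs
  have h1 : ((1 : ℤ) + -s) / 2 ∈ intRing K :=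
    Data.half_mem (neg_mem D.s_mem) hg (by linear_combination hss) (by norm_num)
  have h3 : ((1 : ℤ) + -r) / 2 ∈ intRing K :=
    Data.half_mem (m := 5) (neg_mem D.r_mem) (by norm_num) (by linear_combination hrr)
      (by norm_num)
  have h2 : (r + s) / 2 - s ∈ intRing K :=
    sub_mem (D.half_rs_mem (by norm_num) (by omega)) D.s_mem
  refine Big.of_five h1 h2 h3 (one_mem _) (one_mem _) fun h => ?_
  obtain ⟨a, b, c, d, S, hp⟩ := D.F.sys1 D.span (by norm_num) (by norm_num) (by omega) h
    (T0 := 80 + 8 * g) (T1 := -4) (T2 := -4) (T3 := -4)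
    (by push_cast; linear_combination 8 * hrr + 8 * hss - 8 * hrs)
  by_cases h21 : 21 ≤ g
  · exact no_sys_five₁ h21 hg S hp
  · exact no_sys_five₁_small (by omega) S hp

theorem Data.big_five₂₃ (D : Data K 1 5 g r s t) (hg : g % 4 = 2 ∨ g % 4 = 3)
    (hg' : g = 11 ∨ 14 ≤ g) : Big K := by
  have hrr := D.F.rr
  have hss := D.F.ss
  have hrs := D.F.rs
  push_cast at hrr hss hrs
  have hx (k : ℤ) (hk : k % 2 = 1) : ((k : ℝ) + r) / 2 ∈ intRing K :=
    Data.half_mem (m := 5) D.r_mem (by norm_num) (by linear_combination hrr) hk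
  rcases hg' with rfl | hg'
  · refine Big.of_five (add_mem (add_mem (one_mem _) D.r_mem) D.s_mem)
      (add_mem (hx 3 (by norm_num)) D.s_mem) (sub_mem (hx 1 (by norm_num)) D.r_mem) (one_mem _)
      (one_mem _) fun h => ?_
    obtain ⟨a, b, c, d, S, h1, h2, -⟩ := D.F.sysP D.span (by unfold SpecP; omega) h
      (T0 := 140) (T1 := 6) (T2 := 10) (T3 := 6)
      (by push_cast at hss ⊢; linear_combination 6 * hrr + 8 * hss + 12 * hrs)
    exact no_sys_five_eleven S h1 h2
  · obtain ⟨σ, hσ, hσ1, hσ2⟩ := exists_odd_between hg'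
    obtain ⟨k, hk⟩ : ∃ k, σ = 2 * k + 1 := ⟨σ / 2, by omega⟩
    refine Big.of_five (add_mem (intCast_mem _ (k + 1)) D.s_mem)
      (add_mem (intCast_mem _ k) D.s_mem) (one_mem _) (hx 1 (by norm_num)) (hx 1 (by norm_num))
      fun h => ?_
    obtain ⟨a, b, c, d, S, h1, h2, -⟩ := D.F.sysP D.span (by unfold SpecP; omega) h
      (T0 := 2 * (σ * σ) + 18 + 8 * g) (T1 := 2) (T2 := 4 * σ) (T3 := 0)
      (by rw [hk]; push_cast; linear_combination 2 * hrr + 8 * hss)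
    exact no_sys_five hg' hσ hσ1 hσ2 S h1 h2

theorem Data.big_two₁ (D : Data K 1 2 g r s t) (hg : g % 4 = 1)
    (hg' : g = 13 ∨ g = 17 ∨ 21 ≤ g) : Big K := by
  have hrr := D.F.rr
  have hss := D.F.ss
  have hrs := D.F.rs
  push_cast at hrr hss hrs
  have hx (k : ℤ) (hk : k % 2 = 1) : ((k : ℝ) + s) / 2 ∈ intRing K :=
    Data.half_mem D.s_mem hg (by linear_combination hss) hk
  have h1r : 1 + r ∈ intRing K := add_mem (one_mem _) D.r_mem
  rcases hg' with rfl | rfl | hg'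
  · refine Big.of_five (mul_mem (hx 3 (by norm_num)) h1r)
      (sub_mem (sub_mem (hx 1 (by norm_num)) D.s_mem) D.r_mem) D.r_mem h1r (one_mem _)
      fun h => ?_
    obtain ⟨a, b, c, d, S, h1, h2, -⟩ := D.F.sysQ D.span (by unfold SpecP; omega) h
      (T0 := 112) (T1 := 24) (T2 := 8) (T3 := 8)
      (by
        push_cast at hss ⊢
        linear_combination (3 + s) ^ 2 * hrr + (3 + 2 * r) * hss + 12 * hrs + 4 * hrr + hss
          + 4 * hrs + 8 * hrr)
    exact no_sys_two_thirteen S h1 h2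
  · refine Big.of_five (hx 3 (by norm_num))
      (add_mem (sub_mem (hx 1 (by norm_num)) D.s_mem) (mul_mem D.r_mem (hx 1 (by norm_num))))
      (sub_mem (one_mem _) D.r_mem) (one_mem _) (sub_mem (ofNat_mem _ 2) D.r_mem) fun h => ?_
    obtain ⟨a, b, c, d, S, h1, h2, -⟩ := D.F.sysQ D.span (by unfold SpecP; omega) h
      (T0 := 120) (T1 := -28) (T2 := 4) (T3 := 0)
      (by
        push_cast at hss ⊢
        linear_combination hss + hss + (1 + s) ^ 2 * hrr + 2 * hss - 2 * r * hss + 8 * hrr)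
    exact no_sys_two_seventeen S h1 h2
  · refine Big.of_five (mul_mem (hx 1 (by norm_num)) h1r) (add_mem (hx 1 (by norm_num)) D.r_mem)
      h1r (one_mem _) D.r_mem fun h => ?_
    obtain ⟨a, b, c, d, S, h1, h2, -⟩ := D.F.sysQ D.span (by unfold SpecP; omega) h
      (T0 := 36 + 4 * g) (T1 := 7 + g) (T2 := 4) (T3 := 4)
      (by
        push_cast
        linear_combination (1 + s) ^ 2 * hrr + (3 + 2 * r) * hss + 4 * hrs + hss + 4 * hrr
          + 4 * hrs + 8 * hrr)
    exact no_sys_two₁ hg' S h1 h2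

theorem Data.big_two₃ (D : Data K 1 2 g r s t) (hg : g % 4 = 3) (hg' : 11 ≤ g) : Big K := by
  have hrr := D.F.rr
  have hss := D.F.ss
  have htt := D.F.tt
  have hrs := D.F.rs
  have hrt := D.F.rt
  have hst := D.F.st
  push_cast at hrr hss htt hrs hrt hst
  have hh : (r + t) / 2 ∈ intRing K := by
    apply Data.mem_of_sq _ (div_mem (add_mem D.hr D.ht) (ofNat_mem K 2))
    have h2 : (((1 + g) / 2 : ℤ) : ℝ) = (1 + g) / 2 := by
      have : 1 + g = 2 * ((1 + g) / 2) := by omega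
      have := congrArg (Int.cast : ℤ → ℝ) this
      push_cast at this
      linarith
    have e : ((r + t) / 2) ^ 2 = (((1 + g) / 2 : ℤ) : ℝ) + s := by
      rw [h2]
      linear_combination hrr / 4 + htt / 4 + hrt / 2
    rw [e]
    exact add_mem (intCast_mem _ _) D.s_mem
  refine Big.of_five (add_mem hh D.s_mem) (add_mem (one_mem _) hh)
    (add_mem (one_mem _) D.r_mem) (one_mem _) D.r_mem fun h => ?_
  obtain ⟨a, b, c, d, S, h1, h2, h3⟩ := D.F.sysQ D.span (by unfold SpecP; omega) h
    (T0 := 32 + 8 * g) (T1 := 6 + 2 * g) (T2 := 4) (T3 := 4)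
    (by
      push_cast
      linear_combination 10 * hrr + 2 * htt + 4 * hrt + 4 * hss + 4 * hrs + 4 * hst)
  have h3 := h3 (by omega)
  exact no_sys_two₃ hg' S h3 (fun i => by have := h1 i; have := h3 i; omega) h2

end SmallestP

/-! ### Assembling the cases -/

/-- Every triple `u < v < g` is covered by one of the cases above, except for the seven
triples of the exceptional fields. -/
theorem Data.big_or_exceptional {K : IntermediateField ℚ ℝ} {u v g : ℤ} {r s t : ℝ}
    (D : Data K u v g r s t) :
    Big K ∨ (u = 1 ∧ ((v = 2 ∧ (g = 3 ∨ g = 5 ∨ g = 7)) ∨ (v = 3 ∧ (g = 5 ∨ g = 7)) ∨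
      (v = 5 ∧ (g = 6 ∨ g = 7)))) := by
  have hu := D.pos
  have huv := D.uv
  have hvg := D.vg
  have Z := D.sizes
  have g4 := Z.g4
  have p4 : (u * v) % 4 ≠ 0 := by
    intro h
    have := Int.isUnit_iff.1 (D.F.sfp 2 (by omega))
    omega
  have p9 := Z.p9
  have q4 : (u * g) % 4 ≠ 0 := by
    intro h
    have := Int.isUnit_iff.1 (D.F.sfq 2 (by omega))
    omega
  have q9 := Z.q9
  have r4 : (v * g) % 4 ≠ 0 := by
    intro h
    have := Int.isUnit_iff.1 (D.F.sfr 2 (by omega))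
    omega
  have r9 : (v * g) % 9 ≠ 0 := by
    intro h
    have := Int.isUnit_iff.1 (D.F.sfr 3 (by omega))
    omega
  have r25 : (v * g) % 25 ≠ 0 := by
    intro h
    have := Int.isUnit_iff.1 (D.F.sfr 5 (by omega))
    omega
  by_cases hcong : u % 2 = 1 ∧ v % 4 = u % 4
  · by_cases h17 : 17 ≤ u * v
    · exact Or.inl (D.big_of_one_mod_four h17 hcong.1 hcong.2)
    have hu3 : u ≤ 3 := by nlinarith
    have hv16 : v ≤ 16 := by nlinarith
    interval_cases u
    -- `u = 1`: then `v ∈ {5, 13}`, as `9` is not squarefree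
    · have hv : v = 5 ∨ v = 13 := by omega
      rcases hv with rfl | rfl
      · have hg : g % 4 = 1 ∨ g % 4 = 2 ∨ g % 4 = 3 := by omega
        by_cases hx : g = 6 ∨ g = 7
        · omega
        refine Or.inl ?_
        rcases hg with h | h
        · exact D.big_five₁ h (by omega)
        · exact D.big_five₂₃ h (by omega)
      · exact Or.inl D.big_C
    · omega
    · omega
  · by_cases h14 : 14 ≤ u * v
    · exact Or.inl (D.big_of_not_one_mod_four h14 (by omega))
    have hu3 : u ≤ 3 := by nlinarith
    have hv13 : v ≤ 13 := by nlinarith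
    interval_cases u
    · have hv : v = 2 ∨ v = 3 ∨ v = 6 ∨ v = 7 ∨ v = 10 ∨ v = 11 := by omega
      rcases hv with rfl | rfl | rfl | rfl | rfl | rfl
      · by_cases hx : g = 3 ∨ g = 5 ∨ g = 7
        · omega
        have hg : g % 4 = 1 ∨ g % 4 = 3 := by omega
        rcases hg with h | h
        · exact Or.inl (D.big_two₁ h (by omega))
        · exact Or.inl (D.big_two₃ h (by omega))
      · by_cases hx : g = 5 ∨ g = 7
        · omega
        have hg : g % 4 = 1 ∨ g % 4 = 2 ∨ g % 4 = 3 := by omega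
        rcases hg with h | h | h
        · exact Or.inl (D.big_three_Q h (by omega))
        · exact Or.inl (D.big_three_P h (by omega))
        · exact Or.inl (D.big_three_R h (by omega))
      · have hg : g % 4 = 1 ∨ g % 4 = 3 := by omega
        rcases hg with h | h
        · exact Or.inl (D.big_A (by norm_num) (by norm_num) h)
        · exact Or.inl (D.big_E₃ h)
      · have hg : g % 4 = 1 ∨ g % 4 = 2 ∨ g % 4 = 3 := by omega
        rcases hg with h | h | h
        · exact Or.inl (D.big_A (by norm_num) (by norm_num) h)
        · exact Or.inl (D.big_E₂ h)
        · exact Or.inl (D.big_E₇ h)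
      · have hg : g % 4 = 1 ∨ g % 4 = 3 := by omega
        rcases hg with h | h
        · exact Or.inl (D.big_A (by norm_num) (by norm_num) h)
        · exact Or.inl (D.big_D (Or.inr ⟨rfl, h⟩))
      · have hg : g % 4 = 1 ∨ g % 4 = 2 ∨ g % 4 = 3 := by omega
        rcases hg with h | h | h
        · exact Or.inl (D.big_A (by norm_num) (by norm_num) h)
        · exact Or.inl (D.big_D (Or.inl ⟨rfl, h⟩))
        · exact Or.inl (D.big_B₁₁ h)
    · have hv : v = 3 ∨ v = 5 := by omega
      rcases hv with rfl | rfl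
      · exact Or.inl (D.big_F (by omega))
      · exact Or.inl (D.big_B₁₀ (by omega))
    · omega

/-- For every totally real biquadratic field `K` other than the seven
exceptional fields, the Pythagoras number of the ring of integers is at least `5`:
some element of `O_K` is a sum of squares but not a sum of `4` squares. -/
theorem pythagoras_biquadratic_ge_five
    (K : IntermediateField ℚ ℝ) (hK : IsBiquadratic K)
    (h23 : K ≠ biqField 2 3) (h25 : K ≠ biqField 2 5) (h35 : K ≠ biqField 3 5)
    (h27 : K ≠ biqField 2 7) (h37 : K ≠ biqField 3 7) (h56 : K ≠ biqField 5 6)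
    (h57 : K ≠ biqField 5 7) :
    ∃ α ∈ ringOfInt K, IsSumOfSquaresIn (ringOfInt K) α ∧
      ¬ SumOfNSquaresIn (ringOfInt K) 4 α := by
  obtain ⟨u, v, g, N⟩ := exists_normal hK
  rcases N.data.big_or_exceptional with h | ⟨hu, h⟩
  · exact h
  · exfalso
    have hE := N.eq
    obtain rfl : u = 1 := by exact_mod_cast hu
    rw [one_mul, one_mul] at hE
    rcases h with ⟨hv, hg⟩ | ⟨hv, hg⟩ | ⟨hv, hg⟩
    · obtain rfl : v = 2 := by exact_mod_cast hv
      have hg' : g = 3 ∨ g = 5 ∨ g = 7 := by omega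
      rcases hg' with rfl | rfl | rfl
      exacts [h23 hE, h25 hE, h27 hE]
    · obtain rfl : v = 3 := by exact_mod_cast hv
      have hg' : g = 5 ∨ g = 7 := by omega
      rcases hg' with rfl | rfl
      exacts [h35 hE, h37 hE]
    · obtain rfl : v = 5 := by exact_mod_cast hv
      have hg' : g = 6 ∨ g = 7 := by omega
      rcases hg' with rfl | rfl
      exacts [h56 hE, h57 hE]
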